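/- Let k > 450 and n > 5. Then there are no integers 1 ≤ b ≤ 9 and d ≥ 2 such that L_n^{(k)} = b·10^{d}. -/

import Mathlib

/-- Shifted `k`-generalized Lucas sequence: `genLucas k m` equals `L^{(k)}_{m - (k-2)}`,
so that index `m = 0` corresponds to `n = 2 - k`.  The initial values are
`L^{(k)}_{2-k} = ⋯ = L^{(k)}_{-1} = 0`, `L^{(k)}_0 = 2`, `L^{(k)}_1 = 1`, and each term
afterwards is the sum of the `k` preceding terms. -/
def genLucas (k : ℕ) : ℕ → ℤ := fun m =>
  if h1 : m < k - 2 then 0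
  else if h2 : m = k - 2 then 2
  else if h3 : m = k - 1 then 1
  else ∑ i ∈ Finset.range k, genLucas k (m - 1 - i)
decreasing_by omega

/-- The `k`-generalized Lucas number `L^{(k)}_n` for `n ≥ 0`. -/
def lucasL (k n : ℕ) : ℤ := genLucas k (n + k - 2)


theorem gl_zero (k m : ℕ) (h : m < k - 2) : genLucas k m = 0 := by
  rw [genLucas]; simp [h]

theorem gl_two (k : ℕ) : genLucas k (k-2) = 2 := by
  rw [genLucas]; simp

theorem gl_one (k : ℕ) (hk : 2 ≤ k) : genLucas k (k-1) = 1 := by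
  rw [genLucas]
  have h1 : ¬ (k - 1 < k - 2) := by omega
  have h2 : ¬ (k - 1 = k - 2) := by omega
  simp [h1, h2]

theorem gl_rec (k t : ℕ) (hk : 2 ≤ k) :
    genLucas k (t + k) = ∑ j ∈ Finset.range k, genLucas k (t + j) := by
  rw [genLucas]
  have h1 : ¬ (t + k < k - 2) := by omega
  have h2 : ¬ (t + k = k - 2) := by omega
  have h3 : ¬ (t + k = k - 1) := by omega
  simp only [h1, h2, h3, dite_false]
  rw [← Finset.sum_range_reflect]
  apply Finset.sum_congr rfl
  intro i hi
  rw [Finset.mem_range] at hi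
  congr 1
  omega

theorem gl_step (k t : ℕ) (hk : 2 ≤ k) :
    genLucas k (t + k + 1) = 2 * genLucas k (t + k) - genLucas k t := by
  have h1 := gl_rec k (t+1) hk
  have h2 := gl_rec k t hk
  have h3 := Finset.sum_range_succ' (fun j => genLucas k (t + j)) k
  have h4 := Finset.sum_range_succ (fun j => genLucas k (t + j)) k
  have e : t + 1 + k = t + k + 1 := by ring
  rw [e] at h1
  have h5 : ∑ j ∈ Finset.range k, genLucas k (t + 1 + j)
      = ∑ j ∈ Finset.range k, genLucas k (t + (j + 1)) :=
    Finset.sum_congr rfl (fun j _ => by congr 1; ring)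
  simp only [add_zero] at h3
  linarith

theorem gl_three (k : ℕ) (hk : 2 ≤ k) : genLucas k k = 3 := by
  have h := gl_rec k 0 hk
  obtain ⟨r, rfl⟩ : ∃ r, k = r + 2 := ⟨k-2, by omega⟩
  have h1 := gl_two (r+2)
  have h2 := gl_one (r+2) hk
  simp only [zero_add] at h
  rw [h, Finset.sum_range_succ, Finset.sum_range_succ, Finset.sum_eq_zero]
  · simp at h1 h2; rw [h1, h2]; norm_num
  · intro x hx
    apply gl_zero
    simpa using hx

theorem exists_alpha (k : ℕ) (hk : 450 < k) :
    ∃ a : ℝ, 2 - 1/((k:ℝ)+1) ≤ a ∧ a < 2 ∧ a^k*(2-a) = 1 := by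
  have hk0 : (450:ℝ) < k := by exact_mod_cast hk
  have hp : (0:ℝ) < (k:ℝ)+1 := by positivity
  have h1 : (1:ℝ)/((k:ℝ)+1) ≤ 1/2 := by
    rw [div_le_div_iff₀ hp (by norm_num)]; linarith
  have h1p : (0:ℝ) < (1:ℝ)/((k:ℝ)+1) := by positivity
  have hbig : ∀ n : ℕ, (n:ℝ) + 5 + 1 ≤ (3/2:ℝ)^(n+5) := by
    intro n
    induction n with
    | zero => norm_num
    | succ n ih => push_cast; rw [show n+1+5 = (n+5)+1 by ring, pow_succ]; nlinarith [(Nat.cast_nonneg n : (0:ℝ) ≤ n)]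
  have h2 : (k:ℝ)+1 ≤ (2 - 1/((k:ℝ)+1))^k := by
    have := hbig (k-5)
    rw [show k-5+5 = k by omega] at this
    have e : ((k-5:ℕ):ℝ) = k - 5 := by rw [Nat.cast_sub (by omega)]; norm_num
    rw [e] at this
    calc (k:ℝ)+1 ≤ (3/2:ℝ)^k := by linarith
      _ ≤ _ := by gcongr; linarith
  have hc : ContinuousOn (fun x:ℝ => x^k*(2-x)) (Set.Icc (2 - 1/((k:ℝ)+1)) 2) := by fun_prop
  have := intermediate_value_Icc' (by linarith) hc
  have hm : (1:ℝ) ∈ Set.Icc ((fun x:ℝ => x^k*(2-x)) 2) ((fun x:ℝ => x^k*(2-x)) (2 - 1/((k:ℝ)+1))) := by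
    constructor
    · simp
    · simp only [sub_sub_cancel]
      rw [mul_one_div, le_div_iff₀ hp]; linarith
  obtain ⟨x, hx, hxe⟩ := this hm
  refine ⟨x, hx.1, ?_, hxe⟩
  rcases lt_or_eq_of_le hx.2 with h | h
  · exact h
  · simp [h] at hxe

noncomputable def gG (k : ℕ) (a : ℝ) : ℝ := (2*a-1)*(a-1)/(a*((k+1)*a-2*k))

theorem alpha_den (k : ℕ) (a : ℝ) (h1 : 2 - 1/((k:ℝ)+1) ≤ a) (h2 : a < 2) :
    1 ≤ ((k:ℝ)+1)*a-2*k ∧ ((k:ℝ)+1)*a-2*k ≤ 2 := by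
  have hp : (0:ℝ) < (k:ℝ)+1 := by positivity
  constructor
  · have : ((k:ℝ)+1)*(2 - 1/((k:ℝ)+1)) ≤ ((k:ℝ)+1)*a := by gcongr
    rw [mul_sub, mul_one_div_cancel hp.ne'] at this
    linarith
  · nlinarith

theorem alpha_ge (k : ℕ) (hk : 450 < k) (a : ℝ) (h1 : 2 - 1/((k:ℝ)+1) ≤ a) : 1.997 ≤ a := by
  have hk0 : (451:ℝ) ≤ k := by exact_mod_cast hk
  have hp : (0:ℝ) < (k:ℝ)+1 := by positivity
  have : (1:ℝ)/((k:ℝ)+1) ≤ 0.003 := by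
    rw [div_le_iff₀ hp]; linarith
  linarith

theorem gG_bounds (k : ℕ) (hk : 450 < k) (a : ℝ) (h1 : 2 - 1/((k:ℝ)+1) ≤ a) (h2 : a < 2) :
    7/10 ≤ gG k a ∧ a * gG k a ≤ 3 := by
  obtain ⟨d1, d2⟩ := alpha_den k a h1 h2
  have ha := alpha_ge k hk a h1
  set D := ((k:ℝ)+1)*a-2*k with hD
  unfold gG
  rw [← hD]
  have ha0 : 0 < a := by linarith
  constructor
  · rw [le_div_iff₀ (by positivity)]
    nlinarith
  · rw [mul_div_assoc', mul_div_mul_left _ _ ha0.ne', div_le_iff₀ (by linarith)]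
    nlinarith

theorem approx_gl (k : ℕ) (hk : 450 < k) (a : ℝ) (h1 : 2 - 1/((k:ℝ)+1) ≤ a) (h2 : a < 2)
    (h3 : a^k*(2-a) = 1) (t : ℕ) :
    |(genLucas k t : ℝ) - gG k a * a^2 / a^k * a^t| ≤ 2 := by
  obtain ⟨d1, d2⟩ := alpha_den k a h1 h2
  have ha := alpha_ge k hk a h1
  obtain ⟨g1, g2⟩ := gG_bounds k hk a h1 h2
  have ha0 : 0 < a := by linarith
  have hk2 : 2 ≤ k := by omega
  set H := gG k a * a^2 / a^k with hH
  set b := a⁻¹ with hb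
  have hb0 : 0 < b := by positivity
  have hab : a * b = 1 := mul_inv_cancel₀ ha0.ne'
  have hak : 0 < a^k := by positivity
  have hbk : b^k = 2 - a := by
    rw [hb, inv_pow]; field_simp; linarith
  let f : ℕ → ℝ := fun t => (genLucas k t : ℝ)
  have fstep : ∀ t, f (t+k+1) = 2 * f (t+k) - f t := by
    intro t; simp only [f]; rw [gl_step k t hk2]; push_cast; ring
  let D : ℕ → ℝ := fun t => f (t+k) - ∑ j ∈ Finset.range k, b^(j+1) * f (t+j)
  have Dstep : ∀ t, D (t+1) = a * D t := by
    intro t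
    simp only [D]
    have e1 := Finset.sum_range_succ' (fun j => b^j * f (t+j)) k
    have e2 := Finset.sum_range_succ (fun j => b^j * f (t+j)) k
    have e3 : ∑ j ∈ Finset.range k, b^(j+1) * f (t+1+j) = ∑ j ∈ Finset.range k, b^(j+1) * f (t+(j+1)) :=
      Finset.sum_congr rfl (fun j _ => by congr 2; ring)
    have e4 : a * ∑ j ∈ Finset.range k, b^(j+1) * f (t+j) = ∑ j ∈ Finset.range k, b^j * f (t+j) := by
      rw [Finset.mul_sum]
      refine Finset.sum_congr rfl (fun j _ => ?_)
      rw [pow_succ, show a * (b^j*b*f (t+j)) = (a*b)*(b^j*f (t+j)) by ring, hab, one_mul]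
    rw [show t+1+k = t+k+1 by ring, fstep, mul_sub, e4, e3]
    simp only [pow_zero, one_mul, add_zero] at e1
    rw [hbk] at e2
    linarith
  have D0 : D 0 = (2*a-1)*(a-1) := by
    simp only [D, zero_add]
    obtain ⟨r, hr⟩ : ∃ r, k = r + 2 := ⟨k-2, by omega⟩
    have q1 := gl_two k
    have q2 := gl_one k hk2
    have q3 := gl_three k hk2
    have hs : ∑ j ∈ Finset.range k, b^(j+1) * f j = b^(k-1)*2 + b^k := by
      have : Finset.range k = Finset.range (r+1+1) := by rw [hr]
      rw [this, Finset.sum_range_succ, Finset.sum_range_succ, Finset.sum_eq_zero]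
      · have e1 : r = k - 2 := by omega
        have e2 : r + 1 = k - 1 := by omega
        have e3 : k - 1 + 1 = k := by omega
        simp only [f]
        rw [e2, q2, e1, q1, e3]; push_cast; ring
      · intro x hx
        simp only [f]
        rw [gl_zero k x (by have := Finset.mem_range.1 hx; omega)]; simp
    rw [hs]
    simp only [f]
    rw [q3]
    have : b^(k-1) = a * (2-a) := by
      rw [← hbk, show b^k = b^(k-1+1) by congr 1; omega, pow_succ]
      rw [show a*(b^(k-1)*b) = (a*b)*b^(k-1) by ring, hab, one_mul]
    rw [this, hbk]; push_cast; ring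
  have Dt : ∀ t, D t = a^t * ((2*a-1)*(a-1)) := by
    intro t
    induction t with
    | zero => rw [D0]; simp
    | succ t ih => rw [Dstep, ih]; ring
  have hw : ∑ j ∈ Finset.range k, b^(j+1) = 1 := by
    have hg := geom_sum_eq (x := b) (by intro h; rw [h] at hab; linarith) k
    have : ∑ j ∈ Finset.range k, b^(j+1) = b * ∑ j ∈ Finset.range k, b^j := by
      rw [Finset.mul_sum]; exact Finset.sum_congr rfl (fun j _ => by ring)
    rw [this, hg, hbk]
    have hb1 : b - 1 ≠ 0 := by intro h; have : b = 1 := by linarith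
                               rw [this] at hab; linarith
    rw [mul_div_assoc', div_eq_one_iff_eq hb1]
    linarith
  let e : ℕ → ℝ := fun t => f t - H * a^t
  have erec : ∀ t, e (t+k) = ∑ j ∈ Finset.range k, b^(j+1) * e (t+j) := by
    intro t
    have s1 : ∑ j ∈ Finset.range k, b^(j+1) * e (t+j)
        = ∑ j ∈ Finset.range k, b^(j+1) * f (t+j) - k * (H * a^t * b) := by
      simp only [e, mul_sub]
      rw [Finset.sum_sub_distrib]
      congr 1
      rw [Finset.sum_congr rfl (g := fun _ => H * a^t * b), Finset.sum_const, Finset.card_range, nsmul_eq_mul]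
      intro j _
      rw [pow_add a t j, pow_succ b j, show b^j*b*(H*(a^t*a^j)) = (a*b)^j*(H*a^t*b) by rw [mul_pow]; ring, hab]
      simp
    have := Dt t
    simp only [D] at this
    rw [s1]
    simp only [e]
    have hHe : H * (a^k - k * b) = (2*a-1)*(a-1) := by
      have hd : a*(((k:ℝ)+1)*a-2*k) ≠ 0 := mul_ne_zero ha0.ne' (by linarith)
      have hG : gG k a * (a*(((k:ℝ)+1)*a-2*k)) = (2*a-1)*(a-1) := by
        unfold gG; exact div_mul_cancel₀ _ hd
      have hH2 : H = gG k a * a^2 * (2-a) := by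
        rw [hH, div_eq_iff hak.ne']; linear_combination (-gG k a*a^2)*h3
      rw [hH2]
      linear_combination hG + gG k a*a^2*h3 - gG k a*a*k*(2-a)*hab
    rw [pow_add]
    linear_combination this + (-a^t) * hHe
  have hH0 : 0 < H := by
    have : 0 < gG k a := by linarith
    rw [hH]; positivity
  have hbase : ∀ t, t < k → |e t| ≤ 2 := by
    intro t ht
    have hHk : H * a^(k-1) = a * gG k a := by
      rw [hH, show a^k = a^(k-1)*a by rw [← pow_succ]; congr 1; omega]
      field_simp
    have hHk2 : H * a^(k-2) = gG k a := by
      have : a^(k-1) = a^(k-2)*a := by rw [← pow_succ]; congr 1; omega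
      rw [this] at hHk
      have : a * (H * a^(k-2)) = a * gG k a := by rw [← hHk]; ring
      exact mul_left_cancel₀ ha0.ne' this
    have hpos : 0 < H * a^t := by positivity
    by_cases c1 : t = k - 1
    · simp only [e, f]
      rw [c1, gl_one k hk2, hHk, abs_le]
      push_cast
      constructor <;> nlinarith
    by_cases c2 : t = k - 2
    · simp only [e, f]
      rw [c2, gl_two k, hHk2, abs_le]
      push_cast
      constructor <;> nlinarith
    · simp only [e, f]
      rw [gl_zero k t (by omega)]
      have : H * a^t ≤ H * a^(k-2) := by
        gcongr
        · linarith
        · omega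
      rw [hHk2] at this
      rw [abs_le]; push_cast
      constructor <;> nlinarith
  have : ∀ t, |e t| ≤ 2 := by
    intro t
    induction t using Nat.strong_induction_on with
    | _ t ih =>
      by_cases c : t < k
      · exact hbase t c
      · obtain ⟨r, rfl⟩ : ∃ r, t = r + k := ⟨t-k, by omega⟩
        rw [erec]
        calc |∑ j ∈ Finset.range k, b^(j+1) * e (r+j)| ≤ ∑ j ∈ Finset.range k, |b^(j+1) * e (r+j)| :=
              Finset.abs_sum_le_sum_abs _ _
          _ ≤ ∑ j ∈ Finset.range k, b^(j+1) * 2 := by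
              refine Finset.sum_le_sum (fun j hj => ?_)
              rw [abs_mul, abs_of_pos (by positivity)]
              have := ih (r+j) (by have := Finset.mem_range.1 hj; omega)
              gcongr
          _ = 2 := by rw [← Finset.sum_mul, hw, one_mul]
  exact this t

theorem approx_L (k : ℕ) (hk : 450 < k) (a : ℝ) (h1 : 2 - 1/((k:ℝ)+1) ≤ a) (h2 : a < 2)
    (h3 : a^k*(2-a) = 1) (n : ℕ) :
    |(lucasL k n : ℝ) - gG k a * a^n| ≤ 2 := by
  have := approx_gl k hk a h1 h2 h3 (n+k-2)
  have ha := alpha_ge k hk a h1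
  have ha0 : 0 < a := by linarith
  unfold lucasL
  have e : gG k a * a^2 / a^k * a^(n+k-2) = gG k a * a^n := by
    have : a^n * a^k = a^2 * a^(n+k-2) := by rw [← pow_add, ← pow_add]; congr 1; omega
    field_simp
    linear_combination (-gG k a) * this
  rwa [e] at this


theorem LL0 (k : ℕ) : lucasL k 0 = 2 := by
  unfold lucasL; rw [zero_add]; exact gl_two k

theorem LL1 (k : ℕ) (hk : 2 ≤ k) : lucasL k 1 = 1 := by
  unfold lucasL; rw [show 1+k-2 = k-1 by omega]; exact gl_one k hk

theorem LL2 (k : ℕ) (hk : 2 ≤ k) : lucasL k 2 = 3 := by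
  unfold lucasL; rw [show 2+k-2 = k by omega]; exact gl_three k hk

theorem LLs1 (k n : ℕ) (hk : 2 ≤ k) (hn : 2 ≤ n) (h : n < k) : lucasL k (n+1) = 2 * lucasL k n := by
  unfold lucasL
  have := gl_step k (n-2) hk
  rw [gl_zero k (n-2) (by omega), show n-2+k+1 = n+1+k-2 by omega, show n-2+k=n+k-2 by omega] at this
  linarith

theorem LLs2 (k n : ℕ) (hk : 2 ≤ k) : lucasL k (n+k+1) = 2 * lucasL k (n+k) - lucasL k n := by
  unfold lucasL
  have := gl_step k (n+k-2) hk
  rw [show n+k-2+k+1 = n+k+1+k-2 by omega, show n+k-2+k=n+k+k-2 by omega] at this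
  linarith

theorem LLz (k i : ℕ) (hk : 2 ≤ k) (h : i + 2 ≤ k) : lucasL k (i+2) = 3 * 2^i := by
  induction i with
  | zero => rw [LL2 k hk]; norm_num
  | succ i ih =>
    rw [show i+1+2 = (i+2)+1 by ring, LLs1 k (i+2) hk (by omega) (by omega), ih (by omega)]; ring

theorem Lr0 (k M : ℕ) (hk : 2 ≤ k) :
    lucasL k ((k+1)*(M+1)) = 2 * lucasL k ((k+1)*M+k) - lucasL k ((k+1)*M) := by
  rw [← LLs2 k _ hk]; congr 1; 

theorem Lr1 (k M j : ℕ) (hk : 2 ≤ k) :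
    lucasL k ((k+1)*(M+1)+(j+1)) = 2 * lucasL k ((k+1)*(M+1)+j) - lucasL k ((k+1)*M+(j+1)) := by
  have := LLs2 k ((k+1)*M+(j+1)) hk
  rw [show (k+1)*M+(j+1)+k+1 = (k+1)*(M+1)+(j+1) by ring,
    show (k+1)*M+(j+1)+k = (k+1)*(M+1)+j by ring] at this
  exact this

/-- the 2-adic main coefficient -/
def Bf (M i : ℕ) : ℤ := 8 * ((i+2+M).choose M : ℤ) - 6 * ((i+1+M).choose M : ℤ) + ((i+M).choose M : ℤ)

theorem Bf_zero (i : ℕ) : Bf 0 i = 3 := by simp [Bf]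

theorem Bf_rec (M i : ℕ) : Bf (M+1) (i+1) = Bf (M+1) i + Bf M (i+1) := by
  unfold Bf
  have p : ∀ x : ℕ, (((x+1).choose (M+1) : ℕ) : ℤ) = x.choose M + x.choose (M+1) := by
    intro x; rw [Nat.choose_succ_succ]; push_cast; ring
  have h1 := p (i+1+2+M)
  have h2 := p (i+1+1+M)
  have h3 := p (i+1+M)
  have a1 : i+1+2+(M+1) = i+1+2+M+1 := by ring
  have a2 : i+1+1+(M+1) = i+1+1+M+1 := by ring
  have a3 : i+1+(M+1) = i+1+M+1 := by ring
  have a4 : i+2+(M+1) = i+1+2+M := by ring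
  have a5 : i+1+(M+1) = i+1+1+M := by ring
  have a6 : i+(M+1) = i+1+M := by ring
  have b1 : (((i+1+2+(M+1)).choose (M+1) : ℕ) : ℤ) = (i+1+2+M).choose M + (i+2+(M+1)).choose (M+1) := by
    rw [a1, a4]; exact h1
  have b2 : (((i+1+1+(M+1)).choose (M+1) : ℕ) : ℤ) = (i+1+1+M).choose M + (i+1+(M+1)).choose (M+1) := by
    rw [a2, a5]; exact h2
  have b3 : (((i+1+(M+1)).choose (M+1) : ℕ) : ℤ) = (i+1+M).choose M + (i+(M+1)).choose (M+1) := by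
    rw [a3, a6]; exact h3
  linear_combination 8*b1-6*b2+b3

theorem Bf_j2 (M : ℕ) : Bf M 0 = 4*M^2+6*M+3 := by
  unfold Bf
  have h1 : (0+2+M).choose M = (M+2).choose 2 := by
    rw [show 0+2+M = M+2 by ring, ← Nat.choose_symm_add]
  have h2 : (0+1+M).choose M = M+1 := by
    rw [show 0+1+M = M+1 by ring]; simp
  have h3 : 2 * ((M+2).choose 2 : ℤ) = (M+2)*(M+1) := by
    have := Nat.add_choose_mul_factorial_mul_factorial M 2
    have h := Nat.triangle_succ (M+1)
    rw [Nat.choose_two_right]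
    have : (M+2)*(M+2-1)/2*2 = (M+2)*(M+2-1) := Nat.div_mul_cancel (Nat.even_mul_pred_self _).two_dvd
    have h' : (2:ℕ)*((M+2)*(M+2-1)/2) = (M+2)*(M+1) := by
      rw [mul_comm, this]; rfl
    exact_mod_cast h'
  rw [h1, h2]
  simp
  linear_combination 4*h3

theorem Lcong (k : ℕ) (hk : 2 ≤ k) (M : ℕ) :
    (2:ℤ)^(k-1) ∣ lucasL k ((k+1)*M) - (-1)^M*2 ∧
    (2:ℤ)^k ∣ lucasL k ((k+1)*M+1) - (-1)^M*(4*M+1) ∧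
    ∀ i, i + 2 ≤ k → (2:ℤ)^(k+1+i) ∣ lucasL k ((k+1)*M+(i+2)) - (-1)^M*(2^i*Bf M i) := by
  induction M with
  | zero =>
    simp only [mul_zero, zero_add, pow_zero, one_mul, Bf_zero]
    refine ⟨by rw [LL0]; simp, by rw [LL1 k hk]; simp, fun i hi => ?_⟩
    rw [LLz k i hk hi]
    exact ⟨0, by ring⟩
  | succ M ih =>
    obtain ⟨h0, h1, h2⟩ := ih
    have A0 : (2:ℤ)^(k-1) ∣ lucasL k ((k+1)*(M+1)) - (-1)^(M+1)*2 := by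
      obtain ⟨c, hc⟩ := h2 (k-2) (by omega)
      obtain ⟨c', hc'⟩ := h0
      rw [Lr0 k M hk]
      rw [show k-2+2=k by omega] at hc
      refine ⟨(-1)^M * Bf M (k-2) + 2*2^k*c - c', ?_⟩
      have e1 : (2:ℤ)^(k+1+(k-2)) = 2^(k-1)*2^k := by rw [← pow_add]; congr 1; omega
      have e2 : (2:ℤ)^(k-1) = 2 * 2^(k-2) := by rw [← pow_succ']; congr 1; omega
      rw [e1] at hc
      rw [pow_succ]
      linear_combination 2*hc - hc' - (-1)^M * Bf M (k-2) * e2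
    have A1 : (2:ℤ)^k ∣ lucasL k ((k+1)*(M+1)+1) - (-1)^(M+1)*(4*(M+1:ℕ)+1) := by
      obtain ⟨c, hc⟩ := A0
      obtain ⟨c', hc'⟩ := h1
      have := Lr1 k M 0 hk
      simp only [zero_add, add_zero] at this
      rw [this]
      refine ⟨c-c', ?_⟩
      have e : (2:ℤ)^k = 2*2^(k-1) := by rw [← pow_succ']; congr 1; omega
      push_cast
      rw [pow_succ] at hc ⊢
      linear_combination 2*hc-hc' - c * e
    refine ⟨A0, A1, fun i => ?_⟩
    induction i with
    | zero =>
      intro _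
      obtain ⟨c, hc⟩ := A1
      obtain ⟨c', hc'⟩ := h2 0 (by omega)
      rw [zero_add, Lr1 k M 1 hk]
      rw [zero_add] at hc'
      refine ⟨c-c', ?_⟩
      rw [Bf_j2] at hc' ⊢
      simp only [add_zero] at *
      push_cast at *
      rw [pow_succ] at hc ⊢
      linear_combination 2*hc-hc'
    | succ i ih =>
      intro hi
      obtain ⟨c, hc⟩ := ih (by omega)
      obtain ⟨c', hc'⟩ := h2 (i+1) (by omega)
      rw [show i+1+2 = (i+2)+1 by ring] at *
      rw [Lr1 k M (i+2) hk]
      refine ⟨c-c', ?_⟩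
      rw [Bf_rec]
      rw [show k+1+(i+1) = (k+1+i)+1 by ring] at *
      rw [pow_succ (2:ℤ) (k+1+i)] at *
      rw [pow_succ (2:ℤ) i] at *
      rw [pow_succ] at hc ⊢
      linear_combination 2*hc-hc'

theorem Lone (k : ℕ) (hk : 2 ≤ k) :
    lucasL k (k+1) = 3*2^(k-1)-2 ∧ lucasL k (k+1+1) = 3*2^k-5 ∧
    ∀ i, i + 2 ≤ k → lucasL k (k+1+(i+2)) = 2^i*(3*2^(k+1) - (3*i+13)) := by
  have e : (2:ℤ)^(k-1) = 2 * 2^(k-2) := by rw [← pow_succ']; congr 1; omega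
  have e' : (2:ℤ)^k = 2 * 2^(k-1) := by rw [← pow_succ']; congr 1; omega
  have A0 : lucasL k (k+1) = 3*2^(k-1)-2 := by
    have := Lr0 k 0 hk
    simp only [mul_zero, zero_add, mul_one] at this
    have h := LLz k (k-2) hk (by omega)
    rw [show k-2+2 = k by omega] at h
    rw [this, h, LL0, e]; ring
  have A1 : lucasL k (k+1+1) = 3*2^k-5 := by
    have := Lr1 k 0 0 hk
    simp only [mul_zero, zero_add, mul_one, add_zero] at this
    rw [this, A0, LL1 k hk, e']; ring
  refine ⟨A0, A1, fun i => ?_⟩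
  induction i with
  | zero =>
    intro _
    have := Lr1 k 0 1 hk
    simp only [mul_zero, zero_add, mul_one] at this
    rw [zero_add, this, A1, LL2 k hk]; push_cast; ring
  | succ i ih =>
    intro hi
    have := Lr1 k 0 (i+2) hk
    simp only [mul_zero, zero_add, mul_one] at this
    have h := LLz k (i+1) hk hi
    rw [show i+1+2 = i+2+1 by ring] at *
    rw [this, ih (by omega), h]; push_cast; ring

theorem Ltwo (k : ℕ) (hk : 2 ≤ k) (i : ℕ) (hi : i + 2 ≤ k) :
    2 * lucasL k ((k+1)*2+(i+2)) = 2^i*(6*2^(2*k+2) - 2^(k+2)*(3*k+3*i+16)+(3*i^2+29*i+62)) := by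
  obtain ⟨h0, h1, h2⟩ := Lone k hk
  have e' : (2:ℤ)^k = 2 * 2^(k-1) := by rw [← pow_succ']; congr 1; omega
  have e'' : (2:ℤ)^k = 4 * 2^(k-2) := by rw [show (4:ℤ) = 2^2 by norm_num, ← pow_add]; congr 1; omega
  have e2 : (2:ℤ)^(2*k+2) = 4*2^k*2^k := by ring
  have A0 : 4*lucasL k ((k+1)*2) = 2*2^k*(3*2^(k+1)-(3*k+7))-6*2^k+8 := by
    have := Lr0 k 1 hk
    have h := h2 (k-2) (by omega)
    rw [show k-2+2 = k by omega] at h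
    simp only [mul_one, Nat.reduceAdd] at this
    rw [this, h, h0]
    have hc : ((k-2:ℕ):ℤ) = k - 2 := by rw [Nat.cast_sub hk]; norm_num
    rw [hc, pow_succ]
    linear_combination (-2 * ((3*(2^k*2)) - (3*k+7))) * e'' + 6 * e'
  have A1 : 4*lucasL k ((k+1)*2+1) = 4*2^k*(3*2^(k+1)-(3*k+7))-24*2^k+36 := by
    have := Lr1 k 1 0 hk
    simp only [mul_one, zero_add, add_zero, Nat.reduceAdd] at this
    rw [this, h1]
    linear_combination 2*A0
  induction i with
  | zero =>
    have := Lr1 k 1 1 hk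
    simp only [mul_one, Nat.reduceAdd] at this
    have h := h2 0 (by omega)
    rw [zero_add] at h ⊢
    rw [this, h]
    push_cast
    rw [e2, show (2:ℤ)^(k+2) = 4*2^k by ring]
    linear_combination A1
  | succ i ih =>
    have := Lr1 k 1 (i+2) hk
    simp only [mul_one, Nat.reduceAdd] at this
    have h := h2 (i+1) (by omega)
    have ih' := ih (by omega)
    rw [show i+1+2 = i+2+1 by ring] at *
    rw [this, h]
    push_cast
    rw [pow_succ (2:ℤ) i]
    linear_combination 2*ih'

theorem Bf_pow (M i v : ℕ) (h : (2:ℤ)^v ∣ Bf M i) : 2^v ≤ 8*(i+2+M)^3 := by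
  set C := (i+M).choose M with hC
  have c1 : (i+1+M).choose M * (i+1) = C * (i+1+M) := by
    have := Nat.choose_mul_succ_eq (i+M) M
    rw [show i+M+1-M = i+1 by omega, show i+M+1 = i+1+M by ring] at this
    rw [← this]
  have c2 : (i+2+M).choose M * (i+2) = (i+1+M).choose M * (i+2+M) := by
    have := Nat.choose_mul_succ_eq (i+1+M) M
    rw [show i+1+M+1-M = i+2 by omega, show i+1+M+1 = i+2+M by ring] at this
    rw [← this]
  let Q : ℕ := 2*(i+1+M)*(i+2+4*M) + (i+2)*(i+1)
  have hQ : Bf M i * ((i+2)*(i+1)) = ((Q * C : ℕ):ℤ) := by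
    have c1' : ((i+1+M).choose M : ℤ) * (i+1) = C * (i+1+M) := by exact_mod_cast c1
    have c2' : ((i+2+M).choose M : ℤ) * (i+2) = (i+1+M).choose M * (i+2+M) := by exact_mod_cast c2
    simp only [Q]
    unfold Bf
    push_cast
    rw [← hC]
    linear_combination 8*(i+1)*c2' + (8*(i+2+M)-6*(i+2))*c1'
  have hd : 2^v ∣ Q * C := by
    have : (2:ℤ)^v ∣ ((Q * C : ℕ):ℤ) := by rw [← hQ]; exact Dvd.dvd.mul_right h _
    exact_mod_cast this
  have hQ0 : Q ≠ 0 := by simp only [Q]; positivity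
  have hC0 : C ≠ 0 := (Nat.choose_pos (by omega)).ne'
  have hv : v ≤ (Q*C).factorization 2 := (Nat.prime_two.pow_dvd_iff_le_factorization (mul_ne_zero hQ0 hC0)).1 hd
  rw [Nat.factorization_mul hQ0 hC0] at hv
  have f1 : 2^(Q.factorization 2) ≤ Q := Nat.ordProj_le 2 hQ0
  have f2 : 2^(C.factorization 2) ≤ i+2+M := by
    rcases Nat.eq_zero_or_pos (i+M) with h0 | h0
    · have hC1 : C = 1 := by
        have : M = 0 := by omega
        rw [hC, this]; simp
      rw [hC1]; simp; omega
    · exact (Nat.pow_factorization_choose_le h0).trans (by omega)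
  calc 2^v ≤ 2^(Q.factorization 2 + C.factorization 2) := Nat.pow_le_pow_right (by norm_num) hv
    _ = 2^(Q.factorization 2) * 2^(C.factorization 2) := pow_add _ _ _
    _ ≤ Q * (i+2+M) := Nat.mul_le_mul f1 f2
    _ ≤ 8*(i+2+M)^2*(i+2+M) := by
        apply Nat.mul_le_mul_right
        simp only [Q]; nlinarith
    _ = _ := by ring


theorem coeff_one_sub_pow (j i : ℕ) :
    PowerSeries.coeff i ((1 - PowerSeries.X : PowerSeries ℤ)^j) = (-1)^i * (j.choose i : ℤ) := by
  induction j generalizing i with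
  | zero => cases i <;> simp [PowerSeries.coeff_one]
  | succ j ih =>
    rw [pow_succ, mul_sub, mul_one, map_sub]
    cases i with
    | zero => rw [ih]; simp
    | succ i =>
      rw [PowerSeries.coeff_succ_mul_X, ih, ih, Nat.choose_succ_succ]; push_cast; ring

/-- Pade coefficient sums -/
def pn (n j : ℕ) : ℤ := ∑ i ∈ Finset.range (n+1), (-1)^i * ((2*n-i).choose n : ℤ) * (j.choose i : ℤ)

theorem pn_eq (n j : ℕ) : pn n j =
    PowerSeries.coeff n ((1 - PowerSeries.X : PowerSeries ℤ)^j * (PowerSeries.mk 1)^(n+1)) := by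
  rw [PowerSeries.mk_one_pow_eq_mk_choose_add, PowerSeries.coeff_mul,
    Finset.Nat.sum_antidiagonal_eq_sum_range_succ_mk]
  unfold pn
  refine Finset.sum_congr rfl (fun i hi => ?_)
  have := Finset.mem_range.1 hi
  rw [coeff_one_sub_pow, PowerSeries.coeff_mk, show n + (n-i) = 2*n-i by omega]
  ring

theorem one_sub_mk : (1 - PowerSeries.X : PowerSeries ℤ) * PowerSeries.mk 1 = 1 := by
  rw [mul_comm, PowerSeries.mk_one_mul_one_sub_eq_one]

theorem pn_le (n j : ℕ) (h : j ≤ n) : pn n j = ((2*n-j).choose (n-j) : ℤ) := by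
  rw [pn_eq]
  have : (1 - PowerSeries.X : PowerSeries ℤ)^j * (PowerSeries.mk 1)^(n+1) = (PowerSeries.mk 1)^(n-j+1) := by
    rw [show n+1 = j + (n-j+1) by omega, pow_add, ← mul_assoc, ← mul_pow, one_sub_mk, one_pow, one_mul]
  rw [this, PowerSeries.mk_one_pow_eq_mk_choose_add, PowerSeries.coeff_mk, show n-j+n = 2*n-j by omega]

theorem pn_gt (n j : ℕ) (h : n+1 ≤ j) : pn n j = (-1)^n * ((j-n-1).choose n : ℤ) := by
  rw [pn_eq]
  have : (1 - PowerSeries.X : PowerSeries ℤ)^j * (PowerSeries.mk 1)^(n+1) = (1 - PowerSeries.X)^(j-n-1) := by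
    obtain ⟨t, rfl⟩ : ∃ t, j = t + (n+1) := ⟨j-n-1, by omega⟩
    rw [pow_add, mul_assoc, ← mul_pow, one_sub_mk, one_pow, mul_one]
    congr 1; omega
  rw [this, coeff_one_sub_pow]

noncomputable def padeQ (n m : ℕ) (y : ℝ) : ℝ :=
  ∑ i ∈ Finset.range (n+1), (-1)^i * ((2*n-i).choose n : ℝ) * ((m+n).choose i : ℝ) * y^i * (1+y)^(n-i)

noncomputable def padeP (n m : ℕ) (y : ℝ) : ℝ :=
  ∑ j ∈ Finset.range (n+1), ((m+n).choose j : ℝ) * (pn n j : ℝ) * y^j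

/-- minus the remainder -/
noncomputable def padeR (n m : ℕ) (y : ℝ) : ℝ :=
  ∑ t ∈ Finset.range (m-n), ((m+n).choose (2*n+1+t) : ℝ) * ((n+t).choose n : ℝ) * y^(2*n+1+t)

theorem binom_shift (N i : ℕ) (hi : i ≤ N) (y : ℝ) :
    (N.choose i : ℝ) * y^i * (1+y)^(N-i) = ∑ j ∈ Finset.range (N+1), (N.choose j : ℝ) * (j.choose i : ℝ) * y^j := by
  have h1 : ∑ j ∈ Finset.range (N+1), (N.choose j : ℝ) * (j.choose i : ℝ) * y^j
      = ∑ j ∈ Finset.range (N-i+1), (N.choose (i+j) : ℝ) * ((i+j).choose i : ℝ) * y^(i+j) := by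
    rw [show N+1 = i + (N-i+1) by omega, Finset.sum_range_add]
    rw [Finset.sum_eq_zero, zero_add]
    intro x hx
    rw [Nat.choose_eq_zero_of_lt (Finset.mem_range.1 hx)]; simp
  rw [h1, add_comm 1 y, add_pow, Finset.mul_sum]
  refine Finset.sum_congr rfl (fun j hj => ?_)
  have hj' := Finset.mem_range.1 hj
  have := Nat.choose_mul (n := N) (k := i+j) (s := i) (by omega)
  rw [show i+j-i = j by omega] at this
  have h' : (N.choose (i+j) : ℝ) * ((i+j).choose i : ℝ) = N.choose i * (N-i).choose j := by exact_mod_cast this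
  rw [h', one_pow, pow_add]; ring

theorem pade_id (n m : ℕ) (y : ℝ) :
    (1+y)^m * padeQ n m y = ∑ j ∈ Finset.range (m+n+1), ((m+n).choose j : ℝ) * (pn n j : ℝ) * y^j := by
  unfold padeQ pn
  rw [Finset.mul_sum]
  have : ∀ i ∈ Finset.range (n+1), (1+y)^m * ((-1)^i * ((2*n-i).choose n : ℝ) * ((m+n).choose i : ℝ) * y^i * (1+y)^(n-i))
      = ∑ j ∈ Finset.range (m+n+1), ((-1)^i * ((2*n-i).choose n : ℝ)) * (((m+n).choose j : ℝ) * (j.choose i : ℝ) * y^j) := by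
    intro i hi
    have hi' := Finset.mem_range.1 hi
    rw [← Finset.mul_sum, ← binom_shift (m+n) i (by omega)]
    rw [show m+n-i = m+(n-i) by omega, pow_add]; ring
  rw [Finset.sum_congr rfl this, Finset.sum_comm]
  refine Finset.sum_congr rfl (fun j _ => ?_)
  push_cast
  rw [Finset.mul_sum, Finset.sum_mul]
  refine Finset.sum_congr rfl (fun i _ => ?_)
  ring

theorem pade_main (n m : ℕ) (hn : Odd n) (hm : n + 1 ≤ m) (y : ℝ) :
    (1+y)^m * padeQ n m y = padeP n m y - padeR n m y := by
  rw [pade_id]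
  have s1 := Finset.sum_range_add (fun j => ((m+n).choose j : ℝ) * (pn n j : ℝ) * y^j) (n+1) (n+(m-n))
  have s2 := Finset.sum_range_add (fun x => ((m+n).choose (n+1+x) : ℝ) * (pn n (n+1+x) : ℝ) * y^(n+1+x)) n (m-n)
  have e : m+n+1 = (n+1)+(n+(m-n)) := by omega
  rw [e, s1, s2]
  unfold padeP padeR
  rw [sub_eq_add_neg]
  congr 1
  rw [Finset.sum_eq_zero, zero_add, ← Finset.sum_neg_distrib]
  · refine Finset.sum_congr rfl (fun t _ => ?_)
    rw [show n+1+(n+t) = 2*n+1+t by ring, pn_gt n _ (by omega), hn.neg_one_pow,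
      show 2*n+1+t-n-1 = n+t by omega]
    push_cast; ring
  · intro t ht
    have := Finset.mem_range.1 ht
    rw [pn_gt n _ (by omega), Nat.choose_eq_zero_of_lt (show n+1+t-n-1 < n by omega)]; simp

theorem padeP_pos (n m : ℕ) (y : ℝ) (hy : 0 ≤ y) : 1 ≤ padeP n m y := by
  unfold padeP
  rw [Finset.sum_range_succ']
  have h0 : (1:ℝ) ≤ ((m+n).choose 0 : ℝ) * (pn n 0 : ℝ) * y^0 := by
    rw [pn_le n 0 (by omega)]
    have : 0 < (2*n-0).choose (n-0) := Nat.choose_pos (by omega)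
    simp only [Nat.choose_zero_right, pow_zero, Nat.cast_one, one_mul, mul_one]
    exact_mod_cast this
  have h1 : 0 ≤ ∑ k ∈ Finset.range n, ((m+n).choose (k+1) : ℝ) * (pn n (k+1) : ℝ) * y^(k+1) := by
    refine Finset.sum_nonneg (fun k hk => ?_)
    have := Finset.mem_range.1 hk
    rw [pn_le n _ (by omega)]
    push_cast
    positivity
  linarith

theorem padeR_pos (n m : ℕ) (hm : n+1 ≤ m) (y : ℝ) (hy : 0 < y) : 0 < padeR n m y := by
  unfold padeR
  apply Finset.sum_pos
  · intro t ht
    have := Finset.mem_range.1 ht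
    have h1 : 0 < (m+n).choose (2*n+1+t) := Nat.choose_pos (by omega)
    have h2 : 0 < (n+t).choose n := Nat.choose_pos (by omega)
    positivity
  · exact ⟨0, Finset.mem_range.2 (by omega)⟩

theorem choose_shift (a b c : ℕ) : a.choose b ≤ (a+c).choose (b+c) := by
  induction c with
  | zero => simp
  | succ c ih => 
    rw [← add_assoc, ← add_assoc, Nat.choose_succ_succ]; omega

theorem padeR_le (n m : ℕ) (hm : n+1 ≤ m) (y : ℝ) (hy : 0 ≤ y) :
    padeR n m y ≤ ((m+n).choose (2*n+1) : ℝ) * y^(2*n+1) * (1+y)^(m-n-1) := by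
  unfold padeR
  have hmn : Finset.range (m-n) = Finset.range (m-n-1+1) := by congr 1; omega
  rw [add_comm 1 y, add_pow, Finset.mul_sum, hmn]
  refine Finset.sum_le_sum (fun t ht => ?_)
  have ht' := Finset.mem_range.1 ht
  have h1 := Nat.choose_mul (n := m+n) (k := 2*n+1+t) (s := 2*n+1) (by omega)
  rw [show 2*n+1+t-(2*n+1) = t by omega, show m+n-(2*n+1) = m-n-1 by omega] at h1
  have h2 : (n+t).choose n ≤ (2*n+1+t).choose (2*n+1) := by
    have := choose_shift (n+t) n (n+1)
    rwa [show n+t+(n+1) = 2*n+1+t by ring, show n+(n+1) = 2*n+1 by ring] at this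
  have h1' : ((m+n).choose (2*n+1+t) : ℝ) * ((2*n+1+t).choose (2*n+1) : ℝ) =
      (m+n).choose (2*n+1) * (m-n-1).choose t := by exact_mod_cast h1
  have h2' : ((n+t).choose n : ℝ) ≤ (2*n+1+t).choose (2*n+1) := by exact_mod_cast h2
  calc ((m+n).choose (2*n+1+t) : ℝ) * ((n+t).choose n : ℝ) * y^(2*n+1+t)
      ≤ ((m+n).choose (2*n+1+t) : ℝ) * ((2*n+1+t).choose (2*n+1) : ℝ) * y^(2*n+1+t) := by gcongr
    _ = _ := by rw [h1', pow_add, one_pow]; ring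

theorem choose_half (n i : ℕ) (hi : i ≤ n) : 2^i * (2*n-i).choose n ≤ (2*n).choose n := by
  induction i with
  | zero => simp
  | succ i ih =>
    have ih' := ih (by omega)
    have h := Nat.choose_mul_succ_eq (2*n-(i+1)) n
    rw [show 2*n-(i+1)+1 = 2*n-i by omega] at h
    have : 2 * (2*n-(i+1)).choose n ≤ (2*n-i).choose n := by
      by_contra hc
      push Not at hc
      have h3 : (2*n-i-n)*2 ≤ 2*n-i := by omega
      have hpos : 0 < 2*n-i := by omega
      nlinarith
    calc 2^(i+1) * (2*n-(i+1)).choose n = 2^i * (2 * (2*n-(i+1)).choose n) := by ring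
      _ ≤ 2^i * (2*n-i).choose n := by gcongr
      _ ≤ _ := ih'

theorem padeQ_le (n m : ℕ) (y : ℝ) (hy : 0 ≤ y) :
    padeQ n m y ≤ 4^n * (1+y)^n * (1+y/2)^(m+n) := by
  have h4 : ((2*n).choose n : ℝ) ≤ 4^n := by
    have : (2*n).choose n ≤ 4^n := by
      have := Nat.choose_le_two_pow (2*n) n
      rwa [pow_mul] at this
    exact_mod_cast this
  calc padeQ n m y ≤ ∑ i ∈ Finset.range (n+1), (4^n * (1+y)^n) * (((m+n).choose i : ℝ) * (y/2)^i) := by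
        unfold padeQ
        refine Finset.sum_le_sum (fun i hi => ?_)
        have hi' := Finset.mem_range.1 hi
        have h1 : (2:ℝ)^i * ((2*n-i).choose n : ℝ) ≤ (2*n).choose n := by
          exact_mod_cast choose_half n i (by omega)
        have h2 : (1+y)^(n-i) ≤ (1+y)^n := pow_le_pow_right₀ (by linarith) (by omega)
        have h3 : (-1:ℝ)^i ≤ 1 := by
          rcases neg_one_pow_eq_or ℝ i with h | h <;> rw [h] ; norm_num
        have h5 : ((2*n-i).choose n : ℝ) * y^i ≤ 4^n * (y/2)^i := by
          rw [div_pow, mul_div_assoc', le_div_iff₀ (by positivity)]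
          have : (2:ℝ)^i * ((2*n-i).choose n : ℝ) ≤ 4^n := h1.trans h4
          have hyi : 0 ≤ y^i := by positivity
          nlinarith
        calc (-1:ℝ)^i * ((2*n-i).choose n : ℝ) * ((m+n).choose i : ℝ) * y^i * (1+y)^(n-i)
            = (-1:ℝ)^i * (((2*n-i).choose n : ℝ) * ((m+n).choose i : ℝ) * y^i * (1+y)^(n-i)) := by ring
          _ ≤ 1 * (((2*n-i).choose n : ℝ) * ((m+n).choose i : ℝ) * y^i * (1+y)^(n-i)) := by gcongr
          _ = (((2*n-i).choose n : ℝ) * y^i) * (((m+n).choose i : ℝ) * (1+y)^(n-i)) := by ring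
          _ ≤ (4^n * (y/2)^i) * (((m+n).choose i : ℝ) * (1+y)^n) := by gcongr
          _ = _ := by ring
    _ ≤ ∑ i ∈ Finset.range (m+n+1), (4^n * (1+y)^n) * (((m+n).choose i : ℝ) * (y/2)^i) := by
        apply Finset.sum_le_sum_of_subset_of_nonneg
        · intro x hx; rw [Finset.mem_range] at *; omega
        · intro i _ _; positivity
    _ = _ := by
        have e : (1+y/2)^(m+n) = ∑ i ∈ Finset.range (m+n+1), ((m+n).choose i : ℝ) * (y/2)^i := by
          rw [add_comm 1 (y/2), add_pow]
          refine Finset.sum_congr rfl (fun i _ => ?_)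
          rw [one_pow]; ring
        rw [e, Finset.mul_sum]

theorem choose_le_x (N j : ℕ) (hj : j ≤ N) (x : ℝ) (hx : 0 < x) : (N.choose j : ℝ) * x^j ≤ (1+x)^N := by
  rw [add_comm, add_pow]
  have : x^j * 1^(N-j) * (N.choose j : ℝ) ≤ ∑ i ∈ Finset.range (N+1), x^i * 1^(N-i) * (N.choose i : ℝ) :=
    Finset.single_le_sum (f := fun i => x^i * 1^(N-i) * (N.choose i : ℝ)) 
      (fun i _ => by positivity) (Finset.mem_range.2 (by omega : j < N+1))
  simp only [one_pow, mul_one] at this ⊢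
  linarith

theorem padeQ_int (n m : ℕ) : ∃ z : ℤ, (125:ℝ)^n * padeQ n m (3/125) = z := by
  refine ⟨∑ i ∈ Finset.range (n+1), (-1)^i * ((2*n-i).choose n : ℤ) * ((m+n).choose i : ℤ) * 3^i * 128^(n-i), ?_⟩
  unfold padeQ
  push_cast
  rw [Finset.mul_sum]
  refine Finset.sum_congr rfl (fun i hi => ?_)
  have hi' := Finset.mem_range.1 hi
  rw [show (125:ℝ)^n = 125^i * 125^(n-i) by rw [← pow_add]; congr 1; omega,
    show (1:ℝ)+3/125 = 128/125 by norm_num, div_pow, div_pow]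
  field_simp

theorem padeP_int (n m : ℕ) : ∃ z : ℤ, (125:ℝ)^n * padeP n m (3/125) = z := by
  refine ⟨∑ i ∈ Finset.range (n+1), ((m+n).choose i : ℤ) * pn n i * 3^i * 125^(n-i), ?_⟩
  unfold padeP
  push_cast
  rw [Finset.mul_sum]
  refine Finset.sum_congr rfl (fun i hi => ?_)
  have hi' := Finset.mem_range.1 hi
  rw [show (125:ℝ)^n = 125^i * 125^(n-i) by rw [← pow_add]; congr 1; omega, div_pow]
  field_simp

/-- main consequence -/
theorem pade_ineq (n m s r : ℕ) (b : ℕ) (o : ℝ) (ho : 0 < o) (hn : Odd n) (hm : n+1 ≤ m)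
    (h : (b:ℝ) * 5^(3*m+s) = 3*2^(7*m+r) - o)
    (hR : (125:ℝ)^n * (3*2^r) * ((37/17)^(m+n) * (17/20)^(2*n+1) * (3/125)^(2*n+1) * (128/125)^(m-n-1)) < 1/2)
    (hQ : (125:ℝ)^n * (4^n * (128/125)^n * (253/250)^(m+n)) * o < 1/2 * 125^m) : False := by
  have hid := pade_main n m hn hm (3/125)
  have hP := padeP_pos n m (3/125) (by norm_num)
  have hRp := padeR_pos n m hm (3/125) (by norm_num)
  have hRl := padeR_le n m hm (3/125) (by norm_num)
  have hQl := padeQ_le n m (3/125) (by norm_num)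
  obtain ⟨zQ, hzQ⟩ := padeQ_int n m
  obtain ⟨zP, hzP⟩ := padeP_int n m
  set Q := padeQ n m (3/125)
  set P := padeP n m (3/125)
  set R := padeR n m (3/125)
  rw [show (1:ℝ)+3/125 = 128/125 by norm_num] at *
  rw [show (1:ℝ)+3/125/2 = 253/250 by norm_num] at *
  have hch := choose_le_x (m+n) (2*n+1) (by omega) (20/17) (by norm_num)
  rw [show (1:ℝ)+20/17 = 37/17 by norm_num] at hch
  have hch' : ((m+n).choose (2*n+1) : ℝ) ≤ (37/17)^(m+n) * (17/20)^(2*n+1) := by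
    have e : ((17:ℝ)/20)^(2*n+1) = ((20/17:ℝ)^(2*n+1))⁻¹ := by rw [← inv_pow]; norm_num
    rw [e, ← div_eq_mul_inv, le_div_iff₀ (by positivity)]; exact hch
  have hR2 : (125:ℝ)^n * (3*2^r) * R < 1/2 := by
    refine lt_of_le_of_lt ?_ hR
    gcongr
    refine hRl.trans ?_
    gcongr
  have h125 : (0:ℝ) < 125^m := by positivity
  have hR3 : R < 1 := by
    have h1 : (1:ℝ) ≤ 125^n * (3*2^r) := by
      have a1 : (1:ℝ) ≤ 125^n := one_le_pow₀ (by norm_num)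
      have a2 : (1:ℝ) ≤ 2^r := one_le_pow₀ (by norm_num)
      nlinarith
    nlinarith
  have hQp : 0 < Q := by
    have : 0 < ((128:ℝ)/125)^m * Q := by rw [hid]; linarith
    exact (pos_iff_pos_of_mul_pos this).1 (by positivity)
  have hQ2 : (125:ℝ)^n * Q * o < 1/2 * 125^m := by
    refine lt_of_le_of_lt ?_ hQ
    gcongr
  have key : (125:ℝ)^n * (b * 5^s * Q - 3*2^r*P) * 125^m = - (125^n * (3*2^r) * R) * 125^m - 125^n*Q*o := by
    have e1 : (128:ℝ)^m * Q = (P - R) * 125^m := by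
      rw [← hid, div_pow]; field_simp
    have e2 : (b:ℝ) * 5^s * 125^m = 3*2^r*128^m - o := by
      have : (b:ℝ) * 5^s * 125^m = b * 5^(3*m+s) := by
        rw [pow_add, pow_mul]; norm_num; ring
      rw [this, h, pow_add, pow_mul]; norm_num; ring
    linear_combination 125^n*Q*e2 + 125^n*3*2^r*e1
  have hz : (125:ℝ)^n * (b * 5^s * Q - 3*2^r*P) = ((b*5^s*zQ - 3*2^r*zP : ℤ):ℝ) := by
    push_cast; rw [← hzQ, ← hzP]; ring
  rw [hz] at key
  set z : ℤ := b*5^s*zQ - 3*2^r*zP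
  have hpos2 : 0 < (125:ℝ)^n * (3*2^r) * R := by positivity
  have hpos3 : 0 < (125:ℝ)^n * Q * o := by positivity
  have hz1 : (z:ℝ) < 0 := by
    have : (z:ℝ) * 125^m < 0 := by rw [key]; nlinarith
    by_contra hc
    push Not at hc
    nlinarith
  have hz2 : (-1:ℝ) < z := by
    have : (-1) * 125^m < (z:ℝ) * 125^m := by rw [key]; nlinarith
    exact lt_of_mul_lt_mul_right this h125.le
  have hz1' : z < 0 := by exact_mod_cast hz1
  have hz2' : -1 < z := by exact_mod_cast hz2
  omega


theorem num1 (m s r b : ℕ) (o : ℝ) (hm : 50 ≤ m) (hr : r ≤ 6) (ho : 0 < o) (ho2 : o ≤ 300*m)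
    (h : (b:ℝ) * 5^(3*m+s) = 3*2^(7*m+r) - o) : False := by
  obtain ⟨q, e, he, rfl⟩ : ∃ q e, e < 4 ∧ m = 4*q+e := ⟨m/4, m%4, Nat.mod_lt _ (by norm_num), by omega⟩
  have hq : 12 ≤ q := by omega
  obtain ⟨t, rfl⟩ : ∃ t, q = 12 + t := ⟨q-12, by omega⟩
  set q := 12+t with hqd
  have e2r : (2:ℝ)^r ≤ 64 := by
    calc (2:ℝ)^r ≤ 2^6 := pow_le_pow_right₀ (by norm_num) hr
      _ = 64 := by norm_num
  have gen : ∀ a b c d f w : ℝ, a^(2*q+1)*w*(b^(6*q+4)*c^(4*q+3)*d^(4*q+3)*f^(2*q+1))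
      = (a^2*b^6*c^4*d^4*f^2)^q*(a*w*b^4*c^3*d^3*f) := by intros; ring
  have gen2 : ∀ a b c d : ℝ, a^(2*q+1)*(b^(2*q+1)*c^(2*q+1)*d^(6*q+4)) = (a^2*b^2*c^2*d^6)^q*(a*b*c*d^4) := by
    intros; ring
  refine pade_ineq (2*q+1) (4*q+e) s r b o ho ⟨q, rfl⟩ (by omega) h ?_ ?_
  · calc
      _ ≤ (125:ℝ)^(2*q+1) * (3*64) * ((37/17)^(6*q+4) * (17/20)^(2*(2*q+1)+1) * (3/125)^(2*(2*q+1)+1) * (128/125)^(2*q+1)) := by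
        have p1 : (37/17:ℝ)^(4*q+e+(2*q+1)) ≤ (37/17)^(6*q+4) := pow_le_pow_right₀ (by norm_num) (by omega)
        have p2 : (128/125:ℝ)^(4*q+e-(2*q+1)-1) ≤ (128/125)^(2*q+1) := pow_le_pow_right₀ (by norm_num) (by omega)
        gcongr
      _ = (125^2*(37/17)^6*(17/20)^4*(3/125)^4*(128/125)^2)^q*(125*(3*64)*(37/17)^4*(17/20)^3*(3/125)^3*(128/125)) := by
        rw [show 2*(2*q+1)+1 = 4*q+3 by ring, gen]
      _ ≤ (1/2)^q*100 := by
        gcongr <;> norm_num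
      _ < 1/2 := by
        rw [hqd, pow_add]
        have : ((1:ℝ)/2)^t ≤ 1 := pow_le_one₀ (by norm_num) (by norm_num)
        norm_num at *; linarith
  · have hu : ((4*q+e:ℕ):ℝ) ≤ 64 * 2^t := by
      have h1 : t < 2^t := Nat.lt_two_pow_self
      have h2 : 4*q+e ≤ 64*2^t := by omega
      exact_mod_cast h2
    have h125 : (125:ℝ)^(4*q) ≤ 125^(4*q+e) := pow_le_pow_right₀ (by norm_num) (by omega)
    have e125 : (125:ℝ)^(4*q) = 244140625^12 * 244140625^t := by
      rw [pow_mul, hqd, pow_add]; norm_num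
    calc
      _ ≤ (125:ℝ)^(2*q+1) * (4^(2*q+1) * (128/125)^(2*q+1) * (253/250)^(6*q+4)) * (300*(64*2^t)) := by
        have p1 : (253/250:ℝ)^(4*q+e+(2*q+1)) ≤ (253/250)^(6*q+4) := pow_le_pow_right₀ (by norm_num) (by omega)
        have p2 : o ≤ 300*(64*2^t) := by linarith
        gcongr
      _ = (125^2*4^2*(128/125)^2*(253/250)^6)^q*(125*4*(128/125)*(253/250)^4) * (300*(64*2^t)) := by
        rw [gen2]
      _ ≤ 300000^q*1000* (300*(64*2^t)) := by gcongr <;> norm_num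
      _ = 300000^12*1000*300*64*(600000)^t := by
        rw [hqd, pow_add]
        have : (600000:ℝ)^t = 300000^t*2^t := by rw [← mul_pow]; norm_num
        rw [this]; ring
      _ ≤ 300000^12*1000*300*64*244140625^t := by gcongr; norm_num
      _ < 1/2 * (244140625^12 * 244140625^t) := by
        have : (0:ℝ) < 244140625^t := by positivity
        rw [← mul_assoc]
        apply mul_lt_mul_of_pos_right _ this
        norm_num
      _ ≤ 1/2 * 125^(4*q+e) := by rw [← e125]; gcongr

theorem num2 (m s r b : ℕ) (o : ℝ) (hm : 324 ≤ m) (hr : r ≤ 6) (ho : 0 < o)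
    (ho2 : o^2 ≤ 2^(7*m) * (270848*(m:ℝ)^2))
    (h : (b:ℝ) * 5^(3*m+s) = 3*2^(7*m+r) - o) : False := by
  obtain ⟨u, v, hv, rfl⟩ : ∃ u v, v < 27 ∧ m = 27*u+v := ⟨m/27, m%27, Nat.mod_lt _ (by norm_num), by omega⟩
  obtain ⟨t, rfl⟩ : ∃ t, u = 12 + t := ⟨u-12, by omega⟩
  set u := 12+t with hud
  obtain ⟨w, hw⟩ : ∃ w, w = 5*v/27 := ⟨_, rfl⟩
  have e2r : (2:ℝ)^r ≤ 64 := by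
    calc (2:ℝ)^r ≤ 2^6 := pow_le_pow_right₀ (by norm_num) hr
      _ = 64 := by norm_num
  have gen : ∀ a b c d f g : ℝ, a^(10*u+2*w+1)*g*(b^(37*u+v+2*w+1)*c^(20*u+4*w+3)*d^(20*u+4*w+3)*f^(17*u+v))
      = (a^10*b^37*c^20*d^20*f^17)^u*((a*b*c^2*d^2)^(2*w)*(b*f)^v*(a*g*b*c^3*d^3)) := by intros; ring
  have gen2 : ∀ a b c d f : ℝ, (a^(10*u+2*w+1)*(b^(10*u+2*w+1)*c^(10*u+2*w+1)*d^(37*u+v+2*w+1)))^2*f^(27*u+v)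
      = ((a*b*c)^20*d^74*f^27)^u*((a*b*c*d)^(4*w)*(d^2*f)^v*(a*b*c*d)^2) := by
    intros; ring
  refine pade_ineq (10*u+2*w+1) (27*u+v) s r b o ho ⟨5*u+w, by ring⟩ (by omega) h ?_ ?_
  · calc
      _ ≤ (125:ℝ)^(10*u+2*w+1) * (3*64) * ((37/17)^(37*u+v+2*w+1) * (17/20)^(20*u+4*w+3) * (3/125)^(20*u+4*w+3) * (128/125)^(17*u+v)) := by
        rw [show 2*(10*u+2*w+1)+1 = 20*u+4*w+3 by ring, show 27*u+v+(10*u+2*w+1) = 37*u+v+2*w+1 by ring]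
        have p2 : (128/125:ℝ)^(27*u+v-(10*u+2*w+1)-1) ≤ (128/125)^(17*u+v) := pow_le_pow_right₀ (by norm_num) (by omega)
        gcongr
      _ = (125^10*(37/17)^37*(17/20)^20*(3/125)^20*(128/125)^17)^u*((125*(37/17)*(17/20)^2*(3/125)^2)^(2*w)*((37/17)*(128/125))^v*(125*(3*64)*(37/17)*(17/20)^3*(3/125)^3)) := by
        rw [gen]
      _ ≤ (69/100)^u*40 := by
        gcongr
        · norm_num
        · subst hw; interval_cases v <;> norm_num
      _ < 1/2 := by
        rw [hud, pow_add]
        have : ((69:ℝ)/100)^t ≤ 1 := pow_le_one₀ (by norm_num) (by norm_num)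
        norm_num at *; linarith
  · have hu : ((27*u+v:ℕ):ℝ)^2 ≤ 351^2 * (6/5)^t := by
      have h1 : ((27*u+v:ℕ):ℝ) ≤ 27*(t+13) := by
        have : 27*u+v ≤ 27*(t+13) := by omega
        exact_mod_cast this
      have h2 : ∀ t : ℕ, ((t:ℝ)+13)^2 ≤ 169*(6/5)^t := by
        intro t
        induction t with
        | zero => norm_num
        | succ t ih => push_cast; rw [pow_succ (6/5:ℝ)]; nlinarith [(Nat.cast_nonneg t : (0:ℝ) ≤ t)]
      calc ((27*u+v:ℕ):ℝ)^2 ≤ (27*((t:ℝ)+13))^2 := by gcongr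
        _ = 27^2*((t:ℝ)+13)^2 := by ring
        _ ≤ 27^2*(169*(6/5)^t) := by gcongr; exact h2 t
        _ = _ := by ring
    set Y := (125:ℝ)^(10*u+2*w+1) * (4^(10*u+2*w+1) * (128/125)^(10*u+2*w+1) * (253/250)^(27*u+v+(10*u+2*w+1))) with hY
    have hYp : 0 < Y := by positivity
    have hsq : (Y*o)^2 < (1/2*125^(27*u+v))^2 := by
      have h0 : (0:ℝ) < 15625^(27*u+v) := by positivity
      have e1 : (1/2*(125:ℝ)^(27*u+v))^2 = 1/4*15625^(27*u+v) := by
        rw [mul_pow, ← pow_mul, mul_comm (27*u+v) 2, pow_mul]; norm_num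
      have e2 : Y^2*(128/15625)^(27*u+v) ≤ (1/50)^u*400000 := by
        rw [hY, show 27*u+v+(10*u+2*w+1) = 37*u+v+2*w+1 by ring, gen2]
        gcongr
        · norm_num
        · subst hw; interval_cases v <;> norm_num
      rw [e1]
      calc (Y*o)^2 = Y^2*o^2 := by ring
        _ ≤ Y^2*(2^(7*(27*u+v)) * (270848*((27*u+v:ℕ):ℝ)^2)) := by gcongr
        _ = (Y^2*(128/15625)^(27*u+v)) * (270848*((27*u+v:ℕ):ℝ)^2) * 15625^(27*u+v) := by
          rw [pow_mul, div_pow]; norm_num; field_simp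
        _ ≤ ((1/50)^u*400000) * (270848*(351^2 * (6/5)^t)) * 15625^(27*u+v) := by gcongr
        _ = (1/50)^12*400000*270848*351^2*(6/250)^t * 15625^(27*u+v) := by
          rw [hud, pow_add]
          have : (6/250:ℝ)^t = (1/50)^t*(6/5)^t := by rw [← mul_pow]; norm_num
          rw [this]; ring
        _ < 1/4 * 15625^(27*u+v) := by
          apply mul_lt_mul_of_pos_right _ h0
          have : ((6:ℝ)/250)^t ≤ 1 := pow_le_one₀ (by norm_num) (by norm_num)
          norm_num at *; linarith
    exact lt_of_pow_lt_pow_left₀ 2 (by positivity) hsq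


def chkI (A B c : ℕ) : ℕ → ℕ → Bool
  | 0, _ => true
  | t+1, i => Bool.and (Bool.not (Nat.beq ((A + (3*i*i+29*i+62)) % 244140625) ((B*(c+3*i)) % 244140625))) (chkI A B c t (i+1))

def chkK : ℕ → ℕ → Bool
  | 0, _ => true
  | t+1, k => Bool.and (chkI (6*2^(2*k+2) % 244140625) (2^(k+2) % 244140625) (3*k+16) 60 (59*(2*k-110)/137)) (chkK t (k+1))

set_option maxRecDepth 100000 in
theorem chkK_true : chkK 749 451 = true := by decide +kernel

theorem chkI_sound (A B c : ℕ) : ∀ t i, chkI A B c t i = true → ∀ j, i ≤ j → j < i + t →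
    (A + (3*j*j+29*j+62)) % 244140625 ≠ (B*(c+3*j)) % 244140625 := by
  intro t
  induction t with
  | zero => intro i _ j h1 h2; omega
  | succ t ih =>
    intro i h j h1 h2
    rw [chkI] at h
    have h3 := Bool.and_eq_true_iff.1 h
    rcases Nat.eq_or_lt_of_le h1 with rfl | h4
    · intro he
      have := h3.1
      rw [he] at this
      simp at this
    · exact ih (i+1) h3.2 j h4 (by omega)

theorem chkK_sound : ∀ t k, chkK t k = true → ∀ k', k ≤ k' → k' < k + t →
    ∀ j, 59*(2*k'-110)/137 ≤ j → j < 59*(2*k'-110)/137 + 60 →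
    (6*2^(2*k'+2) % 244140625 + (3*j*j+29*j+62)) % 244140625 ≠ ((2^(k'+2) % 244140625)*((3*k'+16)+3*j)) % 244140625 := by
  intro t
  induction t with
  | zero => intro i _ j h1 h2; omega
  | succ t ih =>
    intro k h k' h1 h2
    rw [chkK] at h
    have h3 := Bool.and_eq_true_iff.1 h
    rcases Nat.eq_or_lt_of_le h1 with rfl | h4
    · exact chkI_sound _ _ _ _ _ h3.1
    · exact ih (k+1) h3.2 k' h4 (by omega)

theorem chk_final (k i : ℕ) (h1 : 451 ≤ k) (h2 : k < 1200) (h3 : 59*(2*k-110)/137 ≤ i)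
    (h4 : i < 59*(2*k-110)/137 + 60) :
    ¬ (244140625:ℤ) ∣ 6*2^(2*k+2) - 2^(k+2)*(3*k+3*i+16) + (3*i^2+29*i+62) := by
  intro h
  apply chkK_sound 749 451 chkK_true k h1 (by omega) i h3 h4
  have : (6*2^(2*k+2) + (3*i*i+29*i+62)) ≡ (2^(k+2)*((3*k+16)+3*i)) [MOD 244140625] := by
    apply Nat.ModEq.symm
    rw [Nat.modEq_iff_dvd]
    push_cast
    convert h using 1; ring
  calc _ = (6*2^(2*k+2) + (3*i*i+29*i+62)) % 244140625 := by rw [Nat.mod_add_mod]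
    _ = _ := this
    _ = _ := by rw [Nat.mod_mul_mod]


theorem size_lo (k n d : ℕ) (b : ℤ) (hk : 450 < k) (hn : 5 < n) (hb : b ≤ 9)
    (hL : lucasL k n = b * 10^d) : 3*n < 10*d+13 := by
  obtain ⟨a, h1, h2, h3⟩ := exists_alpha k hk
  have hA := approx_L k hk a h1 h2 h3 n
  have hg := (gG_bounds k hk a h1 h2).1
  have ha := alpha_ge k hk a h1
  have hb' : (b:ℝ) ≤ 9 := by exact_mod_cast hb
  rw [hL] at hA
  push_cast at hA
  have h4 := (abs_le.1 hA).1
  obtain ⟨p, rfl⟩ : ∃ p, n = p + 6 := ⟨n-6, by omega⟩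
  have hp : (1:ℝ) ≤ a^p := one_le_pow₀ (by linarith)
  have h5 : (6:ℝ) ≤ a^5 := by
    calc (6:ℝ) ≤ 1.997^5 := by norm_num
      _ ≤ a^5 := by gcongr
  have h6 : 6 ≤ a^(p+5) := by rw [pow_add]; nlinarith
  have h7 : a^(p+5) < 10^(d+1) := by
    have e : a^(p+6) = a^(p+5)*a := pow_succ _ _
    have h8 : 1.39*a^(p+5) ≤ gG k a * a^(p+6) := by
      rw [e]
      calc 1.39*a^(p+5) ≤ (7/10*1.997)*a^(p+5) := by gcongr; norm_num
        _ ≤ gG k a * a * a^(p+5) := by gcongr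
        _ = _ := by ring
    have h9 : (0:ℝ) < 10^d := by positivity
    have h10 : (b:ℝ)*10^d ≤ 9*10^d := by gcongr
    have h11 : (1:ℝ) ≤ 10^d := one_le_pow₀ (by norm_num)
    rw [pow_succ (10:ℝ)]
    nlinarith
  by_contra hcon
  have h12 : 10*(d+1) ≤ 3*(p+5) := by omega
  have h13 : ((10:ℝ)^(d+1))^10 ≤ (a^(p+5))^10 := by
    calc ((10:ℝ)^(d+1))^10 = 10^(10*(d+1)) := by rw [← pow_mul, mul_comm]
      _ ≤ 10^(3*(p+5)) := pow_le_pow_right₀ (by norm_num) h12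
      _ = 1000^(p+5) := by rw [pow_mul]; norm_num
      _ ≤ (1.997^10)^(p+5) := by gcongr; norm_num
      _ ≤ (a^10)^(p+5) := by gcongr
      _ = _ := by rw [← pow_mul, ← pow_mul, mul_comm]
  have : (a^(p+5))^10 < ((10:ℝ)^(d+1))^10 := by gcongr
  linarith

theorem i_le_d (b : ℤ) (i d : ℕ) (X : ℤ) (hb1 : 1 ≤ b) (hb : b ≤ 9) (h : b*10^d = 2^i*X) : i ≤ d+3 := by
  by_contra hc
  have h1 : (2:ℤ)^(d+4) ∣ b*10^d := by
    rw [h]; exact Dvd.dvd.mul_right (pow_dvd_pow _ (by omega)) _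
  have e : b*(10:ℤ)^d = 2^d*(b*5^d) := by
    rw [show (10:ℤ) = 2*5 by norm_num, mul_pow]; ring
  rw [e, pow_add] at h1
  have h2 : (2:ℤ)^4 ∣ b*5^d := (mul_dvd_mul_iff_left (by positivity)).1 h1
  have h3 : IsCoprime ((2:ℤ)^4) (5^d) := IsCoprime.pow (by norm_num)
  have h4 := h3.dvd_of_dvd_mul_right h2
  have := Int.le_of_dvd (by omega) h4
  omega

theorem three_d (d m K b : ℕ) (o : ℝ) (hb : b ≤ 9) (hK : 7*m ≤ K) (hm : 1 ≤ m) (ho : o ≤ 2^(7*m))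
    (h : (b:ℝ)*5^d = 3*2^K-o) : 3*m ≤ d := by
  by_contra hc
  obtain ⟨t, rfl⟩ : ∃ t, m = t+1 := ⟨m-1, by omega⟩
  have h1 : (5:ℝ)^d ≤ 5^(3*t+2) := pow_le_pow_right₀ (by norm_num) (by omega)
  have h2 : (5:ℝ)^(3*t+2) = 25*125^t := by rw [pow_add, pow_mul]; norm_num; ring
  have h3 : (2:ℝ)^(7*(t+1)) = 128*128^t := by rw [mul_add, pow_add, pow_mul]; norm_num; ring
  have h4 : (2:ℝ)^(7*(t+1)) ≤ 2^K := pow_le_pow_right₀ (by norm_num) hK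
  have h5 : (125:ℝ)^t ≤ 128^t := by gcongr; norm_num
  have h6 : (0:ℝ) < 125^t := by positivity
  have h7 : (b:ℝ) ≤ 9 := by exact_mod_cast hb
  have h8 : (b:ℝ)*5^d ≤ 9*5^d := by gcongr
  linarith

theorem caseM1 (k i d b : ℕ) (hk : 450 < k) (hb1 : 1 ≤ b) (hb : b ≤ 9) (hi : i+2 ≤ k)
    (hd : d ≤ i + k/10) (h : (b:ℤ)*10^d = 2^i*(3*2^(k+1)-(3*i+13))) : False := by
  have hid := i_le_d b i d _ (by exact_mod_cast hb1) (by exact_mod_cast hb) h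
  obtain ⟨K, hK⟩ : ∃ K, K = k+1+i-d := ⟨_, rfl⟩
  have hKd : K + d = k+1+i := by omega
  obtain ⟨m, r, hr, hm⟩ : ∃ m r, r < 7 ∧ K = 7*m+r := ⟨K/7, K%7, Nat.mod_lt _ (by norm_num), by omega⟩
  set o : ℝ := 2^i/2^d*(3*i+13) with ho
  have hop : 0 < o := by positivity
  have h2 : (2:ℝ)^i/2^d ≤ 8 := by
    rw [div_le_iff₀ (by positivity)]
    calc (2:ℝ)^i ≤ 2^(d+3) := pow_le_pow_right₀ (by norm_num) hid
      _ = 8*2^d := by rw [pow_add]; norm_num; ring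
  have h3 : o ≤ 300*m := by
    calc o ≤ 8*(3*i+13) := by rw [ho]; gcongr
      _ ≤ 300*m := by
        have : 8*(3*i+13) ≤ 300*m := by omega
        exact_mod_cast this
  have h4 : (b:ℝ)*5^d = 3*2^K - o := by
    have h5 : (b:ℝ)*10^d = 2^i*(3*2^(k+1)-(3*i+13)) := by exact_mod_cast h
    have h6 : (10:ℝ)^d = 2^d*5^d := by rw [← mul_pow]; norm_num
    have h7 : (2:ℝ)^K*2^d = 2^(k+1)*2^i := by rw [← pow_add, hKd, pow_add]
    have h8 : (2:ℝ)^d ≠ 0 := by positivity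
    rw [h6] at h5
    rw [ho]
    field_simp
    linear_combination h5 - 3*h7
  have hm50 : 50 ≤ m := by omega
  have h9 : 3*m ≤ d := by
    apply three_d d m K b o hb (by omega) (by omega) _ h4
    have h10 : ∀ m : ℕ, 5 ≤ m → 300*m ≤ 2^(7*m) := by
      intro m hm
      induction m, hm using Nat.le_induction with
      | base => norm_num
      | succ m hm ih => rw [Nat.mul_succ _ m, Nat.mul_succ _ m, pow_add]; norm_num; omega
    have h11 : (300*m:ℝ) ≤ 2^(7*m) := by exact_mod_cast h10 m (by omega)
    linarith
  obtain ⟨s, rfl⟩ : ∃ s, d = 3*m+s := ⟨d-3*m, by omega⟩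
  rw [hm] at h4
  exact num1 m s r b o hm50 (by omega) hop h3 h4

theorem caseM2 (k i d b : ℕ) (hk : 1200 ≤ k) (hb1 : 1 ≤ b) (hb : b ≤ 9) (hi : i+2 ≤ k)
    (hd : d ≤ i + k/10) (hid : i ≤ d+3) (h : 2*((b:ℤ)*10^d) = 2^i*(6*2^(2*k+2) - 2^(k+2)*(3*k+3*i+16)+(3*i^2+29*i+62))) : False := by
  obtain ⟨K, hK⟩ : ∃ K, K = 2*k+2+i-d := ⟨_, rfl⟩
  have hKd : K + d = 2*k+2+i := by omega
  obtain ⟨m, r, hr, hm⟩ : ∃ m r, r < 7 ∧ K = 7*m+r := ⟨K/7, K%7, Nat.mod_lt _ (by norm_num), by omega⟩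
  set o : ℝ := 2^i/2^d*(2^(k+1)*(3*k+3*i+16)-(3*i^2+29*i+62)/2) with ho
  have hik : (i:ℝ) ≤ k := by exact_mod_cast (by omega : i ≤ k)
  have hi0 : (0:ℝ) ≤ i := Nat.cast_nonneg _
  have hop : 0 < o := by
    rw [ho]
    apply mul_pos (by positivity)
    have h1 : (k:ℝ) + 16 ≤ 2^(k+1) := by
      have h2 : ∀ m : ℕ, 50 ≤ m → m + 16 ≤ 2^(m+1) := by
        intro m hm
        induction m, hm using Nat.le_induction with
        | base => norm_num
        | succ m hm ih => rw [pow_succ]; omega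
      exact_mod_cast h2 k (by omega)
    nlinarith
  have h2 : (2:ℝ)^i/2^d ≤ 8 := by
    rw [div_le_iff₀ (by positivity)]
    calc (2:ℝ)^i ≤ 2^(d+3) := pow_le_pow_right₀ (by norm_num) hid
      _ = 8*2^d := by rw [pow_add]; norm_num; ring
  have h7 : (2:ℝ)^K*2^d = 2^(2*k+2)*2^i := by rw [← pow_add, hKd, pow_add]
  have hm3 : 324 ≤ m := by omega
  have h3 : o^2 ≤ 2^(7*m)*(270848*(m:ℝ)^2) := by
    have h30 : 3*(k:ℝ)+3*i+16 ≤ 23*m := by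
      have : 3*k+3*i+16 ≤ 23*m := by omega
      exact_mod_cast this
    calc o^2 ≤ (2^i/2^d*(2^(k+1)*(23*(m:ℝ))))^2 := by
          gcongr
          rw [ho]
          gcongr
          have : 2^(k+1)*(3*(k:ℝ)+3*i+16) ≤ 2^(k+1)*(23*m) := by gcongr
          have h31 : (0:ℝ) ≤ (3*i^2+29*i+62)/2 := by positivity
          linarith
      _ = (2^i/2^d)*((2^(2*k+2)*2^i)/2^d)*(529*(m:ℝ)^2) := by
          rw [show 2*k+2 = (k+1)+(k+1) by ring, pow_add]; ring
      _ ≤ 8*2^K*(529*(m:ℝ)^2) := by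
          rw [← h7, mul_div_cancel_right₀ _ (by positivity)]; gcongr
      _ ≤ 8*(2^(7*m)*64)*(529*(m:ℝ)^2) := by
          gcongr
          rw [hm, pow_add]
          gcongr
          calc (2:ℝ)^r ≤ 2^6 := pow_le_pow_right₀ (by norm_num) (by omega)
            _ = 64 := by norm_num
      _ = _ := by ring
  have h4 : (b:ℝ)*5^d = 3*2^K - o := by
    have h5 : 2*((b:ℝ)*10^d) = 2^i*(6*2^(2*k+2) - 2^(k+2)*(3*k+3*i+16)+(3*i^2+29*i+62)) := by exact_mod_cast h
    have h6 : (10:ℝ)^d = 2^d*5^d := by rw [← mul_pow]; norm_num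
    have h8 : (2:ℝ)^d ≠ 0 := by positivity
    rw [h6, show k+2 = (k+1)+1 by ring, pow_succ] at h5
    rw [ho]
    field_simp
    linear_combination h5 - 6*h7
  have h9 : 3*m ≤ d := by
    apply three_d d m K b o hb (by omega) (by omega) _ h4
    have h10 : ∀ m : ℕ, 5 ≤ m → 600*m ≤ 2^(3*m) := by
      intro m hm
      induction m, hm using Nat.le_induction with
      | base => norm_num
      | succ m hm ih => rw [Nat.mul_succ _ m, Nat.mul_succ _ m, pow_add]; norm_num; omega
    have h11 : (600*m:ℝ) ≤ 2^(3*m) := by exact_mod_cast h10 m (by omega)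
    apply (pow_le_pow_iff_left₀ hop.le (by positivity) two_ne_zero).1
    calc o^2 ≤ _ := h3
      _ ≤ 2^(7*m)*(600*m)^2 := by gcongr; nlinarith
      _ ≤ 2^(7*m)*(2^(3*m))^2 := by gcongr
      _ = 2^(13*m) := by rw [← pow_mul, ← pow_add]; ring_nf
      _ ≤ 2^(14*m) := pow_le_pow_right₀ (by norm_num) (by omega)
      _ = _ := by rw [← pow_mul]; ring_nf
  obtain ⟨s, rfl⟩ : ∃ s, d = 3*m+s := ⟨d-3*m, by omega⟩
  rw [hm] at h4
  exact num2 m s r b o hm3 (by omega) hop h3 h4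

theorem caseM2s (k i d b : ℕ) (hk : 451 ≤ k) (hk2 : k < 1200) (hb1 : 1 ≤ b) (hb : b ≤ 9) (hi : i+2 ≤ k)
    (hsz : 12 ≤ d) (hd : i ≤ d → 2^(d-i) ≤ 8*(k+2)^3) (hid : i ≤ d+3)
    (h : 2*((b:ℤ)*10^d) = 2^i*(6*2^(2*k+2) - 2^(k+2)*(3*k+3*i+16)+(3*i^2+29*i+62))) : False := by
  have hd2 : d ≤ i+33 := by
    rcases le_or_gt i d with h1 | h1
    · have h2 := hd h1
      have h3 : 8*(k+2)^3 < 2^34 := by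
        calc 8*(k+2)^3 ≤ 8*1201^3 := by gcongr; omega
          _ < 2^34 := by norm_num
      have h4 := (Nat.pow_lt_pow_iff_right (by norm_num : 1 < 2)).1 (lt_of_le_of_lt h2 h3)
      omega
    · omega
  have hpos : (3*k+3*i+16:ℝ) ≤ 2^(k+1) := by
    have h2 : ∀ m : ℕ, 50 ≤ m → 6*m + 16 ≤ 2^(m+1) := by
      intro m hm
      induction m, hm using Nat.le_induction with
      | base => norm_num
      | succ m hm ih => rw [pow_succ]; omega
    have := h2 k (by omega)
    exact_mod_cast (by omega : 3*k+3*i+16 ≤ 2^(k+1))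
  have hR : 2*((b:ℝ)*10^d) = 2^i*(6*2^(2*k+2) - 2^(k+2)*(3*k+3*i+16)+(3*i^2+29*i+62)) := by exact_mod_cast h
  have hi0 : (0:ℝ) ≤ i := Nat.cast_nonneg _
  have hik : (i:ℝ) ≤ k := by exact_mod_cast (by omega : i ≤ k)
  have e22 : (2:ℝ)^(2*k+2) = 2^(k+1)*2^(k+1) := by rw [← pow_add]; ring_nf
  have e21 : (2:ℝ)^(k+2) = 2*2^(k+1) := by rw [pow_succ]; ring
  have hp : (0:ℝ) < 2^(k+1) := by positivity
  have lo : 2^i*(2*2^(2*k+2)) ≤ (b:ℝ)*10^d := by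
    have : 2^(k+2)*(3*k+3*i+16:ℝ) ≤ 2*2^(2*k+2) := by rw [e21, e22]; nlinarith
    have h3 : 2^i*(4*2^(2*k+2):ℝ) ≤ 2*((b:ℝ)*10^d) := by
      rw [hR]; gcongr
      have : (0:ℝ) ≤ 3*i^2+29*i+62 := by positivity
      nlinarith
    linarith
  have up : (b:ℝ)*10^d ≤ 2^i*(3*2^(2*k+2)) := by
    have : (3*i^2+29*i+62:ℝ) ≤ 2^(k+2)*(3*k+3*i+16:ℝ) := by rw [e21]; nlinarith
    have h3 : 2*((b:ℝ)*10^d) ≤ 2^i*(6*2^(2*k+2)) := by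
      rw [hR]; gcongr
      linarith
    linarith
  have e10 : ∀ t : ℕ, (10:ℝ)^t = 2^t*5^t := by intro t; rw [← mul_pow]; norm_num
  have hb9 : (b:ℝ) ≤ 9 := by exact_mod_cast hb
  have hb1' : (1:ℝ) ≤ b := by exact_mod_cast hb1
  have w1 : (2:ℝ)^(2*k) < 5^i*2^110 := by
    have h1 : (b:ℝ)*10^d ≤ 9*10^(i+33) := by
      gcongr; norm_num
    have h2 : (2:ℝ)^i*(2*2^(2*k+2)) ≤ 2^i*(5^i*(9*10^33)) := by
      calc _ ≤ _ := lo
        _ ≤ _ := h1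
        _ = _ := by rw [pow_add, e10 i]; ring
    have h3 := le_of_mul_le_mul_left h2 (by positivity)
    rw [pow_add] at h3
    have h4 : (0:ℝ) < 5^i := by positivity
    have h5 : (5:ℝ)^i*(9*10^33) < 5^i*(2^110*2^3) := mul_lt_mul_of_pos_left (by norm_num) h4
    linarith
  have w2 : (5:ℝ)^i ≤ 2^(2*k+14) := by
    have h1 : (10:ℝ)^i ≤ 10^(d+3) := pow_le_pow_right₀ (by norm_num) hid
    have h2 : (2:ℝ)^i*5^i ≤ 2^i*(3000*2^(2*k+2)) := by
      rw [← e10]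
      calc _ ≤ _ := h1
        _ = 1000*(1*10^d) := by rw [pow_add]; ring
        _ ≤ 1000*(b*10^d) := by gcongr
        _ ≤ _ := by linarith
    have h3 := le_of_mul_le_mul_left h2 (by positivity)
    have : (2:ℝ)^(2*k+14) = 4096*2^(2*k+2) := by rw [show 2*k+14 = 12+(2*k+2) by ring, pow_add]; norm_num
    rw [this]
    have : (0:ℝ) < 2^(2*k+2) := by positivity
    linarith
  have v1 : 59*(2*k) < 137*i+59*110 := by
    have h1 : (2:ℝ)^(59*(2*k)) < 2^(137*i+59*110) := by
      calc (2:ℝ)^(59*(2*k)) = (2^(2*k))^59 := by rw [← pow_mul]; ring_nf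
        _ < (5^i*2^110)^59 := by gcongr
        _ = (5^59)^i*2^(59*110) := by rw [mul_pow, ← pow_mul, ← pow_mul, ← pow_mul]; ring_nf
        _ ≤ (2^137)^i*2^(59*110) := by gcongr; norm_num
        _ = _ := by rw [← pow_mul, ← pow_add]
    exact (pow_lt_pow_iff_right₀ (by norm_num)).1 h1
  have v2 : 65*i ≤ 28*(2*k+14) := by
    have h1 : (2:ℝ)^(65*i) ≤ 2^(28*(2*k+14)) := by
      calc (2:ℝ)^(65*i) = (2^65)^i := by rw [← pow_mul]
        _ ≤ (5^28)^i := by gcongr; norm_num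
        _ = (5^i)^28 := by rw [← pow_mul, ← pow_mul]; ring_nf
        _ ≤ (2^(2*k+14))^28 := by gcongr
        _ = _ := by rw [← pow_mul]; ring_nf
    exact (pow_le_pow_iff_right₀ (by norm_num)).1 h1
  apply chk_final k i hk hk2 (by omega) (by omega)
  have h1 : (244140625:ℤ) ∣ 2^i*(6*2^(2*k+2) - 2^(k+2)*(3*k+3*i+16)+(3*i^2+29*i+62)) := by
    rw [← h]
    apply Dvd.dvd.mul_left
    apply Dvd.dvd.mul_left
    obtain ⟨t, rfl⟩ : ∃ t, d = 12 + t := ⟨d-12, by omega⟩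
    rw [pow_add]
    exact Dvd.dvd.mul_right (by norm_num) _
  have h2 : IsCoprime (244140625:ℤ) (2^i) := IsCoprime.pow_right (by norm_num)
  exact h2.dvd_of_dvd_mul_left h1


theorem pow_cube_lt (t : ℕ) (ht : 45 ≤ t) : 8*(10*t+14)^3 < 2^(t+1) := by
  induction t, ht using Nat.le_induction with
  | base => norm_num
  | succ t ht ih =>
    rw [pow_succ 2 (t+1)]
    have : 8*(10*(t+1)+14)^3 ≤ 8*(10*t+14)^3*2 := by
      have h : (10*(t+1)+14)^3 ≤ (10*t+14)^3*2 := by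
        obtain ⟨u, rfl⟩ : ∃ u, t = u + 45 := ⟨t-45, by omega⟩
        ring_nf; nlinarith [sq_nonneg u]
      omega
    omega

theorem partII (k n d b : ℕ) (hk : 450 < k) (hn : 5 < n) (hb1 : 1 ≤ b) (hb : b ≤ 9) (hd2 : 2 ≤ d)
    (hL : lucasL k n = (b:ℤ) * 10^d) (hc : 4*(k+n/(k+1))^3 < 2^k) : False := by
  have hsz := size_lo k n d b hk hn (by exact_mod_cast hb) hL
  obtain ⟨M, j, hj, hM, hnn⟩ : ∃ M j, j < k+1 ∧ M = n/(k+1) ∧ n = (k+1)*M+j :=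
    ⟨n/(k+1), n%(k+1), Nat.mod_lt _ (by omega), rfl, by rw [Nat.div_add_mod]⟩
  rw [← hM] at hc
  obtain ⟨c0, c1, c2⟩ := Lcong k (by omega) M
  have hs : ((-1:ℤ)^M = 1 ∨ (-1:ℤ)^M = -1) := neg_one_pow_eq_or ℤ M
  have hd4 : (4:ℤ) ∣ (b:ℤ)*10^d := by
    obtain ⟨t, rfl⟩ : ∃ t, d = 2 + t := ⟨d-2, by omega⟩
    apply Dvd.dvd.mul_left
    rw [pow_add]; exact Dvd.dvd.mul_right (by norm_num) _
  have h2d : (2:ℤ)^d ∣ (b:ℤ)*10^d := by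
    rw [show (10:ℤ) = 2*5 by norm_num, mul_pow]
    exact Dvd.dvd.mul_left (Dvd.dvd.mul_right dvd_rfl _) _
  rcases j with _ | _ | i
  · rw [add_zero] at hnn
    rw [← hnn, hL] at c0
    have h4 : (4:ℤ) ∣ 2^(k-1) := by
      rw [show k-1 = 2+(k-3) by omega, pow_add]; exact Dvd.dvd.mul_right (by norm_num) _
    have := h4.trans c0
    rcases hs with h | h <;> rw [h] at this <;> omega
  · rw [← hnn, hL] at c1
    have h4 : (2:ℤ) ∣ 2^k := dvd_pow_self _ (by omega)
    have := h4.trans c1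
    rcases hs with h | h <;> rw [h] at this <;> omega
  · have hi : i + 2 ≤ k := by omega
    have hc2 := c2 i hi
    rw [show i+1+1 = i+2 by ring] at hnn
    rw [← hnn, hL] at hc2
    have key : ∀ v, v ≤ d → v ≤ k+1+i → i ≤ v → 2^(v-i) ≤ 8*(k+M)^3 := by
      intro v h1 h2 h3
      have h4 : (2:ℤ)^v ∣ (b:ℤ)*10^d := (pow_dvd_pow 2 h1).trans h2d
      have h5 := (pow_dvd_pow 2 h2).trans hc2
      have h6 : (2:ℤ)^v ∣ 2^i*Bf M i := by
        have h7 := (Int.dvd_iff_dvd_of_dvd_sub h5).1 h4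
        rcases hs with h | h <;> rw [h] at h7
        · simpa using h7
        · rw [neg_one_mul] at h7; exact (dvd_neg).1 h7
      rw [show v = i + (v-i) by omega, pow_add] at h6
      have h8 := (mul_dvd_mul_iff_left (by positivity)).1 h6
      refine (Bf_pow M i (v-i) h8).trans ?_
      gcongr
    have hA : d < k+1+i := by
      by_contra h
      have := key (k+1+i) (by omega) le_rfl (by omega)
      rw [show k+1+i-i = k+1 by omega, pow_succ] at this
      omega
    have hM5 : M ≤ 5 := by
      by_contra h
      have : (k+1)*6 ≤ (k+1)*M := Nat.mul_le_mul_left _ (by omega)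
      omega
    have hdi : d ≤ i + k/10 := by
      by_contra h
      have h1 := key d le_rfl (by omega) (by omega)
      have h2 : 2^(k/10+1) ≤ 2^(d-i) := Nat.pow_le_pow_right (by norm_num) (by omega)
      have h3 := pow_cube_lt (k/10) (by omega)
      have h4 : 8*(k+M)^3 ≤ 8*(10*(k/10)+14)^3 :=
        Nat.mul_le_mul_left _ (Nat.pow_le_pow_left (by omega) 3)
      omega
    have hM2 : M ≤ 2 := by
      by_contra h
      have : (k+1)*3 ≤ (k+1)*M := Nat.mul_le_mul_left _ (by omega)
      omega
    have hid : i ≤ d + 3 := by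
      rcases le_or_gt i (k+1+i) with h | h
      · have h5 : (2:ℤ)^i ∣ (b:ℤ)*10^d := by
          have h6 := (pow_dvd_pow (2:ℤ) h).trans hc2
          refine (Int.dvd_iff_dvd_of_dvd_sub h6).2 ?_
          exact Dvd.dvd.mul_left (Dvd.dvd.mul_right dvd_rfl _) _
        obtain ⟨X, hX⟩ := h5
        exact i_le_d b i d X (by exact_mod_cast hb1) (by exact_mod_cast hb) hX
      · omega
    interval_cases M
    · rw [mul_zero, zero_add] at hnn
      rw [hnn, LLz k i (by omega) hi] at hL
      have h5 : (5:ℤ) ∣ 3*2^i := by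
        rw [hL]; apply Dvd.dvd.mul_left
        exact (show (5:ℤ) ∣ 10 by norm_num).trans (dvd_pow_self _ (by omega))
      have h6 : Prime (5:ℤ) := by norm_num
      rcases h6.dvd_mul.1 h5 with h | h
      · norm_num at h
      · have := h6.dvd_of_dvd_pow h
        norm_num at this
    · rw [mul_one] at hnn
      rw [hnn, (Lone k (by omega)).2.2 i hi] at hL
      exact caseM1 k i d b hk hb1 hb hi hdi hL.symm
    · have hT := Ltwo k (by omega) i hi
      rw [← hnn, hL] at hT
      rcases le_or_gt 1200 k with h | h
      · exact caseM2 k i d b h hb1 hb hi hdi hid hT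
      · exact caseM2s k i d b (by omega) h hb1 hb hi (by omega) (fun h => key d le_rfl (by omega) h) hid hT


open Polynomial in
noncomputable def pK (k : ℕ) : ℤ[X] := X^k - ∑ i ∈ Finset.range k, X^i

section
open Polynomial

theorem pK_deg_aux (k : ℕ) : (∑ i ∈ Finset.range k, (X:ℤ[X])^i).degree < k := by
  refine mem_degreeLT.1 (Submodule.sum_mem _ ?_)
  intro i hi
  rw [mem_degreeLT, degree_X_pow]
  exact_mod_cast Finset.mem_range.1 hi

theorem pK_monic (k : ℕ) : (pK k).Monic := monic_X_pow_sub_of_aux k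
where
  monic_X_pow_sub_of_aux (k : ℕ) : (pK k).Monic := by
    unfold pK
    rw [Monic, leadingCoeff_sub_of_degree_lt (by rw [degree_X_pow]; exact pK_deg_aux k)]
    simp

theorem pK_natDegree (k : ℕ) : (pK k).natDegree = k := by
  unfold pK
  rw [natDegree_sub_eq_left_of_natDegree_lt', natDegree_X_pow]
where
  natDegree_sub_eq_left_of_natDegree_lt' {k : ℕ} : (X^k - ∑ i ∈ Finset.range k, (X:ℤ[X])^i).natDegree = (X^k:ℤ[X]).natDegree := by
    apply natDegree_eq_of_degree_eq
    rw [degree_sub_eq_left_of_degree_lt (by rw [degree_X_pow]; exact pK_deg_aux k)]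

theorem pK_aeval {R : Type*} [CommRing R] (k : ℕ) (z : R) :
    aeval z (pK k) = z^k - ∑ i ∈ Finset.range k, z^i := by
  simp [pK]

theorem pK_mul {R : Type*} [CommRing R] (k : ℕ) (z : R) :
    (z-1) * aeval z (pK k) = 1 - z^k*(2-z) := by
  rw [pK_aeval, mul_sub, mul_geom_sum]; ring

theorem real_root_unique (k : ℕ) (hk : 1 ≤ k) (r a : ℝ) (hr : 0 < r) (h : r < a)
    (h1 : aeval r (pK k) = 0) (h2 : aeval a (pK k) = 0) : False := by
  rw [pK_aeval, sub_eq_zero] at h1 h2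
  have h3 : a^k * ∑ i ∈ Finset.range k, r^i = r^k * ∑ i ∈ Finset.range k, a^i := by
    rw [← h1, ← h2, mul_comm]
  rw [Finset.mul_sum, Finset.mul_sum] at h3
  have h4 : ∑ i ∈ Finset.range k, r^k * a^i < ∑ i ∈ Finset.range k, a^k * r^i := by
    apply Finset.sum_lt_sum_of_nonempty
    · simpa using (by omega : k ≠ 0)
    · intro i hi
      have hi := Finset.mem_range.1 hi
      obtain ⟨j, rfl⟩ : ∃ j, k = i + (j+1) := ⟨k-i-1, by omega⟩
      have ha : 0 < a := hr.trans h
      have h5 : r^(j+1) < a^(j+1) := pow_lt_pow_left₀ h hr.le (by omega)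
      calc r^(i+(j+1))*a^i = (r^i*a^i)*r^(j+1) := by ring
        _ < (r^i*a^i)*a^(j+1) := by gcongr
        _ = _ := by ring
  linarith

theorem root_cases (k : ℕ) (hk : 2 ≤ k) (a : ℝ) (ha : 1 < a) (h3 : a^k*(2-a) = 1) (z : ℂ)
    (hz : aeval z (pK k) = 0) : z = a ∨ ‖z‖ ≤ 1 := by
  by_contra hcon
  push Not at hcon
  obtain ⟨hne, hr⟩ := hcon
  have hA : aeval a (pK k) = 0 := by
    have := pK_mul k a
    rw [h3, sub_self] at this
    exact (mul_eq_zero.1 this).resolve_left (by linarith)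
  set r := ‖z‖ with hrd
  have e1 : z^k*(2-z) = 1 := by
    have := pK_mul k z
    rw [hz, mul_zero] at this
    exact (sub_eq_zero.1 this.symm).symm
  have e2 : r^k*‖2-z‖ = 1 := by
    have := congrArg norm e1
    simpa using this
  have hrk : 0 < r^k := by positivity
  have t1 : 2 - r ≤ ‖2-z‖ := by
    have := norm_sub_norm_le (2:ℂ) z
    simpa using this
  have u1 : 1 ≤ r^k*(2-r) := by
    rw [pK_aeval, sub_eq_zero] at hz
    have h5 : r^k ≤ ∑ i ∈ Finset.range k, r^i := by
      calc r^k = ‖z^k‖ := by rw [norm_pow]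
        _ ≤ ∑ i ∈ Finset.range k, ‖z^i‖ := by rw [hz]; exact norm_sum_le _ _
        _ = _ := by simp [hrd]
    have h6 : (r-1)*r^k ≤ (r-1)*∑ i ∈ Finset.range k, r^i := by
      apply mul_le_mul_of_nonneg_left h5; linarith
    rw [mul_geom_sum] at h6
    nlinarith
  have t2 : ‖2-z‖ = 2-r := by nlinarith
  have t3 : z.re = r := by
    have h7 : ‖2-z‖^2 = (2-z.re)^2+z.im^2 := by
      rw [← Complex.normSq_eq_norm_sq, Complex.normSq_apply]; simp; ring
    have h8 : r^2 = z.re^2+z.im^2 := by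
      rw [hrd, ← Complex.normSq_eq_norm_sq, Complex.normSq_apply]; ring
    rw [t2] at h7
    nlinarith
  have t4 : z.im = 0 := by
    have h8 : r^2 = z.re^2+z.im^2 := by
      rw [hrd, ← Complex.normSq_eq_norm_sq, Complex.normSq_apply]; ring
    rw [t3] at h8
    have : z.im^2 = 0 := by linarith
    exact pow_eq_zero_iff (two_ne_zero) |>.1 this
  have t5 : z = (r:ℂ) := by
    apply Complex.ext <;> simp [t3, t4]
  have hR : aeval r (pK k) = 0 := by
    rw [t5] at hz
    have := aeval_algebraMap_apply ℂ r (pK k)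
    rw [Complex.coe_algebraMap, hz] at this
    exact_mod_cast this.symm
  rcases lt_trichotomy r a with h | h | h
  · exact real_root_unique k (by omega) r a (by linarith) h hR hA
  · exact hne (by rw [t5, h])
  · exact real_root_unique k (by omega) a r (by linarith) h hA hR

theorem minpoly_pK (k : ℕ) (hk : 450 < k) (a : ℝ) (h1 : 2 - 1/((k:ℝ)+1) ≤ a) (h2 : a < 2)
    (h3 : a^k*(2-a) = 1) : minpoly ℤ a = pK k := by
  have ha := alpha_ge k hk a h1
  have hA : aeval a (pK k) = 0 := by
    have := pK_mul k a
    rw [h3, sub_self] at this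
    exact (mul_eq_zero.1 this).resolve_left (by linarith)
  have hint : IsIntegral ℤ a := ⟨pK k, pK_monic k, hA⟩
  obtain ⟨g, hg⟩ := minpoly.isIntegrallyClosed_dvd hint hA
  have hgm : g.Monic := (minpoly.monic hint).of_mul_monic_left (hg ▸ pK_monic k)
  have hd : aeval a (derivative (pK k)) ≠ 0 := by
    intro h
    have e : (X-1) * pK k = X^(k+1) - 2*X^k + 1 := by
      unfold pK
      rw [mul_sub, mul_geom_sum]; ring
    have e2 := congrArg (fun p => aeval a (derivative p)) e
    obtain ⟨k', rfl⟩ : ∃ k', k = k'+1 := ⟨k-1, by omega⟩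
    simp only [derivative_mul, derivative_sub, derivative_X, derivative_one, map_add, map_mul, hA, h,
      map_sub, derivative_X_pow, derivative_add, derivative_ofNat, map_pow, aeval_X] at e2
    simp at e2
    have h22 : aeval a (2:ℤ[X]) = (2:ℝ) := map_ofNat _ 2
    rw [h22] at e2
    have := (alpha_den (k'+1) a h1 h2).1
    have h5 : (0:ℝ) < a^k' := by positivity
    push_cast at this
    have h6 : 0 < a^k' * (((k':ℝ)+1+1)*a-2*(k'+1)) := by apply mul_pos h5; linarith
    have : (((k':ℝ)+1+1)*a^(k'+1)-2*((k'+1)*a^k')) = 0 := by linarith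
    rw [pow_succ] at this
    linarith
  have hga : aeval a g ≠ 0 := by
    intro h
    apply hd
    rw [hg, derivative_mul, map_add, map_mul, map_mul, h, minpoly.aeval]; ring
  have hg0 : g.natDegree = 0 := by
    by_contra hne
    set gc := g.map (algebraMap ℤ ℂ) with hgc
    have gcm : gc.Monic := hgm.map _
    have gcs : gc.Splits := IsAlgClosed.splits gc
    have hroot : ∀ z ∈ gc.roots, ‖z‖ ≤ 1 ∧ aeval z (pK k) = 0 := by
      intro z hz
      have hz1 : aeval z g = 0 := by
        have := (mem_roots'.1 hz).2
        rwa [IsRoot, hgc, eval_map_algebraMap] at this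
      have hz2 : aeval z (pK k) = 0 := by rw [hg, map_mul, hz1, mul_zero]
      refine ⟨?_, hz2⟩
      rcases root_cases k (by omega) a (by linarith) h3 z hz2 with h | h
      · exfalso; apply hga
        rw [h] at hz1
        have := aeval_algebraMap_apply ℂ a g
        rw [Complex.coe_algebraMap, hz1] at this
        exact_mod_cast this.symm
      · exact h
    have hc0 : ‖gc.coeff 0‖ = 1 := by
      have e : (pK k).coeff 0 = -1 := by
        have : (pK k).coeff 0 = eval 0 (pK k) := coeff_zero_eq_eval_zero _
        rw [this]
        have := pK_aeval k (0:ℤ)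
        rw [coe_aeval_eq_eval] at this
        obtain ⟨k', rfl⟩ : ∃ k', k = k'+1 := ⟨k-1, by omega⟩
        rw [this, Finset.sum_range_succ']; simp
      rw [hg, mul_coeff_zero] at e
      have hu : IsUnit (g.coeff 0) := by
        apply isUnit_of_mul_isUnit_right (x := (minpoly ℤ a).coeff 0); rw [e]; exact isUnit_one.neg
      rw [hgc, coeff_map]
      rcases Int.isUnit_iff.1 hu with h | h <;> rw [h] <;> simp
    rw [gcs.coeff_zero_eq_prod_roots_of_monic gcm, norm_mul, norm_pow, norm_neg, norm_one, one_pow, one_mul] at hc0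
    have hcard : gc.roots.card ≠ 0 := by
      rw [← gcs.natDegree_eq_card_roots, hgc, hgm.natDegree_map]; exact hne
    obtain ⟨z, hz⟩ := Multiset.card_pos_iff_exists_mem.1 (Nat.pos_of_ne_zero hcard)
    obtain ⟨t, ht⟩ := Multiset.exists_cons_of_mem hz
    have hz1 : ‖z‖ = 1 := by
      have hp : ‖t.prod‖ ≤ 1 := by
        have : ∀ t : Multiset ℂ, (∀ x ∈ t, ‖x‖ ≤ 1) → ‖t.prod‖ ≤ 1 := by
          intro t
          induction t using Multiset.induction with
          | empty => simp
          | cons x t ih =>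
            intro h
            rw [Multiset.prod_cons, norm_mul]
            have := h x (Multiset.mem_cons_self _ _)
            have := ih (fun y hy => h y (Multiset.mem_cons_of_mem hy))
            nlinarith [norm_nonneg x, norm_nonneg t.prod]
        apply this
        intro x hx
        exact (hroot x (by rw [ht]; exact Multiset.mem_cons_of_mem hx)).1
      rw [ht, Multiset.prod_cons, norm_mul] at hc0
      have := (hroot z hz).1
      nlinarith [norm_nonneg z, norm_nonneg t.prod]
    have hz2 := (hroot z hz).2
    have e1 : z^k*(2-z) = 1 := by
      have := pK_mul k z
      rw [hz2, mul_zero] at this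
      exact (sub_eq_zero.1 this.symm).symm
    have e2 : ‖2-z‖ = 1 := by
      have := congrArg norm e1
      simpa [hz1] using this
    have h7 : ‖2-z‖^2 = (2-z.re)^2+z.im^2 := by
      rw [← Complex.normSq_eq_norm_sq, Complex.normSq_apply]; simp; ring
    have h8 : ‖z‖^2 = z.re^2+z.im^2 := by
      rw [← Complex.normSq_eq_norm_sq, Complex.normSq_apply]; ring
    rw [e2] at h7
    rw [hz1] at h8
    have hre : z.re = 1 := by linarith
    have him : z.im = 0 := by
      rw [hre] at h8
      have : z.im^2 = 0 := by linarith
      exact pow_eq_zero_iff (two_ne_zero) |>.1 this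
    have hz3 : z = 1 := by apply Complex.ext <;> simp [hre, him]
    rw [hz3, pK_aeval] at hz2
    simp at hz2
    have : ((1:ℂ)) = (k:ℂ) := by linear_combination hz2
    have : 1 = k := by exact_mod_cast this
    omega
  have hg1 : g = 1 := eq_one_of_monic_natDegree_zero hgm hg0
  rw [hg, hg1, mul_one]

theorem indep_pK (k : ℕ) (hk : 450 < k) (a : ℝ) (h1 : 2 - 1/((k:ℝ)+1) ≤ a) (h2 : a < 2)
    (h3 : a^k*(2-a) = 1) (Q : ℤ[X]) (hQ : Q.degree < k) (h : aeval a Q = 0) : Q = 0 := by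
  have ha := alpha_ge k hk a h1
  have hA : aeval a (pK k) = 0 := by
    have := pK_mul k a
    rw [h3, sub_self] at this
    exact (mul_eq_zero.1 this).resolve_left (by linarith)
  have hint : IsIntegral ℤ a := ⟨pK k, pK_monic k, hA⟩
  have hdvd := minpoly.isIntegrallyClosed_dvd hint h
  rw [minpoly_pK k hk a h1 h2 h3] at hdvd
  by_contra hne
  have := degree_le_of_dvd hdvd hne
  rw [degree_eq_natDegree (pK_monic k).ne_zero, pK_natDegree] at this
  exact absurd hQ (not_lt.2 this)

theorem pK_roots (k : ℕ) (hk : 450 < k) (a : ℝ) (h1 : 2 - 1/((k:ℝ)+1) ≤ a) (h2 : a < 2)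
    (h3 : a^k*(2-a) = 1) : ∃ t : Multiset ℂ, ((pK k).map (algebraMap ℤ ℂ)).roots = (a:ℂ) ::ₘ t ∧
      Multiset.card t = k - 1 ∧ ∀ z ∈ t, ‖z‖ ≤ 1 ∧ aeval z (pK k) = 0 := by
  have ha := alpha_ge k hk a h1
  have hA : aeval a (pK k) = 0 := by
    have := pK_mul k a
    rw [h3, sub_self] at this
    exact (mul_eq_zero.1 this).resolve_left (by linarith)
  have hint : IsIntegral ℤ a := ⟨pK k, pK_monic k, hA⟩
  have hm0 : ((pK k).map (algebraMap ℤ ℂ)) ≠ 0 := ((pK_monic k).map _).ne_zero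
  have hmem : (a:ℂ) ∈ ((pK k).map (algebraMap ℤ ℂ)).roots := by
    rw [mem_roots', IsRoot, eval_map_algebraMap]
    refine ⟨hm0, ?_⟩
    have := aeval_algebraMap_apply ℂ a (pK k)
    rw [Complex.coe_algebraMap, hA] at this
    simpa using this
  have hnd : ((pK k).map (algebraMap ℤ ℂ)).roots.Nodup := by
    have hirr : Irreducible (minpoly ℚ a) := minpoly.irreducible (hint.tower_top)
    have hs := hirr.separable
    have e : minpoly ℚ a = (pK k).map (algebraMap ℤ ℚ) := by
      rw [← minpoly_pK k hk a h1 h2 h3]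
      exact minpoly.isIntegrallyClosed_eq_field_fractions' ℚ hint
    rw [e] at hs
    have := hs.map (f := algebraMap ℚ ℂ)
    rw [Polynomial.map_map] at this
    exact nodup_roots this
  obtain ⟨t, ht⟩ := Multiset.exists_cons_of_mem hmem
  refine ⟨t, ht, ?_, ?_⟩
  · have hc := (IsAlgClosed.splits ((pK k).map (algebraMap ℤ ℂ))).natDegree_eq_card_roots
    rw [ht, Multiset.card_cons, (pK_monic k).natDegree_map, pK_natDegree] at hc
    omega
  · intro z hz
    have hz1 : z ∈ ((pK k).map (algebraMap ℤ ℂ)).roots := by rw [ht]; exact Multiset.mem_cons_of_mem hz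
    have hz2 : aeval z (pK k) = 0 := by
      have := (mem_roots'.1 hz1).2
      rwa [IsRoot, eval_map_algebraMap] at this
    refine ⟨?_, hz2⟩
    rcases root_cases k (by omega) a (by linarith) h3 z hz2 with h | h
    · rw [ht, Multiset.nodup_cons] at hnd
      rw [h] at hz
      exact absurd hz hnd.1
    · exact h

theorem aeval_conj (k : ℕ) (hk : 450 < k) (a : ℝ) (h1 : 2 - 1/((k:ℝ)+1) ≤ a) (h2 : a < 2)
    (h3 : a^k*(2-a) = 1) (A : ℤ[X]) (z : ℂ) (hz : aeval z (pK k) = 0) : aeval z A = 0 ↔ aeval a A = 0 := by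
  have ha := alpha_ge k hk a h1
  have hA : aeval a (pK k) = 0 := by
    have := pK_mul k a
    rw [h3, sub_self] at this
    exact (mul_eq_zero.1 this).resolve_left (by linarith)
  have hint : IsIntegral ℤ a := ⟨pK k, pK_monic k, hA⟩
  have hintz : IsIntegral ℤ z := ⟨pK k, pK_monic k, hz⟩
  have hmz : minpoly ℤ z = pK k := by
    have hp : Prime (pK k) := by
      rw [← minpoly_pK k hk a h1 h2 h3]; exact minpoly.prime_of_isIntegrallyClosed hint
    obtain ⟨g, hg⟩ := minpoly.isIntegrallyClosed_dvd hintz hz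
    have hirr := hp.irreducible
    rcases hirr.isUnit_or_isUnit hg with h | h
    · exact absurd h (minpoly.not_isUnit ℤ z)
    · have hgm : g.Monic := (minpoly.monic hintz).of_mul_monic_left (hg ▸ pK_monic k)
      rw [hg, hgm.eq_one_of_isUnit h, mul_one]
  rw [minpoly.isIntegrallyClosed_dvd_iff hintz, hmz, minpoly.isIntegrallyClosed_dvd_iff hint, minpoly_pK k hk a h1 h2 h3]

theorem liouville (k : ℕ) (hk : 450 < k) (a : ℝ) (h1 : 2 - 1/((k:ℝ)+1) ≤ a) (h2 : a < 2)
    (h3 : a^k*(2-a) = 1) (A : ℤ[X]) (B : ℝ) (hA : aeval a A ≠ 0) (hB : ∀ z : ℂ, ‖z‖ ≤ 1 → ‖aeval z A‖ ≤ B) :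
    1 ≤ |aeval a A| * B^(k-1) := by
  obtain ⟨t, ht, hc, hroots⟩ := pK_roots k hk a h1 h2 h3
  have hres := resultant_eq_prod_eval ((pK k).map (algebraMap ℤ ℂ)) (A.map (algebraMap ℤ ℂ)) A.natDegree
    natDegree_map_le (IsAlgClosed.splits _)
  rw [(pK_monic k).natDegree_map, resultant_map_map, ((pK_monic k).map _).leadingCoeff, one_pow, one_mul,
    ht, Multiset.map_cons, Multiset.prod_cons] at hres
  set N := resultant (pK k) A (pK k).natDegree A.natDegree with hN
  have hea : eval (a:ℂ) (A.map (algebraMap ℤ ℂ)) = ((aeval a A : ℝ):ℂ) := by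
    rw [eval_map_algebraMap]
    have := aeval_algebraMap_apply ℂ a A
    rwa [Complex.coe_algebraMap] at this
  have hP : ∀ t : Multiset ℂ, (∀ z ∈ t, ‖z‖ ≤ 1 ∧ aeval z (pK k) = 0) →
      (t.map (fun z => eval z (A.map (algebraMap ℤ ℂ)))).prod ≠ 0 ∧
      ‖(t.map (fun z => eval z (A.map (algebraMap ℤ ℂ)))).prod‖ ≤ B^(Multiset.card t) := by
    intro t
    induction t using Multiset.induction with
    | empty => simp
    | cons x t ih =>
      intro h
      obtain ⟨i1, i2⟩ := ih (fun y hy => h y (Multiset.mem_cons_of_mem hy))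
      obtain ⟨j1, j2⟩ := h x (Multiset.mem_cons_self _ _)
      rw [Multiset.map_cons, Multiset.prod_cons, Multiset.card_cons, pow_succ', norm_mul, eval_map_algebraMap]
      refine ⟨mul_ne_zero ?_ i1, ?_⟩
      · rw [Ne, aeval_conj k hk a h1 h2 h3 A x j2]; exact hA
      · exact mul_le_mul (hB x j1) i2 (norm_nonneg _) ((norm_nonneg _).trans (hB x j1))
  obtain ⟨p1, p2⟩ := hP t hroots
  rw [hc] at p2
  rw [hea] at hres
  have hNne : N ≠ 0 := by
    intro h
    rw [h, map_zero] at hres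
    exact mul_ne_zero (by exact_mod_cast hA) p1 hres.symm
  have hN1 : (1:ℝ) ≤ ‖(algebraMap ℤ ℂ) N‖ := by
    rw [eq_intCast, Complex.norm_intCast]
    exact_mod_cast Int.one_le_abs hNne
  rw [hres, norm_mul, Complex.norm_real, Real.norm_eq_abs] at hN1
  exact hN1.trans (mul_le_mul_of_nonneg_left p2 (abs_nonneg _))

theorem beta_ne (k : ℕ) (hk : 450 < k) (a : ℝ) (h1 : 2 - 1/((k:ℝ)+1) ≤ a) (h2 : a < 2)
    (h3 : a^k*(2-a) = 1) (q p : ℕ) (hq : 1 ≤ q) : a^q ≠ 10^p := by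
  intro h
  have ha := alpha_ge k hk a h1
  obtain ⟨t, ht, hc, hroots⟩ := pK_roots k hk a h1 h2 h3
  obtain ⟨z, hz⟩ := Multiset.card_pos_iff_exists_mem.1 (by omega : 0 < Multiset.card t)
  obtain ⟨z1, z2⟩ := hroots z hz
  have hA : aeval a ((X:ℤ[X])^q - 10^p) = 0 := by
    have : aeval a ((X:ℤ[X])^q - 10^p) = a^q - 10^p := by
      rw [map_sub, map_pow, map_pow, aeval_X, map_ofNat]
    rw [this, h, sub_self]
  have hz3 := (aeval_conj k hk a h1 h2 h3 _ z z2).2 hA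
  have e : aeval z ((X:ℤ[X])^q - 10^p) = z^q - 10^p := by
    rw [map_sub, map_pow, map_pow, aeval_X, map_ofNat]
  rw [e, sub_eq_zero] at hz3
  have h5 := congrArg norm hz3
  rw [norm_pow, norm_pow] at h5
  have h6 : ‖z‖^q ≤ 1 := pow_le_one₀ (norm_nonneg _) z1
  have h7 : 1 < a^q := one_lt_pow₀ (by linarith) (by omega)
  have h8 : ‖(10:ℂ)‖ = 10 := by simp
  rw [h8] at h5
  linarith

end


section
open Polynomial

theorem det_coeff {l : ℕ} (M : Matrix (Fin l) (Fin l) ℝ[X]) (D : ℕ)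
    (hM : ∀ i j, (M i j).natDegree ≤ D) :
    M.det.natDegree ≤ l * D ∧
    M.det.coeff (l * D) = (Matrix.of fun i j => (M i j).coeff D).det := by
  constructor
  · rw [Matrix.det_apply']
    apply natDegree_sum_le_of_forall_le
    intro σ _
    refine natDegree_mul_le.trans ?_
    rw [natDegree_intCast, zero_add]
    refine (natDegree_prod_le _ _).trans ?_
    refine (Finset.sum_le_card_nsmul _ _ D (fun i _ => hM _ _)).trans ?_
    simp
  · rw [Matrix.det_apply', Matrix.det_apply', finsetSum_coeff]
    refine Finset.sum_congr rfl fun σ _ => ?_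
    rw [coeff_intCast_mul]
    congr 1
    have := coeff_prod_of_natDegree_le (Finset.univ : Finset (Fin l)) (fun i => M (σ i) i) D (fun i _ => hM _ _)
    simp only [Finset.card_univ, Fintype.card_fin] at this
    rw [this]
    rfl

theorem zero_lemma (L K : ℕ) (P : Fin L → ℝ[X]) (hdeg : ∀ l, (P l).natDegree < K)
    (hne : ∃ l, P l ≠ 0) (β : ℝ) (hβ : 0 < β) (hβ1 : β ≠ 1) (q : ℝ) (S : Finset ℝ)
    (hS : L * K < S.card) (v : ℝ → ℝ) (hv : ∀ x ∈ S, v x ≠ 0)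
    (hz : ∀ x ∈ S, ∀ i < L, ∑ l, (P l).eval (x + i*q) * (v x * β^i)^(l:ℕ) = 0) : False := by
  classical
  set J := (Finset.univ : Finset (Fin L)).filter (fun l => P l ≠ 0) with hJ
  set c := J.card with hc
  have hcL : c ≤ L := by
    have := Finset.card_filter_le (Finset.univ : Finset (Fin L)) (fun l => P l ≠ 0)
    simpa using this
  obtain ⟨l0, hl0⟩ := hne
  have hc0 : 0 < c := Finset.card_pos.2 ⟨l0, by simp [hJ, hl0]⟩
  let f := J.orderEmbOfFin hc.symm
  have hfmem : ∀ j, P (f j) ≠ 0 := by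
    intro j
    have := Finset.orderEmbOfFin_mem J hc.symm j
    exact (Finset.mem_filter.1 this).2
  let N : Matrix (Fin c) (Fin c) ℝ[X] :=
    Matrix.of fun j i => (P (f j)).comp (X + C ((i:ℝ) * q)) * C ((β^((f j):ℕ))^(i:ℕ))
  let M : Matrix (Fin c) (Fin c) ℝ[X] :=
    Matrix.of fun j i => (X:ℝ[X])^(K-1-(P (f j)).natDegree) * N j i
  have hNdeg : ∀ j i, (N j i).natDegree ≤ (P (f j)).natDegree := by
    intro j i
    show ((P (f j)).comp (X + C ((i:ℝ) * q)) * C ((β^((f j):ℕ))^(i:ℕ))).natDegree ≤ _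
    refine (natDegree_mul_C_le _ _).trans ?_
    rw [natDegree_comp, natDegree_X_add_C, mul_one]
  have hMdeg : ∀ j i, (M j i).natDegree ≤ K - 1 := by
    intro j i
    show ((X:ℝ[X])^(K-1-(P (f j)).natDegree) * N j i).natDegree ≤ _
    refine natDegree_mul_le.trans ?_
    rw [natDegree_X_pow]
    have := hNdeg j i
    have := hdeg (f j)
    omega
  obtain ⟨d1, d2⟩ := det_coeff M (K-1) hMdeg
  have hMc : ∀ j i, (M j i).coeff (K-1) = (P (f j)).leadingCoeff * ((β^((f j):ℕ))^(i:ℕ)) := by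
    intro j i
    have h1 : K - 1 = (P (f j)).natDegree + (K-1-(P (f j)).natDegree) := by
      have := hdeg (f j)
      omega
    have h2 : (M j i).coeff (K-1) = (N j i).coeff ((P (f j)).natDegree) := by
      show ((X:ℝ[X])^(K-1-(P (f j)).natDegree) * N j i).coeff (K-1) = _
      conv_lhs => rw [h1]
      rw [Nat.add_sub_cancel_left, coeff_X_pow_mul]
    rw [h2]
    show ((P (f j)).comp (X + C ((i:ℝ) * q)) * C ((β^((f j):ℕ))^(i:ℕ))).coeff _ = _
    rw [coeff_mul_C]
    congr 1
    have h3 : ((P (f j)).comp (X + C ((i:ℝ) * q))).natDegree = (P (f j)).natDegree := by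
      rw [natDegree_comp, natDegree_X_add_C, mul_one]
    have h4 : ((P (f j)).comp (X + C ((i:ℝ) * q))).leadingCoeff = (P (f j)).leadingCoeff := by
      rw [leadingCoeff_comp (by rw [natDegree_X_add_C]; exact one_ne_zero), leadingCoeff_X_add_C, one_pow, mul_one]
    rw [← h4, leadingCoeff, h3]
  have hM0 : M.det ≠ 0 := by
    intro h0
    rw [h0, coeff_zero] at d2
    have e : (Matrix.of fun i j => (M i j).coeff (K-1)) =
        Matrix.of fun j i => (P (f j)).leadingCoeff * (Matrix.vandermonde (fun j => β^((f j):ℕ))) j i := by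
      ext j i
      simp only [Matrix.of_apply, hMc, Matrix.vandermonde_apply]
    rw [e, Matrix.det_mul_column] at d2
    refine mul_ne_zero (Finset.prod_ne_zero_iff.2 fun j _ => leadingCoeff_ne_zero.2 (hfmem j)) ?_ d2.symm
    rw [Matrix.det_vandermonde_ne_zero_iff]
    intro x y hxy
    have := pow_right_injective₀ hβ hβ1 hxy
    exact f.injective (Fin.ext this)
  have hdetM : M.det = (∏ j, (X:ℝ[X])^(K-1-(P (f j)).natDegree)) * N.det :=
    Matrix.det_mul_column _ _
  have hvan : ∀ x ∈ S, N.det.eval x = 0 := by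
    intro x hx
    have h1 : N.det.eval x = (N.map (eval x)).det := by
      have := RingHom.map_det (evalRingHom x) N
      simpa using this
    rw [h1, ← Matrix.exists_vecMul_eq_zero_iff]
    refine ⟨fun j => (v x)^((f j):ℕ), ?_, ?_⟩
    · intro h
      have := congrFun h ⟨0, hc0⟩
      exact pow_ne_zero _ (hv x hx) this
    · ext i
      have h2 := hz x hx i (by omega)
      have h3 : ∑ l, (P l).eval (x + (i:ℕ)*q) * (v x * β^(i:ℕ))^(l:ℕ) =
          ∑ l ∈ J, (P l).eval (x + (i:ℕ)*q) * (v x * β^(i:ℕ))^(l:ℕ) := by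
        symm
        apply Finset.sum_subset (Finset.subset_univ _)
        intro l _ hl
        have : P l = 0 := by simpa [hJ] using hl
        rw [this, eval_zero, zero_mul]
      rw [h3] at h2
      have h4 : J = Finset.univ.map f.toEmbedding := (Finset.map_orderEmbOfFin_univ J hc.symm).symm
      rw [h4, Finset.sum_map] at h2
      rw [Pi.zero_apply, ← h2]
      simp only [Matrix.vecMul, dotProduct]
      refine Finset.sum_congr rfl fun j _ => ?_
      simp only [N, Matrix.map_apply, Matrix.of_apply, eval_mul, eval_comp, eval_add, eval_X, eval_C,
        RelEmbedding.coe_toEmbedding]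
      rw [mul_pow, ← pow_mul, ← pow_mul, mul_comm (i:ℕ) (f j : ℕ)]
      ring
  have hcard : S.card ≤ M.det.natDegree := by
    refine (Finset.card_le_card (t := M.det.roots.toFinset) ?_).trans ((Multiset.toFinset_card_le _).trans (card_roots' _))
    intro x hx
    rw [Multiset.mem_toFinset, mem_roots hM0, IsRoot, hdetM, eval_mul, hvan x hx, mul_zero]
  have : c * (K-1) ≤ L * K := Nat.mul_le_mul hcL (by omega)
  omega

end


theorem exp_tail (z : ℝ) (T : ℕ) (h : |z| * 48 ≤ T) :
    |Real.exp z - ∑ m ∈ Finset.range T, z^m / (m.factorial : ℝ)| ≤ 2 * (1/16:ℝ)^T := by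
  have h1 : ‖(z:ℂ)‖ / T.succ ≤ 1/2 := by
    rw [Complex.norm_real, Real.norm_eq_abs, div_le_iff₀ (by positivity)]
    push_cast
    have := abs_nonneg z
    linarith
  have h2 := Complex.exp_bound' h1
  have e : Complex.exp z - ∑ m ∈ Finset.range T, (z:ℂ)^m / (m.factorial : ℂ) =
      ((Real.exp z - ∑ m ∈ Finset.range T, z^m / (m.factorial : ℝ) : ℝ) : ℂ) := by
    push_cast
    rfl
  rw [e, Complex.norm_real, Complex.norm_real, Real.norm_eq_abs, Real.norm_eq_abs] at h2
  refine h2.trans ?_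
  have h3 : ((T:ℝ))^T / (T.factorial:ℝ) ≤ 3^T := by
    refine (Real.pow_div_factorial_le_exp (T:ℝ) (by positivity) T).trans ?_
    have : Real.exp (T:ℝ) = (Real.exp 1)^T := by rw [← Real.exp_nat_mul, mul_one]
    rw [this]
    have := Real.exp_one_lt_d9
    exact pow_le_pow_left₀ (Real.exp_pos _).le (by linarith) _
  have h4 : |z|^T ≤ (1/48)^T * (T:ℝ)^T := by
    rw [← mul_pow]
    exact pow_le_pow_left₀ (abs_nonneg _) (by linarith) _
  have h5 : |z|^T / (T.factorial:ℝ) ≤ (1/16)^T := by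
    calc
      _ ≤ (1/48)^T * (T:ℝ)^T / (T.factorial:ℝ) := by gcongr
      _ = (1/48)^T * ((T:ℝ)^T / (T.factorial:ℝ)) := by ring
      _ ≤ (1/48)^T * 3^T := by gcongr
      _ = (1/16)^T := by rw [← mul_pow]; norm_num
  linarith

theorem siegel {τ ι : Type*} [Fintype τ] [Fintype ι] [Nonempty ι] (c : τ → ι → ℝ) (C : ℝ) (hC : 0 < C)
    (hc : ∀ t i, |c t i| ≤ C) (w h : ℕ) (hw : h * Fintype.card τ < w * Fintype.card ι) :
    ∃ p : ι → ℤ, p ≠ 0 ∧ (∀ i, |p i| < 2^w) ∧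
      ∀ t, |∑ i, c t i * p i| ≤ 2 * C * Fintype.card ι * 2^w / 2^h := by
  classical
  set B : ℝ := C * Fintype.card ι * 2^w with hB
  have hcard : (0:ℝ) < Fintype.card ι := by exact_mod_cast Fintype.card_pos
  have hB0 : 0 < B := by positivity
  have hbd : ∀ (x : ι → Fin (2^w)) t, |∑ i, c t i * ((x i : ℕ):ℝ)| < B := by
    intro x t
    have hx : ∀ i, ((x i : ℕ):ℝ) ≤ 2^w - 1 := by
      intro i
      have := (x i).2
      have h2 : (((x i : ℕ) + 1 : ℕ):ℝ) ≤ ((2^w : ℕ) : ℝ) := by exact_mod_cast this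
      push_cast at h2
      linarith
    calc
      _ ≤ ∑ i, |c t i * ((x i : ℕ):ℝ)| := Finset.abs_sum_le_sum_abs _ _
      _ ≤ ∑ i : ι, C * (2^w-1) := by
          apply Finset.sum_le_sum
          intro i _
          rw [abs_mul, Nat.abs_cast]
          exact mul_le_mul (hc t i) (hx i) (by positivity) hC.le
      _ = C * Fintype.card ι * (2^w-1) := by
          rw [Finset.sum_const, nsmul_eq_mul, Finset.card_univ]; ring
      _ < B := by
          rw [hB]
          have : 0 < C * Fintype.card ι := by positivity
          nlinarith
  let f : (ι → Fin (2^w)) → (τ → Fin (2^h)) := fun x t =>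
    ⟨⌊(∑ i, c t i * ((x i : ℕ):ℝ) + B) / (2*B) * 2^h⌋₊, by
      have h1 := abs_lt.1 (hbd x t)
      rw [Nat.floor_lt (by
        have : 0 ≤ ∑ i, c t i * ((x i : ℕ):ℝ) + B := by linarith
        positivity)]
      push_cast
      have : (∑ i, c t i * ((x i : ℕ):ℝ) + B) / (2*B) < 1 := by
        rw [div_lt_one (by positivity)]
        linarith
      have h2 : (0:ℝ) < 2^h := by positivity
      nlinarith⟩
  have hlt : Fintype.card (τ → Fin (2^h)) < Fintype.card (ι → Fin (2^w)) := by
    simp only [Fintype.card_fun, Fintype.card_fin, ← pow_mul]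
    exact Nat.pow_lt_pow_right (by norm_num) hw
  obtain ⟨x, y, hxy, hf⟩ := Fintype.exists_ne_map_eq_of_card_lt f hlt
  refine ⟨fun i => ((x i : ℕ):ℤ) - ((y i : ℕ):ℤ), ?_, ?_, ?_⟩
  · intro h0
    apply hxy
    funext i
    have := congrFun h0 i
    simp only [Pi.zero_apply] at this
    apply Fin.ext
    omega
  · intro i
    have h1 : ((x i : ℕ):ℤ) < 2^w := by exact_mod_cast (x i).2
    have h2 : ((y i : ℕ):ℤ) < 2^w := by exact_mod_cast (y i).2
    show |((x i : ℕ):ℤ) - ((y i : ℕ):ℤ)| < 2^w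
    rw [abs_lt]
    constructor <;> omega
  · intro t
    have h1 := congrArg Fin.val (congrFun hf t)
    simp only [f] at h1
    set u := ∑ i, c t i * ((x i : ℕ):ℝ) with hu
    set v := ∑ i, c t i * ((y i : ℕ):ℝ) with hv
    have e : ∑ i, c t i * (((((x i : ℕ):ℤ) - ((y i : ℕ):ℤ)) : ℤ) : ℝ) = u - v := by
      rw [hu, hv, ← Finset.sum_sub_distrib]
      refine Finset.sum_congr rfl fun i _ => ?_
      push_cast
      ring
    rw [e]
    have hu1 := abs_lt.1 (hbd x t)
    have hv1 := abs_lt.1 (hbd y t)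
    rw [← hu] at hu1
    rw [← hv] at hv1
    have hu0 : 0 ≤ (u + B) / (2*B) * 2^h := by
      have : 0 ≤ u + B := by linarith
      positivity
    have hv0 : 0 ≤ (v + B) / (2*B) * 2^h := by
      have : 0 ≤ v + B := by linarith
      positivity
    have a1 := Nat.floor_le hu0
    have a2 := Nat.lt_floor_add_one ((u + B) / (2*B) * 2^h)
    have a3 := Nat.floor_le hv0
    have a4 := Nat.lt_floor_add_one ((v + B) / (2*B) * 2^h)
    rw [h1] at a1 a2
    have a5 : |(u + B) / (2*B) * 2^h - (v + B) / (2*B) * 2^h| ≤ 1 := by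
      rw [abs_le]
      constructor <;> linarith
    have a6 : (u + B) / (2*B) * 2^h - (v + B) / (2*B) * 2^h = (u - v) * (2^h / (2*B)) := by
      field_simp
      ring
    rw [a6, abs_mul, abs_of_pos (by positivity : (0:ℝ) < 2^h/(2*B)), ← le_div_iff₀ (by positivity)] at a5
    refine a5.trans (le_of_eq ?_)
    rw [hB]
    field_simp


theorem sum_shift (T0 K κ : ℕ) (hκ : κ < K) (f : ℕ → ℕ → ℝ) :
    ∑ t ∈ Finset.range (T0+K), (if κ ≤ t ∧ t - κ < T0 then f t (t-κ) else 0) =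
      ∑ τ ∈ Finset.range T0, f (κ+τ) τ := by
  rw [← Finset.sum_filter]
  refine Finset.sum_nbij' (fun t => t - κ) (fun τ => κ + τ) ?_ ?_ ?_ ?_ ?_
  · intro t ht
    simp only [Finset.mem_filter, Finset.mem_range] at ht ⊢
    omega
  · intro t ht
    simp only [Finset.mem_filter, Finset.mem_range] at ht ⊢
    omega
  · intro t ht
    simp only [Finset.mem_filter, Finset.mem_range] at ht ⊢
    omega
  · intro t ht
    simp only [Finset.mem_range] at ht ⊢
    omega
  · intro t ht
    simp only [Finset.mem_filter, Finset.mem_range] at ht ⊢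
    rw [show κ + (t - κ) = t by omega]

theorem pow_approx (L T0 l : ℕ) (hl : l < L) (R Y B μ η v E : ℝ) (hR : 1 ≤ R) (hμ : |μ| ≤ Y)
    (hB : |B| * R ≤ 2*Y) (hT : 96 * L * Y ≤ T0) (hv : 0 < v) (hη : |η| ≤ R) (hE : L * E ≤ 1)
    (hlog : |Real.log v - μ - B * η| ≤ E) :
    |v^l - Real.exp (l*μ) * ∑ τ ∈ Finset.range T0, (l*B*η)^τ / (τ.factorial : ℝ)| ≤
      Real.exp (3*L*Y) * (2 * ((1/16:ℝ)^T0 + L*E)) := by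
  have hE0 : 0 ≤ E := (abs_nonneg _).trans hlog
  have hY0 : 0 ≤ Y := (abs_nonneg _).trans hμ
  have hlL : (l:ℝ) ≤ L := by exact_mod_cast hl.le
  have hl0 : (0:ℝ) ≤ l := by positivity
  have hBη : |B*η| ≤ 2*Y := by
    rw [abs_mul]
    exact (mul_le_mul_of_nonneg_left hη (abs_nonneg _)).trans hB
  have hz : |(l:ℝ)*B*η| ≤ L*(2*Y) := by
    rw [mul_assoc, abs_mul, Nat.abs_cast]
    exact mul_le_mul hlL hBη (abs_nonneg _) (by positivity)
  have hm : |(l:ℝ)*μ| ≤ L*Y := by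
    rw [abs_mul, Nat.abs_cast]
    exact mul_le_mul hlL hμ (abs_nonneg _) (by positivity)
  have h1 := exp_tail (l*B*η) T0 (by linarith)
  set S := ∑ τ ∈ Finset.range T0, ((l:ℝ)*B*η)^τ / (τ.factorial : ℝ) with hS
  set ε := Real.log v - μ - B*η with hε
  have hvl : v^l = Real.exp (l*μ) * Real.exp (l*B*η) * Real.exp (l*ε) := by
    rw [← Real.exp_add, ← Real.exp_add, hε,
      show (l:ℝ)*μ + l*B*η + l*(Real.log v - μ - B*η) = l * Real.log v by ring,
      Real.exp_nat_mul, Real.exp_log hv]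
  have hlε : |(l:ℝ)*ε| ≤ L*E := by
    rw [abs_mul, Nat.abs_cast]
    exact mul_le_mul hlL hlog (abs_nonneg _) (by positivity)
  have h2 : |Real.exp (l*ε) - 1| ≤ 2*(L*E) := by
    refine (Real.abs_exp_sub_one_le (hlε.trans hE)).trans ?_
    linarith
  have e1 : Real.exp (l*μ) ≤ Real.exp (3*L*Y) := by
    apply Real.exp_le_exp.2
    have := le_abs_self ((l:ℝ)*μ)
    have : 0 ≤ L*Y := by positivity
    linarith
  have e2 : Real.exp (l*μ) * Real.exp (l*B*η) ≤ Real.exp (3*L*Y) := by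
    rw [← Real.exp_add]
    apply Real.exp_le_exp.2
    have := le_abs_self ((l:ℝ)*μ)
    have := le_abs_self ((l:ℝ)*B*η)
    linarith
  have e : v^l - Real.exp (l*μ) * S = Real.exp (l*μ) * Real.exp (l*B*η) * (Real.exp (l*ε) - 1) +
      Real.exp (l*μ) * (Real.exp (l*B*η) - S) := by rw [hvl]; ring
  rw [e]
  calc
    _ ≤ Real.exp (l*μ) * Real.exp (l*B*η) * |Real.exp (l*ε) - 1| + Real.exp (l*μ) * |Real.exp (l*B*η) - S| := by
        refine (abs_add_le _ _).trans (le_of_eq ?_)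
        rw [abs_mul, abs_mul (Real.exp (l*μ)) (Real.exp (l*B*η) - S), abs_of_pos (by positivity), abs_of_pos (Real.exp_pos _)]
    _ ≤ Real.exp (3*L*Y) * (2*(L*E)) + Real.exp (3*L*Y) * (2 * (1/16:ℝ)^T0) := by
        gcongr
    _ = _ := by ring

theorem auxfun (k L K T0 w h : ℕ) (hk : 0 < k) (hL : 0 < L) (hK : 0 < K) (a R Y B μ : ℝ)
    (ha : 1 ≤ a) (ha2 : a ≤ 2) (hR : 1 ≤ R) (hμ : |μ| ≤ Y) (hB : |B| * R ≤ 2*Y)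
    (hw : h * (T0+K) < w * (K*L*k)) (hT : 96 * L * Y ≤ T0) :
    ∃ p : Fin K × Fin L × Fin k → ℤ, p ≠ 0 ∧ (∀ x, |p x| < 2^w) ∧
      ∀ (η v E : ℝ), 0 < v → |η| ≤ R → L * E ≤ 1 → |Real.log v - μ - B * η| ≤ E →
      |∑ x, (p x : ℝ) * a^(x.2.2:ℕ) * η^(x.1:ℕ) * v^(x.2.1:ℕ)| ≤
        2 * (K*L*k) * 2^w * (2^k * R^K * Real.exp (3*L*Y)) * ((T0+K)/2^h + (1/16:ℝ)^T0 + L*E) := by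
  have hY0 : 0 ≤ Y := (abs_nonneg _).trans hμ
  haveI : NeZero k := ⟨hk.ne'⟩
  haveI : NeZero L := ⟨hL.ne'⟩
  haveI : NeZero K := ⟨hK.ne'⟩
  set C : ℝ := 2^k * R^K * Real.exp (3*L*Y) with hC
  have hC0 : 0 < C := by positivity
  let g : Fin K × Fin L × Fin k → ℕ → ℝ := fun x τ =>
    a^(x.2.2:ℕ) * R^(x.1:ℕ) * Real.exp ((x.2.1:ℕ)*μ) * (((x.2.1:ℕ):ℝ)*B*R)^τ / (τ.factorial:ℝ)
  let c : Fin (T0+K) → Fin K × Fin L × Fin k → ℝ := fun t x =>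
    if (x.1:ℕ) ≤ (t:ℕ) ∧ (t:ℕ) - (x.1:ℕ) < T0 then g x ((t:ℕ) - (x.1:ℕ)) else 0
  have hai : ∀ i : Fin k, a^(i:ℕ) ≤ 2^k := by
    intro i
    calc
      _ ≤ (2:ℝ)^(i:ℕ) := pow_le_pow_left₀ (by linarith) ha2 _
      _ ≤ 2^k := pow_le_pow_right₀ (by norm_num) i.2.le
  have hRi : ∀ i : Fin K, R^(i:ℕ) ≤ R^K := fun i => pow_le_pow_right₀ hR i.2.le
  have hg : ∀ x τ, |g x τ| ≤ C := by
    intro x τ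
    have hlL : (((x.2.1:ℕ):ℝ)) ≤ L := by exact_mod_cast x.2.1.2.le
    have h1 : |(((x.2.1:ℕ):ℝ)*B*R)^τ / (τ.factorial:ℝ)| ≤ Real.exp (L*(2*Y)) := by
      rw [abs_div, abs_pow, Nat.abs_cast]
      refine (Real.pow_div_factorial_le_exp _ (abs_nonneg _) τ).trans ?_
      apply Real.exp_le_exp.2
      rw [mul_assoc, abs_mul, Nat.abs_cast, abs_mul, abs_of_pos (by linarith : 0 < R)]
      exact mul_le_mul hlL hB (by positivity) (by positivity)
    have h2 : Real.exp ((x.2.1:ℕ)*μ) ≤ Real.exp (L*Y) := by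
      apply Real.exp_le_exp.2
      have h3 := (le_abs_self μ).trans hμ
      calc
        _ ≤ ((x.2.1:ℕ):ℝ)*Y := by gcongr
        _ ≤ _ := by gcongr
    have e : g x τ = a^(x.2.2:ℕ) * R^(x.1:ℕ) * (Real.exp ((x.2.1:ℕ)*μ) * ((((x.2.1:ℕ):ℝ)*B*R)^τ / (τ.factorial:ℝ))) := by
      simp only [g]; ring
    rw [e, abs_mul, abs_of_pos (by positivity), abs_mul, abs_of_pos (Real.exp_pos _)]
    have e2 : C = 2^k * R^K * (Real.exp (L*Y) * Real.exp (L*(2*Y))) := by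
      rw [hC, ← Real.exp_add]
      congr 2
      ring
    rw [e2]
    have := hai x.2.2
    have := hRi x.1
    gcongr
  have hc : ∀ t x, |c t x| ≤ C := by
    intro t x
    simp only [c]
    split_ifs
    · exact hg _ _
    · rw [abs_zero]; exact hC0.le
  obtain ⟨p, hp0, hpw, hpt⟩ := siegel c C hC0 hc w h (by
    simp only [Fintype.card_prod, Fintype.card_fin]
    rw [← mul_assoc K L k]; exact hw)
  have hcard : ((Fintype.card (Fin K × Fin L × Fin k) : ℕ) : ℝ) = K*L*k := by
    simp only [Fintype.card_prod, Fintype.card_fin]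
    push_cast
    ring
  rw [hcard] at hpt
  refine ⟨p, hp0, hpw, ?_⟩
  intro η v E hv hη hE hlog
  have hE0 : 0 ≤ E := (abs_nonneg _).trans hlog
  have hR0 : 0 < R := by linarith
  -- main part
  have hmain : ∑ x, (p x : ℝ) * a^(x.2.2:ℕ) * η^(x.1:ℕ) * (Real.exp ((x.2.1:ℕ)*μ) *
      ∑ τ ∈ Finset.range T0, (((x.2.1:ℕ):ℝ)*B*η)^τ / (τ.factorial : ℝ)) =
      ∑ t : Fin (T0+K), (η/R)^(t:ℕ) * ∑ x, c t x * p x := by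
    simp_rw [Finset.mul_sum]
    rw [Finset.sum_comm (s := (Finset.univ : Finset (Fin (T0+K))))]
    refine Finset.sum_congr rfl fun x _ => ?_
    have h1 := Fin.sum_univ_eq_sum_range (fun t => (η/R)^t * ((if (x.1:ℕ) ≤ t ∧ t - (x.1:ℕ) < T0 then g x (t - (x.1:ℕ)) else 0) * (p x:ℝ))) (T0+K)
    simp only [c]
    rw [h1]
    have h2 := sum_shift T0 K x.1 x.1.2 (fun t τ => (η/R)^t * (g x τ * (p x:ℝ)))
    have h3 : ∀ t, (η/R)^t * ((if (x.1:ℕ) ≤ t ∧ t - (x.1:ℕ) < T0 then g x (t - (x.1:ℕ)) else 0) * (p x:ℝ)) =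
        (if (x.1:ℕ) ≤ t ∧ t - (x.1:ℕ) < T0 then (η/R)^t * (g x (t - (x.1:ℕ)) * (p x:ℝ)) else 0) := by
      intro t
      split_ifs <;> simp
    simp_rw [h3]
    rw [h2]
    refine Finset.sum_congr rfl fun τ _ => ?_
    simp only [g]
    have h4 : (η/R)^((x.1:ℕ)+τ) * (R^(x.1:ℕ) * R^τ) = η^(x.1:ℕ) * η^τ := by
      rw [← pow_add, ← pow_add, ← mul_pow, div_mul_cancel₀ _ hR0.ne']
    rw [mul_pow, mul_pow (((x.2.1:ℕ):ℝ)*B) R]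
    linear_combination (-(p x:ℝ) * a^(x.2.2:ℕ) * Real.exp ((x.2.1:ℕ)*μ) * (((x.2.1:ℕ):ℝ)*B)^τ / (τ.factorial:ℝ)) * h4
  have hM : |∑ t : Fin (T0+K), (η/R)^(t:ℕ) * ∑ x, c t x * p x| ≤ (T0+K) * (2 * C * (K*L*k) * 2^w / 2^h) := by
    calc
      _ ≤ ∑ t : Fin (T0+K), |(η/R)^(t:ℕ) * ∑ x, c t x * p x| := Finset.abs_sum_le_sum_abs _ _
      _ ≤ ∑ t : Fin (T0+K), (2 * C * (K*L*k) * 2^w / 2^h) := by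
          apply Finset.sum_le_sum
          intro t _
          rw [abs_mul, abs_pow]
          have h1 : |η/R|^(t:ℕ) ≤ 1 := by
            apply pow_le_one₀ (abs_nonneg _)
            rw [abs_div, abs_of_pos hR0]
            exact (div_le_one hR0).2 hη
          calc
            _ ≤ 1 * _ := mul_le_mul_of_nonneg_right h1 (abs_nonneg _)
            _ ≤ _ := by rw [one_mul]; exact hpt t
      _ = _ := by
          rw [Finset.sum_const, nsmul_eq_mul, Finset.card_univ, Fintype.card_fin]
          push_cast
          ring
  have hD : |∑ x, ((p x : ℝ) * a^(x.2.2:ℕ) * η^(x.1:ℕ) * v^(x.2.1:ℕ) - (p x : ℝ) * a^(x.2.2:ℕ) * η^(x.1:ℕ) * (Real.exp ((x.2.1:ℕ)*μ) *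
      ∑ τ ∈ Finset.range T0, (((x.2.1:ℕ):ℝ)*B*η)^τ / (τ.factorial : ℝ)))| ≤
      (K*L*k) * (2^w * 2^k * R^K * (Real.exp (3*L*Y) * (2 * ((1/16:ℝ)^T0 + L*E)))) := by
    calc
      _ ≤ ∑ x : Fin K × Fin L × Fin k, (2^w * 2^k * R^K * (Real.exp (3*L*Y) * (2 * ((1/16:ℝ)^T0 + L*E)))) := by
          refine (Finset.abs_sum_le_sum_abs _ _).trans ?_
          apply Finset.sum_le_sum
          intro x _
          rw [← mul_sub, abs_mul, abs_mul, abs_mul]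
          have h1 := pow_approx L T0 x.2.1 x.2.1.2 R Y B μ η v E hR hμ hB hT hv hη hE hlog
          have h2 : |(p x:ℝ)| ≤ 2^w := by exact_mod_cast (hpw x).le
          have h3 : |a^(x.2.2:ℕ)| ≤ 2^k := by rw [abs_of_pos (by positivity)]; exact hai _
          have h4 : |η^(x.1:ℕ)| ≤ R^K := by
            rw [abs_pow]
            exact (pow_le_pow_left₀ (abs_nonneg _) hη _).trans (hRi _)
          gcongr
      _ = _ := by
          rw [Finset.sum_const, nsmul_eq_mul, Finset.card_univ, hcard]
  rw [Finset.sum_sub_distrib, hmain] at hD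
  have hfin := abs_sub_abs_le_abs_sub (∑ x, (p x : ℝ) * a^(x.2.2:ℕ) * η^(x.1:ℕ) * v^(x.2.1:ℕ)) (∑ t : Fin (T0+K), (η/R)^(t:ℕ) * ∑ x, c t x * p x)
  have e : 2 * (K*L*k) * 2^w * C * ((T0+K)/2^h + (1/16:ℝ)^T0 + L*E) =
      (T0+K) * (2 * C * (K*L*k) * 2^w / 2^h) + (K*L*k) * (2^w * 2^k * R^K * (Real.exp (3*L*Y) * (2 * ((1/16:ℝ)^T0 + L*E)))) := by
    rw [hC]; ring
  rw [e]
  linarith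


section
open Polynomial

noncomputable def AP (k b L K : ℕ) (p : Fin K × Fin L × Fin k → ℤ) (η : ℤ) (x1 x2 x3 : ℕ) : ℤ[X] :=
  ∑ x : Fin K × Fin L × Fin k, ((p x : ℤ) : ℤ[X]) * X^(x.2.2:ℕ) * ((η : ℤ) : ℤ[X])^(x.1:ℕ) * X^(x1*(x.2.1:ℕ)) *
    ((10:ℕ):ℤ[X])^((L - (x.2.1:ℕ))*x2) * ((2*X-1)*(X-1))^((x.2.1:ℕ)*x3) *
    ((b:ℤ[X])*X*(((k:ℤ[X])+1)*X-2*(k:ℤ[X])))^((L - (x.2.1:ℕ))*x3)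

theorem AP_aeval {S : Type*} [CommRing S] (z : S) (k b L K : ℕ) (p : Fin K × Fin L × Fin k → ℤ)
    (η : ℤ) (x1 x2 x3 : ℕ) : aeval z (AP k b L K p η x1 x2 x3) =
  ∑ x : Fin K × Fin L × Fin k, (p x : S) * z^(x.2.2:ℕ) * (η : S)^(x.1:ℕ) * z^(x1*(x.2.1:ℕ)) *
    ((10:ℕ):S)^((L - (x.2.1:ℕ))*x2) * ((2*z-1)*(z-1))^((x.2.1:ℕ)*x3) *
    ((b:S)*z*(((k:S)+1)*z-2*(k:S)))^((L - (x.2.1:ℕ))*x3) := by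
  unfold AP
  rw [map_sum]
  refine Finset.sum_congr rfl fun x _ => ?_
  simp only [map_mul, map_pow, map_sub, map_add, aeval_X, map_intCast, map_natCast, map_one, map_ofNat]

theorem arith_lower (k : ℕ) (hk : 450 < k) (a : ℝ) (h1 : 2 - 1/((k:ℝ)+1) ≤ a) (h2 : a < 2)
    (h3 : a^k*(2-a) = 1) (b : ℕ) (hb1 : 1 ≤ b) (hb : b ≤ 9) (L K w : ℕ)
    (p : Fin K × Fin L × Fin k → ℤ) (hpw : ∀ x, |p x| < 2^w) (η : ℤ) (R : ℝ) (hR : 1 ≤ R)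
    (hη : |(η:ℝ)| ≤ R) (x1 x2 x3 Z : ℕ) (hx2 : x2 ≤ Z) (hx3 : x3 ≤ Z) (F : ℝ)
    (hF : F = ∑ x, (p x : ℝ) * a^(x.2.2:ℕ) * (η:ℝ)^(x.1:ℕ) * (a^x1 / 10^x2 * (gG k a / b)^x3)^(x.2.1:ℕ))
    (hF0 : F ≠ 0) :
    1 ≤ |F| * ((K*L*k) * 2^w * R^K * (90*(3*k+1))^(L*Z))^k := by
  have ha := alpha_ge k hk a h1
  obtain ⟨hden1, hden2⟩ := alpha_den k a h1 h2
  have hb0 : (0:ℝ) < b := by exact_mod_cast hb1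
  have hb9 : (b:ℝ) ≤ 9 := by exact_mod_cast hb
  set G : ℝ := 9*(3*k+1) with hG
  have hkR : (450:ℝ) < k := by exact_mod_cast hk
  have hG1 : 36 ≤ G := by rw [hG]; linarith
  set g1 := (2*a-1)*(a-1) with hg1
  set g2 := (b:ℝ)*a*(((k:ℝ)+1)*a-2*k) with hg2
  have hg20 : 0 < g2 := by
    rw [hg2]
    have : 0 < ((k:ℝ)+1)*a-2*k := by linarith
    have : 0 < a := by linarith
    positivity
  have hg2le : g2 ≤ G := by
    have : g2 ≤ 9*2*2 := by
      rw [hg2]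
      gcongr
    linarith
  have hgG : gG k a / b = g1/g2 := by
    have h0 : ((k:ℝ)+1)*a-2*k ≠ 0 := by linarith
    have : a ≠ 0 := by linarith
    rw [gG, hg1, hg2]
    field_simp
  have hA : aeval a (AP k b L K p η x1 x2 x3) = 10^(L*x2) * g2^(L*x3) * F := by
    rw [AP_aeval, hF, Finset.mul_sum]
    refine Finset.sum_congr rfl fun x _ => ?_
    rw [← hg1, ← hg2, hgG]
    have hl : (L - (x.2.1:ℕ)) + (x.2.1:ℕ) = L := by
      have := x.2.1.2
      omega
    set l := (x.2.1:ℕ) with hl'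
    have e1 : (10:ℝ)^(L*x2) = 10^((L-l)*x2) * (10^x2)^l := by
      rw [← pow_mul, ← pow_add, mul_comm x2 l, ← add_mul, hl]
    have e2 : g2^(L*x3) = g2^((L-l)*x3) * (g2^x3)^l := by
      rw [← pow_mul, ← pow_add, mul_comm x3 l, ← add_mul, hl]
    have e3 : (a^x1/10^x2*(g1/g2)^x3)^l = a^(x1*l)/(10^x2)^l*(g1^(l*x3)/(g2^x3)^l) := by
      rw [mul_pow, div_pow, div_pow, div_pow, ← pow_mul a x1 l, ← pow_mul g1 x3 l, mul_comm x3 l]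
    rw [e1, e2, e3]
    push_cast
    field_simp
  have hB : ∀ z : ℂ, ‖z‖ ≤ 1 → ‖aeval z (AP k b L K p η x1 x2 x3)‖ ≤
      (K*L*k) * 2^w * R^K * (90*(3*k+1))^(L*Z) := by
    intro z hz
    rw [AP_aeval]
    have n1 : ‖(2*z-1)*(z-1)‖ ≤ G := by
      rw [norm_mul]
      have i1 : ‖2*z-1‖ ≤ 3 := by
        refine (norm_sub_le _ _).trans ?_
        rw [norm_mul, Complex.norm_ofNat, norm_one]
        linarith
      have i2 : ‖z-1‖ ≤ 2 := by
        refine (norm_sub_le _ _).trans ?_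
        rw [norm_one]
        linarith
      have := mul_le_mul i1 i2 (norm_nonneg _) (by norm_num)
      linarith
    have n2 : ‖(b:ℂ)*z*(((k:ℂ)+1)*z-2*(k:ℂ))‖ ≤ G := by
      rw [norm_mul, norm_mul, Complex.norm_natCast]
      have i1 : ‖((k:ℂ)+1)*z-2*(k:ℂ)‖ ≤ 3*k+1 := by
        refine (norm_sub_le _ _).trans ?_
        rw [norm_mul, norm_mul, Complex.norm_ofNat, Complex.norm_natCast]
        have : ‖(k:ℂ)+1‖ ≤ k + 1 := by
          refine (norm_add_le _ _).trans ?_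
          rw [Complex.norm_natCast, norm_one]
        have := mul_le_mul this hz (norm_nonneg _) (by positivity)
        linarith
      have := mul_le_mul (mul_le_mul hb9 hz (norm_nonneg _) (by norm_num)) i1 (norm_nonneg _) (by norm_num)
      linarith
    calc
      _ ≤ ∑ x : Fin K × Fin L × Fin k, (2^w * R^K * (90*(3*(k:ℝ)+1))^(L*Z)) := by
          refine (norm_sum_le _ _).trans ?_
          apply Finset.sum_le_sum
          intro x _
          have hl : (L - (x.2.1:ℕ)) + (x.2.1:ℕ) = L := by
            have := x.2.1.2
            omega
          rw [norm_mul, norm_mul, norm_mul, norm_mul, norm_mul, norm_mul]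
          set l := (x.2.1:ℕ) with hl'
          have i1 : ‖(p x : ℂ)‖ ≤ 2^w := by
            rw [Complex.norm_intCast]
            exact_mod_cast (hpw x).le
          have i2 : ‖z^(x.2.2:ℕ)‖ ≤ 1 := by rw [norm_pow]; exact pow_le_one₀ (norm_nonneg _) hz
          have i3 : ‖(η:ℂ)^(x.1:ℕ)‖ ≤ R^K := by
            rw [norm_pow, Complex.norm_intCast]
            exact (pow_le_pow_left₀ (abs_nonneg _) hη _).trans (pow_le_pow_right₀ hR x.1.2.le)
          have i4 : ‖z^(x1*l)‖ ≤ 1 := by rw [norm_pow]; exact pow_le_one₀ (norm_nonneg _) hz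
          have i5 : ‖((10:ℕ):ℂ)^((L-l)*x2)‖ ≤ 10^(L*Z) := by
            rw [norm_pow, Complex.norm_natCast]
            push_cast
            exact pow_le_pow_right₀ (by norm_num) (Nat.mul_le_mul (by omega) hx2)
          have i6 : ‖((2*z-1)*(z-1))^(l*x3)‖ ≤ G^(l*x3) := by
            rw [norm_pow]
            exact pow_le_pow_left₀ (norm_nonneg _) n1 _
          have i7 : ‖((b:ℂ)*z*(((k:ℂ)+1)*z-2*(k:ℂ)))^((L-l)*x3)‖ ≤ G^((L-l)*x3) := by
            rw [norm_pow]
            exact pow_le_pow_left₀ (norm_nonneg _) n2 _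
          calc
            _ ≤ 2^w * 1 * R^K * 1 * 10^(L*Z) * G^(l*x3) * G^((L-l)*x3) := by
                gcongr
            _ = 2^w * R^K * (10^(L*Z) * G^(L*x3)) := by
                have : G^(L*x3) = G^(l*x3) * G^((L-l)*x3) := by
                  rw [← pow_add, ← add_mul, add_comm, hl]
                rw [this]; ring
            _ ≤ 2^w * R^K * (10^(L*Z) * G^(L*Z)) := by
                have : G^(L*x3) ≤ G^(L*Z) := pow_le_pow_right₀ (by linarith) (Nat.mul_le_mul_left _ hx3)
                gcongr
            _ = _ := by
                rw [← mul_pow, hG, show (10:ℝ)*(9*(3*k+1)) = 90*(3*k+1) by ring]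
      _ = _ := by
          rw [Finset.sum_const, nsmul_eq_mul, Finset.card_univ]
          simp only [Fintype.card_prod, Fintype.card_fin]
          push_cast
          ring
  have hA0 : aeval a (AP k b L K p η x1 x2 x3) ≠ 0 := by
    rw [hA]
    positivity
  have hl := liouville k hk a h1 h2 h3 _ _ hA0 hB
  rw [hA, abs_mul, abs_of_pos (by positivity : (0:ℝ) < 10^(L*x2) * g2^(L*x3))] at hl
  set D : ℝ := (K*L*k) * 2^w * R^K * (90*(3*k+1))^(L*Z) with hD
  have hKL : (1:ℝ) ≤ K*L*k := by
    have : 0 < Fintype.card (Fin K × Fin L × Fin k) := by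
      rw [Fintype.card_pos_iff]
      by_contra hcon
      rw [not_nonempty_iff] at hcon
      apply hF0
      rw [hF]
      exact Fintype.sum_empty _
    simp only [Fintype.card_prod, Fintype.card_fin] at this
    have h5 : 1 ≤ K*L*k := by rw [mul_assoc]; exact this
    exact_mod_cast h5
  have hpre : 10^(L*x2) * g2^(L*x3) ≤ D := by
    calc
      _ ≤ 10^(L*Z) * G^(L*Z) := by
          have j1 : (10:ℝ)^(L*x2) ≤ 10^(L*Z) := pow_le_pow_right₀ (by norm_num) (Nat.mul_le_mul_left _ hx2)
          have j2 : g2^(L*x3) ≤ G^(L*Z) :=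
            (pow_le_pow_left₀ hg20.le hg2le _).trans (pow_le_pow_right₀ (by linarith) (Nat.mul_le_mul_left _ hx3))
          gcongr
      _ = 1 * 1 * 1 * (90*(3*k+1))^(L*Z) := by
          rw [← mul_pow, hG, show (10:ℝ)*(9*(3*k+1)) = 90*(3*k+1) by ring]; ring
      _ ≤ D := by
          rw [hD]
          have j3 : (1:ℝ) ≤ 2^w := one_le_pow₀ (by norm_num)
          have j4 : 1 ≤ R^K := one_le_pow₀ hR
          gcongr
  have hDk : D^k = D^(k-1) * D := by rw [← pow_succ]; congr 1; omega
  have hD0 : 0 ≤ D := by positivity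
  rw [hDk]
  calc
    _ ≤ 10^(L*x2) * g2^(L*x3) * |F| * D^(k-1) := hl
    _ ≤ D * |F| * D^(k-1) := by gcongr
    _ = _ := by ring

end


section
open Polynomial

theorem zero_step (k : ℕ) (hk : 450 < k) (a : ℝ) (h1 : 2 - 1/((k:ℝ)+1) ≤ a) (h2 : a < 2)
    (h3 : a^k*(2-a) = 1) (L K : ℕ) (p : Fin K × Fin L × Fin k → ℤ) (hp : p ≠ 0)
    (q r : ℕ) (hq : 1 ≤ q) (S : Finset ℝ) (hS : L * K < S.card) (v : ℝ → ℝ)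
    (hv : ∀ x ∈ S, v x ≠ 0)
    (hz : ∀ x ∈ S, ∀ i < L, ∑ y, (p y : ℝ) * a^(y.2.2:ℕ) * (x + i*q)^(y.1:ℕ) *
      (v x * (a^q/10^r)^i)^(y.2.1:ℕ) = 0) : False := by
  have ha := alpha_ge k hk a h1
  have ha0 : 0 < a := by linarith
  let co : Fin K → Fin L → ℝ := fun κ l => ∑ i : Fin k, (p (κ, l, i) : ℝ) * a^(i:ℕ)
  let P : Fin L → ℝ[X] := fun l => ∑ κ : Fin K, monomial (κ:ℕ) (co κ l)
  obtain ⟨y0, hy0⟩ := Function.ne_iff.1 hp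
  have hK : 0 < K := Nat.lt_of_le_of_lt (Nat.zero_le _) y0.1.2
  have hcoeff : ∀ l (κ : Fin K), (P l).coeff κ = co κ l := by
    intro l κ
    simp only [P, finsetSum_coeff, coeff_monomial]
    rw [Finset.sum_eq_single κ]
    · simp
    · intro j _ hj
      rw [if_neg]
      intro h
      exact hj (Fin.ext h)
    · simp
  refine zero_lemma L K P ?_ ?_ (a^q/10^r) (by positivity) ?_ q S hS v hv ?_
  · intro l
    have : (P l).natDegree ≤ K - 1 := by
      apply natDegree_sum_le_of_forall_le
      intro κ _
      refine (natDegree_monomial_le _).trans ?_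
      have := κ.2
      omega
    omega
  · refine ⟨y0.2.1, ?_⟩
    intro h0
    have h4 := hcoeff y0.2.1 y0.1
    rw [h0, coeff_zero] at h4
    let Q : ℤ[X] := ∑ i : Fin k, monomial (i:ℕ) (p (y0.1, y0.2.1, i))
    have hQ : Q.degree < k := by
      refine (degree_sum_le _ _).trans_lt ?_
      rw [Finset.sup_lt_iff (by exact WithBot.bot_lt_coe _)]
      intro i _
      refine (degree_monomial_le _ _).trans_lt ?_
      exact_mod_cast i.2
    have hQa : aeval a Q = 0 := by
      simp only [Q, map_sum, aeval_monomial]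
      rw [h4]
      simp [co]
    have hQ0 := indep_pK k hk a h1 h2 h3 Q hQ hQa
    have h5 : Q.coeff (y0.2.2:ℕ) = p y0 := by
      simp only [Q, finsetSum_coeff, coeff_monomial]
      rw [Finset.sum_eq_single y0.2.2]
      · simp
      · intro j _ hj
        rw [if_neg]
        intro h
        exact hj (Fin.ext h)
      · simp
    rw [hQ0, coeff_zero] at h5
    exact hy0 h5.symm
  · intro h
    have := beta_ne k hk a h1 h2 h3 q r hq
    rw [div_eq_one_iff_eq (by positivity)] at h
    exact this h
  · intro x hx i hi
    rw [← hz x hx i hi, Fintype.sum_prod_type]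
    have e : ∀ κ : Fin K, ∑ y : Fin L × Fin k, (p (κ, y) : ℝ) * a^(y.2:ℕ) * (x + i*q)^(κ:ℕ) *
        (v x * (a^q/10^r)^i)^(y.1:ℕ) =
        ∑ l : Fin L, co κ l * (x + i*q)^(κ:ℕ) * (v x * (a^q/10^r)^i)^(l:ℕ) := by
      intro κ
      rw [Fintype.sum_prod_type]
      refine Finset.sum_congr rfl fun l _ => ?_
      simp only [co, Finset.sum_mul]
    refine Eq.trans ?_ (Finset.sum_congr rfl fun κ _ => (e κ).symm)
    rw [Finset.sum_comm]
    refine Finset.sum_congr rfl fun l _ => ?_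
    simp only [P, eval_finsetSum, eval_monomial, Finset.sum_mul]

end


theorem log_two_bd : Real.log 2 ≤ 0.6932 := by
  have := Real.log_two_lt_d9
  linarith

theorem log_ten_bd : 0 ≤ Real.log 10 ∧ Real.log 10 ≤ 2.311 := by
  refine ⟨Real.log_nonneg (by norm_num), ?_⟩
  have h1 : Real.log ((10:ℝ)^3) ≤ Real.log ((2:ℝ)^10) := Real.log_le_log (by norm_num) (by norm_num)
  rw [Real.log_pow, Real.log_pow] at h1
  push_cast at h1
  have := log_two_bd
  linarith

theorem log_a_bd (a : ℝ) (ha : 1 ≤ a) (h2 : a < 2) : 0 ≤ Real.log a ∧ Real.log a ≤ 0.6932 := by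
  refine ⟨Real.log_nonneg ha, ?_⟩
  have := Real.log_le_log (by linarith) h2.le
  have := log_two_bd
  linarith

theorem log_G_bd (k : ℕ) (hk : 450 < k) (a : ℝ) (h1 : 2 - 1/((k:ℝ)+1) ≤ a) (h2 : a < 2)
    (b : ℕ) (hb1 : 1 ≤ b) (hb : b ≤ 9) : 0 < gG k a / b ∧ |Real.log (gG k a / b)| ≤ 2.773 := by
  have ha := alpha_ge k hk a h1
  obtain ⟨g1, g2⟩ := gG_bounds k hk a h1 h2
  have hb0 : (1:ℝ) ≤ b := by exact_mod_cast hb1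
  have hb9 : (b:ℝ) ≤ 9 := by exact_mod_cast hb
  have hpos : 0 < gG k a / b := by positivity
  refine ⟨hpos, ?_⟩
  have hup : gG k a / b ≤ 2^4 := by
    rw [div_le_iff₀ (by linarith)]
    have : gG k a ≤ 3 := by nlinarith
    linarith
  have hlo : (2^4:ℝ)⁻¹ ≤ gG k a / b := by
    rw [le_div_iff₀ (by linarith)]
    norm_num
    linarith
  have l1 := Real.log_le_log hpos hup
  have l2 := Real.log_le_log (by positivity) hlo
  rw [Real.log_inv, Real.log_pow] at l2
  rw [Real.log_pow] at l1
  push_cast at l1 l2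
  have := log_two_bd
  rw [abs_le]
  constructor <;> linarith

theorem Lam_bd (k n d b : ℕ) (hk : 450 < k) (a : ℝ) (h1 : 2 - 1/((k:ℝ)+1) ≤ a) (h2 : a < 2)
    (h3 : a^k*(2-a) = 1) (hb1 : 1 ≤ b) (hb : b ≤ 9) (hd : 2 ≤ d) (hL : lucasL k n = (b:ℤ)*10^d) :
    |Real.log (gG k a / b) + n * Real.log a - d * Real.log 10| ≤ 4/10^d := by
  have ha := alpha_ge k hk a h1
  obtain ⟨hG, -⟩ := log_G_bd k hk a h1 h2 b hb1 hb
  have hb0 : (1:ℝ) ≤ b := by exact_mod_cast hb1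
  have h4 := approx_L k hk a h1 h2 h3 n
  rw [hL] at h4
  push_cast at h4
  have h10 : (100:ℝ) ≤ 10^d := by
    calc
      (100:ℝ) = 10^2 := by norm_num
      _ ≤ _ := pow_le_pow_right₀ (by norm_num) hd
  have ha0 : 0 < a := by linarith
  set y := gG k a / b * a^n / 10^d with hy
  have hy0 : 0 < y := by positivity
  have e : Real.log y = Real.log (gG k a / b) + n * Real.log a - d * Real.log 10 := by
    rw [hy, Real.log_div (by positivity) (by positivity), Real.log_mul (by positivity) (by positivity),
      Real.log_pow, Real.log_pow]
  rw [← e]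
  have hy1 : |y - 1| ≤ 2/10^d := by
    have : y - 1 = -(b*10^d - gG k a * a^n) / (b*10^d) := by
      rw [hy]
      field_simp
      ring
    rw [this, abs_div, abs_neg, abs_of_pos (by positivity : (0:ℝ) < b*10^d)]
    apply div_le_div₀ (by norm_num) h4 (by positivity)
    nlinarith
  have h5 : (2:ℝ)/10^d ≤ 1/50 := by
    rw [div_le_div_iff₀ (by positivity) (by norm_num)]
    linarith
  have h6 : (4:ℝ)/10^d = 2*(2/10^d) := by ring
  rw [h6]
  rw [abs_le] at hy1 ⊢
  constructor
  · have := Real.one_sub_inv_le_log_of_pos hy0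
    have h7 : y⁻¹ ≤ 1 + 2*(2/10^d) := by
      rw [inv_le_iff_one_le_mul₀ hy0]
      have h8 : (0:ℝ) < 2/10^d := by positivity
      nlinarith
    linarith
  · have := Real.log_le_sub_one_of_pos hy0
    have h8 : (0:ℝ) < 2/10^d := by positivity
    linarith


set_option maxHeartbeats 4000000 in
theorem core (k n d b : ℕ) (hk : 450 < k) (hn : 0 < n) (a : ℝ) (h1 : 2 - 1/((k:ℝ)+1) ≤ a) (h2 : a < 2)
    (h3 : a^k*(2-a) = 1) (hb1 : 1 ≤ b) (hb : b ≤ 9) (hd : 2 ≤ d) (hL : lucasL k n = (b:ℤ)*10^d)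
    (L K T0 w h X s q r : ℕ) (hLp : 0 < L) (hKp : 0 < K) (hq1 : 1 ≤ q) (hqs : q ≤ s) (hrs : r ≤ s)
    (hqr : |(q:ℤ)*d - r*n| ≤ s) (hLs : L*s ≤ X) (hXn : X < n)
    (hpig : (4*s*X+1)*(L*K) < X^3)
    (hw : h * (T0+K) < w * (K*L*k)) (hT : 96*L*(12*X) ≤ T0)
    (hLE : (L:ℝ)*(8*X/10^d) ≤ 1)
    (hnum : ((K*L*k) * 2^w * (4*X*n)^K * (90*(3*(k:ℝ)+1))^(L*(2*X)))^k *
      (2 * (K*L*k) * 2^w * (2^k * (4*X*n)^K * Real.exp (3*L*(12*X))) *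
        ((T0+K)/2^h + (1/16:ℝ)^T0 + L*(8*X/10^d))) < 1) : False := by
  classical
  have ha := alpha_ge k hk a h1
  have ha0 : 0 < a := by linarith
  obtain ⟨hG0, hG1⟩ := log_G_bd k hk a h1 h2 b hb1 hb
  have hLam := Lam_bd k n d b hk a h1 h2 h3 hb1 hb hd hL
  obtain ⟨la0, la1⟩ := log_a_bd a (by linarith) h2
  obtain ⟨lt0, lt1⟩ := log_ten_bd
  set Λ := Real.log (gG k a / b) + n * Real.log a - d * Real.log 10 with hΛ
  have hX0 : 0 < X := Nat.lt_of_lt_of_le (Nat.mul_pos hLp (by omega)) hLs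
  have hXR : (1:ℝ) ≤ X := by exact_mod_cast hX0
  have hnR : (1:ℝ) ≤ n := by exact_mod_cast hn
  let u : ℕ × ℕ × ℕ → ℤ := fun x => r*x.1 - q*x.2.1 + ((q:ℤ)*d - r*n)*x.2.2
  let ζ : ℕ × ℕ × ℕ → ℤ := fun x => x.1 - n*x.2.2
  let V : ℕ × ℕ × ℕ → ℝ := fun x => a^x.1/10^x.2.1*(gG k a/b)^x.2.2
  let lam : ℕ × ℕ × ℕ → ℝ := fun x => (ζ x:ℝ) * Real.log a - ((x.2.1:ℝ) - d*x.2.2) * Real.log 10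
  let box : ℕ → Finset (ℕ × ℕ × ℕ) := fun N => Finset.range N ×ˢ Finset.range N ×ˢ Finset.range N
  have hbox : ∀ N x, x ∈ box N ↔ x.1 < N ∧ x.2.1 < N ∧ x.2.2 < N := by
    intro N x
    simp only [box, Finset.mem_product, Finset.mem_range]
  have hV0 : ∀ x, 0 < V x := fun x => by simp only [V]; positivity
  have hlogV : ∀ x, Real.log (V x) = lam x + x.2.2 * Λ := by
    intro x
    simp only [V, lam, ζ]
    rw [Real.log_mul (by positivity) (by positivity), Real.log_div (by positivity) (by positivity),
      Real.log_pow, Real.log_pow, Real.log_pow, hΛ]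
    push_cast
    ring
  have h10 : (100:ℝ) ≤ 10^d := by
    calc
      (100:ℝ) = 10^2 := by norm_num
      _ ≤ _ := pow_le_pow_right₀ (by norm_num) hd
  have h410 : (4:ℝ)/10^d ≤ 0.04 := by
    rw [div_le_iff₀ (by positivity)]
    linarith
  have hLamE : ∀ x ∈ box (2*X), |(x.2.2:ℝ) * Λ| ≤ 8*X/10^d := by
    intro x hx
    obtain ⟨-, -, i3⟩ := (hbox _ _).1 hx
    have i3 : (x.2.2:ℝ) ≤ 2*X := by exact_mod_cast i3.le
    rw [abs_mul, Nat.abs_cast]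
    calc
      _ ≤ (2*X:ℝ) * (4/10^d) := mul_le_mul i3 hLam (abs_nonneg _) (by positivity)
      _ = _ := by ring
  have hlam : ∀ x ∈ box (2*X), |lam x| ≤ 12*X := by
    intro x hx
    have e0 := hLamE x hx
    have e1 : (8:ℝ)*X/10^d = 2*X*(4/10^d) := by ring
    have e2 : 2*(X:ℝ)*(4/10^d) ≤ 2*X*0.04 := by gcongr
    obtain ⟨i1, i2, i3⟩ := (hbox _ _).1 hx
    have i1 : (x.1:ℝ) ≤ 2*X := by exact_mod_cast i1.le
    have i2 : (x.2.1:ℝ) ≤ 2*X := by exact_mod_cast i2.le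
    have i3 : (x.2.2:ℝ) ≤ 2*X := by exact_mod_cast i3.le
    have e3 : Real.log (V x) = x.1 * Real.log a - x.2.1 * Real.log 10 + x.2.2 * Real.log (gG k a / b) := by
      simp only [V]
      rw [Real.log_mul (by positivity) (by positivity), Real.log_div (by positivity) (by positivity),
        Real.log_pow, Real.log_pow, Real.log_pow]
    have j1 : (x.1:ℝ) * Real.log a ≤ 2*X*0.6932 := mul_le_mul i1 la1 la0 (by positivity)
    have j1' : 0 ≤ (x.1:ℝ) * Real.log a := by positivity
    have j2 : (x.2.1:ℝ) * Real.log 10 ≤ 2*X*2.311 := mul_le_mul i2 lt1 lt0 (by positivity)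
    have j2' : 0 ≤ (x.2.1:ℝ) * Real.log 10 := by positivity
    have j3 : |(x.2.2:ℝ) * Real.log (gG k a / b)| ≤ 2*X*2.773 := by
      rw [abs_mul, Nat.abs_cast]
      exact mul_le_mul i3 hG1 (abs_nonneg _) (by positivity)
    rw [hlogV x] at e3
    rw [abs_le] at e0 j3 ⊢
    constructor <;> linarith
  -- pigeonhole
  have hu : ∀ x ∈ box X, u x ∈ Finset.Icc (-(2*s*X:ℤ)) (2*s*X) := by
    intro x hx
    obtain ⟨i1, i2, i3⟩ := (hbox _ _).1 hx
    have hrs' : (r:ℤ) ≤ s := by exact_mod_cast hrs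
    have hqs' : (q:ℤ) ≤ s := by exact_mod_cast hqs
    have i1 : (x.1:ℤ) ≤ X := by exact_mod_cast i1.le
    have i2 : (x.2.1:ℤ) ≤ X := by exact_mod_cast i2.le
    have i3 : (x.2.2:ℤ) ≤ X := by exact_mod_cast i3.le
    have j1 : (r:ℤ)*x.1 ≤ s*X := mul_le_mul hrs' i1 (by positivity) (by positivity)
    have j2 : (q:ℤ)*x.2.1 ≤ s*X := mul_le_mul hqs' i2 (by positivity) (by positivity)
    have j1' : 0 ≤ (r:ℤ)*x.1 := by positivity
    have j2' : 0 ≤ (q:ℤ)*x.2.1 := by positivity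
    have j3 : |((q:ℤ)*d - r*n)*x.2.2| ≤ s*X := by
      rw [abs_mul, Nat.abs_cast]
      exact mul_le_mul hqr i3 (by positivity) (by positivity)
    rw [abs_le] at j3
    rw [Finset.mem_Icc]
    simp only [u]
    constructor <;> linarith
  have hcardI : (Finset.Icc (-(2*s*X:ℤ)) (2*s*X)).card = 4*s*X+1 := by
    rw [Int.card_Icc]
    have : (2*s*X + 1 - -(2*s*X) : ℤ) = ((4*s*X+1 : ℕ):ℤ) := by push_cast; ring
    rw [this, Int.toNat_natCast]
  have hcardB : (box X).card = X^3 := by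
    simp only [box, Finset.card_product, Finset.card_range]
    ring
  obtain ⟨c, -, hc⟩ := Finset.exists_lt_card_fiber_of_mul_lt_card_of_maps_to hu
    (by rw [hcardI, hcardB]; exact hpig)
  set S2 := (box X).filter (fun x => u x = c) with hS2
  set Sig := (box (2*X)).filter (fun x => u x = c) with hSig
  have hmem2 : ∀ x, x ∈ S2 ↔ x ∈ box X ∧ u x = c := fun x => by rw [hS2, Finset.mem_filter]
  have hmemS : ∀ x, x ∈ Sig ↔ x ∈ box (2*X) ∧ u x = c := fun x => by rw [hSig, Finset.mem_filter]
  have hsub : ∀ x ∈ S2, x ∈ Sig := by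
    intro x hx
    obtain ⟨i1, i2⟩ := (hmem2 x).1 hx
    rw [hbox] at i1
    rw [hmemS, hbox]
    refine ⟨?_, i2⟩
    omega
  have hinj : ∀ x ∈ S2, ∀ y ∈ S2, ζ x = ζ y → x = y := by
    intro x hx y hy hxy
    obtain ⟨i1, i2⟩ := (hmem2 x).1 hx
    obtain ⟨j1, j2⟩ := (hmem2 y).1 hy
    rw [hbox] at i1 j1
    obtain ⟨x1, x2, x3⟩ := x
    obtain ⟨y1, y2, y3⟩ := y
    simp only [ζ] at hxy
    simp only at i1 j1
    have e3 : x3 = y3 := by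
      by_contra hne
      have hn0 : (0:ℤ) ≤ n := by positivity
      rcases lt_or_gt_of_ne hne with hlt | hlt
      · have : (x3:ℤ) + 1 ≤ y3 := by exact_mod_cast hlt
        have := mul_le_mul_of_nonneg_left this hn0
        rw [mul_add] at this
        omega
      · have : (y3:ℤ) + 1 ≤ x3 := by exact_mod_cast hlt
        have := mul_le_mul_of_nonneg_left this hn0
        rw [mul_add] at this
        omega
    subst e3
    have e1 : x1 = y1 := by omega
    subst e1
    have : (q:ℤ) * x2 = q * y2 := by
      simp only [u] at i2 j2
      linarith
    have e2 : x2 = y2 := by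
      have hq0 : (q:ℤ) ≠ 0 := by omega
      exact_mod_cast mul_left_cancel₀ hq0 this
    rw [e2]
  have hLK : 0 < L*K := Nat.mul_pos hLp hKp
  obtain ⟨x0, hx0, y0, hy0, hxy0⟩ := Finset.one_lt_card.1 (by omega : 1 < S2.card)
  let η : ℕ × ℕ × ℕ → ℤ := fun x => ζ x - ζ x0
  obtain ⟨xm, hxm, hmax⟩ := Finset.exists_max_image Sig (fun x => |η x|) ⟨x0, hsub _ hx0⟩
  set R : ℝ := |(η xm : ℝ)| with hR
  have hηR : ∀ x ∈ Sig, |(η x:ℝ)| ≤ R := by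
    intro x hx
    rw [hR]
    exact_mod_cast hmax x hx
  have hR1 : 1 ≤ R := by
    refine le_trans ?_ (hηR y0 (hsub _ hy0))
    have : η y0 ≠ 0 := by
      intro h
      apply hxy0
      apply hinj _ hx0 _ hy0
      simp only [η] at h
      omega
    exact_mod_cast Int.one_le_abs this
  have hR2 : R ≤ 4*X*n := by
    obtain ⟨i1, -⟩ := (hmemS _).1 hxm
    obtain ⟨j1, -⟩ := (hmemS _).1 (hsub _ hx0)
    rw [hbox] at i1 j1
    have : |η xm| ≤ 4*X*n := by
      simp only [η, ζ]
      have hn1 : (1:ℤ) ≤ n := by exact_mod_cast hn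
      have a1 : (xm.1:ℤ) ≤ 2*X := by exact_mod_cast i1.1.le
      have a3 : (n:ℤ)*xm.2.2 ≤ n*(2*X) := by
        have : (xm.2.2:ℤ) ≤ 2*X := by exact_mod_cast i1.2.2.le
        gcongr
      have b1 : (x0.1:ℤ) ≤ 2*X := by exact_mod_cast j1.1.le
      have b3 : (n:ℤ)*x0.2.2 ≤ n*(2*X) := by
        have : (x0.2.2:ℤ) ≤ 2*X := by exact_mod_cast j1.2.2.le
        gcongr
      have c1 : (0:ℤ) ≤ n*xm.2.2 := by positivity
      have c2 : (0:ℤ) ≤ n*x0.2.2 := by positivity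
      have c3 : (0:ℤ) ≤ xm.1 := by positivity
      have c4 : (0:ℤ) ≤ x0.1 := by positivity
      have c5 : (X:ℤ) ≤ n * X := by
        have : (0:ℤ) ≤ X := by positivity
        nlinarith
      rw [abs_le]
      constructor <;> linarith
    rw [hR]
    exact_mod_cast this
  set B : ℝ := Real.log a - (r:ℝ)/q * Real.log 10 with hB
  have hq0 : (0:ℝ) < q := by exact_mod_cast hq1
  have hlamη : ∀ x ∈ Sig, lam x = lam x0 + B * η x := by
    intro x hx
    obtain ⟨-, i2⟩ := (hmemS _).1 hx
    obtain ⟨-, j2⟩ := (hmemS _).1 (hsub _ hx0)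
    have e : u x = u x0 := by rw [i2, j2]
    simp only [u] at e
    have e' : (r:ℝ)*x.1 - q*x.2.1 + ((q:ℝ)*d - r*n)*x.2.2 = r*x0.1 - q*x0.2.1 + ((q:ℝ)*d - r*n)*x0.2.2 := by
      exact_mod_cast e
    have e2 : ((x.2.1:ℝ) - d*x.2.2) - ((x0.2.1:ℝ) - d*x0.2.2) =
        (r:ℝ)/q * (((x.1:ℝ) - n*x.2.2) - (x0.1 - n*x0.2.2)) := by
      field_simp
      linarith
    simp only [lam, η, ζ, hB]
    push_cast
    linear_combination (-Real.log 10) * e2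
  have hμ : |lam x0| ≤ 12*X := hlam _ ((hmemS _).1 (hsub _ hx0)).1
  have hBR : |B| * R ≤ 2*(12*X) := by
    have e := hlamη xm hxm
    have e2 := hlam _ ((hmemS _).1 hxm).1
    rw [hR, ← abs_mul, show B * (η xm:ℝ) = lam xm - lam x0 by rw [e]; ring]
    refine (abs_sub _ _).trans ?_
    linarith
  obtain ⟨p, hp0, hpw, hpF⟩ := auxfun k L K T0 w h (by omega) hLp hKp a R (12*X) B (lam x0)
    (by linarith) h2.le hR1 hμ hBR hw (by exact_mod_cast hT)
  -- vanishing
  have hvan : ∀ x ∈ Sig, ∑ y, (p y : ℝ) * a^(y.2.2:ℕ) * (η x:ℝ)^(y.1:ℕ) * (V x)^(y.2.1:ℕ) = 0 := by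
    intro x hx
    obtain ⟨hxb, -⟩ := (hmemS _).1 hx
    obtain ⟨-, i2, i3⟩ := (hbox _ _).1 hxb
    by_contra hF0
    have hup := hpF (η x) (V x) (8*X/10^d) (hV0 x) (hηR x hx) hLE (by
      rw [hlogV x, hlamη x hx]
      have := hLamE x hxb
      rw [show lam x0 + B * (η x:ℝ) + x.2.2*Λ - lam x0 - B * (η x:ℝ) = x.2.2*Λ by ring]
      exact this)
    have hlo := arith_lower k hk a h1 h2 h3 b hb1 hb L K w p hpw (η x) R hR1 (hηR x hx)
      x.1 x.2.1 x.2.2 (2*X) i2.le i3.le _ rfl hF0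
    set F := |∑ y, (p y : ℝ) * a^(y.2.2:ℕ) * (η x:ℝ)^(y.1:ℕ) * (V x)^(y.2.1:ℕ)| with hF
    have hRK : R^K ≤ (4*X*n)^K := pow_le_pow_left₀ (by linarith) hR2 _
    have m1 : ((K*L*k) * 2^w * R^K * (90*(3*(k:ℝ)+1))^(L*(2*X)))^k ≤
        ((K*L*k) * 2^w * (4*X*n)^K * (90*(3*(k:ℝ)+1))^(L*(2*X)))^k := by
      apply pow_le_pow_left₀ (by positivity)
      gcongr
    have m2 : F ≤ 2 * (K*L*k) * 2^w * (2^k * (4*X*n)^K * Real.exp (3*L*(12*X))) *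
        ((T0+K)/2^h + (1/16:ℝ)^T0 + L*(8*X/10^d)) := by
      refine hup.trans ?_
      gcongr
    have m3 := mul_le_mul m2 m1 (by positivity) (by positivity)
    have hlo' : 1 ≤ F * ((K*L*k) * 2^w * R^K * (90*(3*(k:ℝ)+1))^(L*(2*X)))^k := hlo
    rw [mul_comm] at hnum
    linarith
  -- zero estimate
  let φ : ℕ × ℕ × ℕ → ℝ := fun x => (η x : ℝ)
  have hφ : Set.InjOn φ S2 := by
    intro x hx y hy hxy
    apply hinj x hx y hy
    have : η x = η y := Int.cast_injective (α := ℝ) hxy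
    simp only [η] at this
    omega
  have hcardS : (S2.image φ).card = S2.card := Finset.card_image_of_injOn hφ
  have hex : ∀ t : ℝ, ∃ x : ℕ × ℕ × ℕ, t ∈ S2.image φ → x ∈ S2 ∧ φ x = t := by
    intro t
    by_cases ht : t ∈ S2.image φ
    · obtain ⟨x, hx, hxt⟩ := Finset.mem_image.1 ht
      exact ⟨x, fun _ => ⟨hx, hxt⟩⟩
    · exact ⟨(0,0,0), fun h => absurd h ht⟩
  choose g hg using hex
  refine zero_step k hk a h1 h2 h3 L K p hp0 q r hq1 (S2.image φ) (by rw [hcardS]; exact hc) (fun t => V (g t))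
    (fun t _ => (hV0 _).ne') ?_
  intro t ht i hi
  obtain ⟨g1, g2⟩ := hg t ht
  obtain ⟨i1, i2⟩ := (hmem2 _).1 g1
  rw [hbox] at i1
  set x := g t with hx
  have hiq : i*q ≤ X := (Nat.mul_le_mul hi.le hqs).trans hLs
  have hir : i*r ≤ X := (Nat.mul_le_mul hi.le hrs).trans hLs
  have hx' : (x.1 + i*q, x.2.1 + i*r, x.2.2) ∈ Sig := by
    rw [hmemS, hbox]
    refine ⟨⟨?_, ?_, ?_⟩, ?_⟩
    · simp only; omega
    · simp only; omega
    · simp only; omega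
    · rw [← i2]
      simp only [u]
      push_cast
      ring
  have hv := hvan _ hx'
  have e1 : ((η (x.1 + i*q, x.2.1 + i*r, x.2.2) : ℤ):ℝ) = t + i*q := by
    rw [← g2]
    simp only [φ, η, ζ]
    push_cast
    ring
  have e2 : V (x.1 + i*q, x.2.1 + i*r, x.2.2) = V x * (a^q/10^r)^i := by
    simp only [V]
    rw [pow_add, pow_add, div_pow (a^q) (10^r) i, ← pow_mul, ← pow_mul, mul_comm q i, mul_comm r i]
    ring
  rw [e1, e2] at hv
  exact hv


theorem pow16 (m : ℕ) (hm : 157 ≤ m) : (90000*m^8)^2 ≤ 2^m := by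
  induction m, hm using Nat.le_induction with
  | base => norm_num
  | succ m hm ih =>
    have h1 : (m+1)^16 ≤ 2*m^16 := by
      have h2 : 157*(m+1) ≤ 158*m := by omega
      have h3 := Nat.pow_le_pow_left h2 16
      rw [mul_pow, mul_pow] at h3
      have h4 : (158:ℕ)^16 ≤ 2*157^16 := by norm_num
      have h5 : 157^16*(m+1)^16 ≤ 157^16*(2*m^16) := by
        calc
          _ ≤ 158^16*m^16 := h3
          _ ≤ 2*157^16*m^16 := Nat.mul_le_mul_right _ h4
          _ = _ := by ring
      exact Nat.le_of_mul_le_mul_left h5 (by norm_num)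
    calc
      _ = 90000^2*(m+1)^16 := by ring
      _ ≤ 90000^2*(2*m^16) := Nat.mul_le_mul_left _ h1
      _ = 2*(90000*m^8)^2 := by ring
      _ ≤ 2*2^m := Nat.mul_le_mul_left _ ih
      _ = _ := by ring

theorem pow8 (m : ℕ) (hm : 157 ≤ m) : (810*m)^8 ≤ 2^m := by
  refine le_trans ?_ (pow16 m hm)
  have h1 : (157:ℕ)^8 ≤ m^8 := Nat.pow_le_pow_left hm 8
  calc
    _ = 810^8*m^8 := by ring
    _ ≤ (90000^2*157^8)*m^8 := Nat.mul_le_mul_right _ (by norm_num)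
    _ ≤ (90000^2*m^8)*m^8 := by gcongr
    _ = _ := by ring

theorem n_cube (k n : ℕ) (hk : 450 < k) (hc : 2^k ≤ 4*(k+n/(k+1))^3) : 2^(k+21) ≤ n^3 := by
  set M := n/(k+1) with hM
  have hMn : M*(k+1) ≤ n := Nat.div_mul_le_self _ _
  have hkk : ∀ j, 450 < j → 32*j^3 < 2^j := by
    intro j hj
    induction j, hj using Nat.le_induction with
    | base =>
      calc
        _ < 2^32 := by norm_num
        _ ≤ _ := Nat.pow_le_pow_right (by norm_num) (by norm_num)
    | succ j hj ih =>
      have : (j+1)^3 ≤ 2*j^3 := by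
        have h2 : 451*(j+1) ≤ 452*j := by omega
        have h3 := Nat.pow_le_pow_left h2 3
        rw [mul_pow, mul_pow] at h3
        omega
      rw [pow_succ 2 j]
      omega
  have hlt : k < M := by
    by_contra hcon
    have h1 : k + M ≤ 2*k := by omega
    have h2 := Nat.pow_le_pow_left h1 3
    have h3 := hkk k hk
    rw [mul_pow] at h2
    omega
  have h1 : 2^k ≤ 32*M^3 := by
    have h2 : (k+M)^3 ≤ (2*M)^3 := Nat.pow_le_pow_left (by omega) 3
    rw [mul_pow] at h2
    omega
  have h4 : M*452 ≤ n := (Nat.mul_le_mul_left M (by omega)).trans hMn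
  have h5 := Nat.pow_le_pow_left h4 3
  rw [mul_pow] at h5
  calc
    2^(k+21) = 2^k*2^21 := pow_add _ _ _
    _ ≤ (32*M^3)*2^21 := Nat.mul_le_mul_right _ h1
    _ = M^3*(32*2^21) := by ring
    _ ≤ M^3*452^3 := Nat.mul_le_mul_left _ (by norm_num)
    _ ≤ n^3 := h5

theorem dirichlet (n d s : ℕ) (hn : 0 < n) (hdn : d ≤ n) (hs0 : 0 < s) (hs : n < (s+1)*(s+1)) :
    ∃ q r : ℕ, 1 ≤ q ∧ q ≤ s ∧ r ≤ s ∧ |(q:ℤ)*d - r*n| ≤ s := by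
  obtain ⟨j, q, hq0, hqs, hj⟩ := Real.exists_int_int_abs_mul_sub_le ((d:ℝ)/n) hs0
  have hnR : (0:ℝ) < n := by exact_mod_cast hn
  have hdR : (d:ℝ) ≤ n := by exact_mod_cast hdn
  have hs1 : (0:ℝ) < (s:ℝ)+1 := by positivity
  have hqR : (0:ℝ) < q := by exact_mod_cast hq0
  have hsR : (1:ℝ) ≤ s := by exact_mod_cast hs0
  have h1 : (1:ℝ)/(s+1) < 1 := by rw [div_lt_one hs1]; linarith
  have hdn1 : (d:ℝ)/n ≤ 1 := (div_le_one hnR).2 hdR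
  have hdn0 : 0 ≤ (d:ℝ)/n := by positivity
  have hj' := abs_le.1 hj
  have hj0 : 0 ≤ j := by
    have : (-1:ℝ) < j := by
      have : 0 ≤ (q:ℝ)*((d:ℝ)/n) := by positivity
      linarith
    have : (-1:ℤ) < j := by exact_mod_cast this
    omega
  have hjq : j ≤ q := by
    have : (j:ℝ) < q + 1 := by
      have : (q:ℝ)*((d:ℝ)/n) ≤ q := by nlinarith
      linarith
    have : j < q + 1 := by exact_mod_cast this
    omega
  have hfin : |q*d - j*n| ≤ s := by
    have h2 : |(q:ℝ)*d - j*n| < s+1 := by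
      have e : (q:ℝ)*d - j*n = (q*((d:ℝ)/n) - j)*n := by field_simp
      rw [e, abs_mul, abs_of_pos hnR]
      calc
        _ ≤ 1/((s:ℝ)+1)*n := by gcongr
        _ < 1/((s:ℝ)+1)*((s+1)*(s+1)) := by
            have : (n:ℝ) < (s+1)*(s+1) := by exact_mod_cast hs
            gcongr
        _ = s+1 := by field_simp
    have : |q*d - j*n| < s+1 := by exact_mod_cast h2
    omega
  lift q to ℕ using hq0.le
  lift j to ℕ using hj0
  refine ⟨q, j, by omega, by omega, by omega, hfin⟩


theorem numlem (m k n d s X P2 P3 P4 Q : ℕ) (hm : 157 ≤ m) (hk : 450 < k) (hk3 : k+19 ≤ 3*m)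
    (hnlt : n < 2^(m+1)) (hs : 90000*m^8 ≤ s) (hX : X = 512*m^4*s) (hP2 : P2 = m^2*X)
    (hP3 : P3 = m*P2) (hP4 : P4 = m*P3) (hQ : Q = k*P3) (hXn : 4*X ≤ n) (h3n : 3*n < 10*d+13)
    (hns : s*s ≤ n) :
    ((20*m^2:ℕ):ℝ)*(8*X/10^d) ≤ 1 ∧
    (((4*P2:ℕ)*(20*m^2:ℕ)*(k:ℝ))*2^(32*P3)*(4*X*n)^(4*P2)*(90*(3*(k:ℝ)+1))^((20*m^2)*(2*X)))^k *
      (2*((4*P2:ℕ)*(20*m^2:ℕ)*(k:ℝ))*2^(32*P3)*(2^k*(4*X*n)^(4*P2)*Real.exp (3*(20*m^2:ℕ)*(12*X))) *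
       (((36*P4:ℕ)+(4*P2:ℕ))/2^(64*Q) + (1/16:ℝ)^(36*P4) + (20*m^2:ℕ)*(8*X/10^d))) < 1 := by
  have hm8 : m ≤ m^8 := Nat.le_self_pow (by norm_num) m
  have hm4 : 1 ≤ m^4 := Nat.one_le_pow _ _ (by omega)
  have hsm : m ≤ s := by omega
  have hs1 : 1 ≤ s := by omega
  have hXs : s ≤ X := by
    rw [hX]
    calc s = 1*s := by ring
      _ ≤ 512*m^4*s := Nat.mul_le_mul_right _ (by omega)
  have hP2a : 157*(157*X) ≤ P2 := by
    rw [hP2, pow_two, mul_assoc]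
    gcongr
  have hP3a : 157*P2 ≤ P3 := by rw [hP3]; gcongr
  have hP4a : 157*P3 ≤ P4 := by rw [hP4]; gcongr
  have hQa : 451*P3 ≤ Q := by rw [hQ]; gcongr; omega
  have hQb : Q + 19*P3 ≤ 3*P4 := by
    rw [hQ, hP4]
    calc k*P3+19*P3 = (k+19)*P3 := by ring
      _ ≤ 3*m*P3 := Nat.mul_le_mul_right _ hk3
      _ = _ := by ring
  have hX1 : 90000*157 ≤ X := by omega
  have hP4X : P4 = m^4*X := by rw [hP4, hP3, hP2]; ring
  have hXX : X*X ≤ 2^(2*X) := by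
    rw [mul_comm 2 X, pow_mul, pow_two]
    exact Nat.mul_le_mul Nat.lt_two_pow_self.le Nat.lt_two_pow_self.le
  have hN : 4*P2*(20*m^2)*k ≤ 2^(2*X) := by
    refine le_trans ?_ hXX
    calc 4*P2*(20*m^2)*k = (80*m^4*k)*X := by rw [hP2]; ring
      _ ≤ (80*m^4*(3*s))*X := by gcongr; omega
      _ = (240*m^4*s)*X := by ring
      _ ≤ (512*m^4*s)*X := by gcongr; norm_num
      _ = X*X := by rw [← hX]
  have hTK : 36*P4+4*P2 ≤ 2^(2*X) := by
    refine le_trans ?_ hXX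
    calc 36*P4+4*P2 ≤ 37*P4 := by omega
      _ = (37*m^4*1)*X := by rw [hP4X]; ring
      _ ≤ (512*m^4*s)*X := by gcongr; norm_num
      _ = X*X := by rw [← hX]
  have hLX : 20*m^2*(8*X) ≤ 2^(2*X) := by
    refine le_trans ?_ hTK
    calc 20*m^2*(8*X) = 160*P2 := by rw [hP2]; ring
      _ ≤ _ := by omega
  have hf2 : (4*X*n)^(4*P2) ≤ 2^(8*P3+8*P2) := by
    have h1 : 4*X*n ≤ 2^(m+1)*2^(m+1) := Nat.mul_le_mul (hXn.trans hnlt.le) hnlt.le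
    calc (4*X*n)^(4*P2) ≤ (2^(m+1)*2^(m+1))^(4*P2) := Nat.pow_le_pow_left h1 _
      _ = 2^(8*P3+8*P2) := by
        rw [← pow_add, ← pow_mul]; congr 1; rw [hP3]; ring
  have hf3 : (90*(3*k+1))^((20*m^2)*(2*X)) ≤ 2^(5*P3) := by
    calc (90*(3*k+1))^((20*m^2)*(2*X)) ≤ (810*m)^((20*m^2)*(2*X)) := Nat.pow_le_pow_left (by omega) _
      _ = ((810*m)^8)^(5*P2) := by rw [← pow_mul]; congr 1; rw [hP2]; ring
      _ ≤ (2^m)^(5*P2) := Nat.pow_le_pow_left (pow8 m hm) _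
      _ = 2^(5*P3) := by rw [← pow_mul]; congr 1; rw [hP3]; ring
  have hf4 : Real.exp (3*(20*m^2:ℕ)*(12*X)) ≤ (2:ℝ)^(1080*P2) := by
    have e2 : Real.exp 2 ≤ 8 := by
      have := Real.exp_one_lt_d9
      have h2 : Real.exp 2 = Real.exp 1*Real.exp 1 := by rw [← Real.exp_add]; norm_num
      have h0 := Real.exp_pos 1
      rw [h2]; nlinarith
    have e1 : (3*(20*m^2:ℕ)*(12*X) : ℝ) = (360*P2 : ℕ)*2 := by rw [hP2]; push_cast; ring
    rw [e1, Real.exp_nat_mul]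
    calc (Real.exp 2)^(360*P2) ≤ 8^(360*P2) := by gcongr
      _ = ((2:ℝ)^3)^(360*P2) := by norm_num
      _ = _ := by rw [← pow_mul]; congr 1; ring
  have hd3 : 48*Q+48*P3+2+2*X ≤ 3*d := by
    have h1 : 144*P4 ≤ 73728*(m^8*s) := by rw [hP4X, hX]; apply le_of_eq; ring
    have h2 : 90000*(m^8*s) ≤ n := by
      calc 90000*(m^8*s) = 90000*m^8*s := by ring
        _ ≤ s*s := Nat.mul_le_mul_right _ hs
        _ ≤ n := hns
    omega
  have hN' : ((4*P2:ℕ)*(20*m^2:ℕ)*(k:ℝ)) ≤ 2^(2*X) := by exact_mod_cast hN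
  have hTK' : (((36*P4:ℕ):ℝ)+(4*P2:ℕ)) ≤ 2^(2*X) := by exact_mod_cast hTK
  have hLX' : ((20*m^2:ℕ):ℝ)*(8*X) ≤ 2^(2*X) := by exact_mod_cast hLX
  have hf2' : (4*X*n:ℝ)^(4*P2) ≤ 2^(8*P3+8*P2) := by exact_mod_cast hf2
  have hf3' : (90*(3*(k:ℝ)+1))^((20*m^2)*(2*X)) ≤ 2^(5*P3) := by exact_mod_cast hf3
  have h10 : (2:ℝ)^(3*d) ≤ 10^d := by
    rw [pow_mul]; gcongr; norm_num
  have two_le : ∀ i j : ℕ, i ≤ j → (2:ℝ)^i ≤ 2^j := fun i j h => pow_le_pow_right₀ (by norm_num) h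
  have hkX : k ≤ 2*X := by omega
  set E : ℝ := 1/2^(48*Q+48*P3+2) with hE
  have he3 : ((20*m^2:ℕ):ℝ)*(8*X/10^d) ≤ E := by
    rw [hE, ← mul_div_assoc, div_le_div_iff₀ (by positivity) (by positivity), one_mul]
    calc ((20*m^2:ℕ):ℝ)*(8*X) * 2^(48*Q+48*P3+2) ≤ 2^(2*X)*2^(48*Q+48*P3+2) := by gcongr
      _ = 2^(2*X+(48*Q+48*P3+2)) := (pow_add _ _ _).symm
      _ ≤ 2^(3*d) := two_le _ _ (by omega)
      _ ≤ _ := h10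
  have he1 : (((36*P4:ℕ):ℝ)+(4*P2:ℕ))/2^(64*Q) ≤ E := by
    rw [hE, div_le_div_iff₀ (by positivity) (by positivity), one_mul]
    calc _ ≤ (2:ℝ)^(2*X)*2^(48*Q+48*P3+2) := by gcongr
      _ = 2^(2*X+(48*Q+48*P3+2)) := (pow_add _ _ _).symm
      _ ≤ 2^(64*Q) := two_le _ _ (by omega)
  have he2 : (1/16:ℝ)^(36*P4) ≤ E := by
    have : (1/16:ℝ)^(36*P4) = 1/2^(144*P4) := by
      rw [one_div_pow]; congr 1
      rw [show (16:ℝ) = 2^4 by norm_num, ← pow_mul]; congr 1; ring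
    rw [this, hE]
    exact one_div_le_one_div_of_le (by positivity) (two_le _ _ (by omega))
  have hE1 : E ≤ 1 := by
    rw [hE, div_le_one (by positivity)]
    exact one_le_pow₀ (by norm_num)
  refine ⟨he3.trans hE1, ?_⟩
  set N : ℝ := ((4*P2:ℕ)*(20*m^2:ℕ)*(k:ℝ)) with hNd
  have hN0 : 0 ≤ N := by positivity
  have hA : N*2^(32*P3)*(4*X*n)^(4*P2)*(90*(3*(k:ℝ)+1))^((20*m^2)*(2*X)) ≤ 2^(48*P3) := by
    calc _ ≤ (2:ℝ)^(2*X)*2^(32*P3)*2^(8*P3+8*P2)*2^(5*P3) := by gcongr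
      _ = 2^(2*X+32*P3+(8*P3+8*P2)+5*P3) := by rw [← pow_add, ← pow_add, ← pow_add]
      _ ≤ _ := two_le _ _ (by omega)
  have hB : 2*N*2^(32*P3)*(2^k*(4*X*n)^(4*P2)*Real.exp (3*(20*m^2:ℕ)*(12*X))) ≤ 2^(48*P3) := by
    calc _ ≤ 2*(2:ℝ)^(2*X)*2^(32*P3)*(2^k*2^(8*P3+8*P2)*2^(1080*P2)) := by gcongr
      _ = 2^(1+2*X+32*P3+(k+(8*P3+8*P2)+1080*P2)) := by
        simp only [pow_add, pow_one]
      _ ≤ _ := two_le _ _ (by omega)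
  calc _ ≤ ((2:ℝ)^(48*P3))^k*(2^(48*P3)*(E+E+E)) := by gcongr
    _ = 2^(48*Q)*(2^(48*P3)*(E+E+E)) := by
      rw [← pow_mul]; congr 2; rw [hQ]; ring
    _ = 3/4 := by
      rw [hE, pow_add, pow_add]
      field_simp
      norm_num
    _ < 1 := by norm_num


theorem d_le_n (k n d b : ℕ) (hk : 450 < k) (hn : 5 < n) (hb1 : 1 ≤ b)
    (hL : lucasL k n = (b:ℤ) * 10^d) : d ≤ n := by
  obtain ⟨a, h1, h2, h3⟩ := exists_alpha k (by omega)
  have ha := approx_L k (by omega) a h1 h2 h3 n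
  have hg := gG_bounds k (by omega) a h1 h2
  have hkk : (1:ℝ)/((k:ℝ)+1) ≤ 1 := by
    rw [div_le_one (by positivity)]
    have : (0:ℝ) ≤ k := by positivity
    linarith
  have ha1 : 1 ≤ a := by linarith
  have hg3 : gG k a ≤ 3 := by nlinarith [hg.1, hg.2]
  have han : a^n ≤ 2^n := pow_le_pow_left₀ (by linarith) h2.le n
  have han0 : 0 ≤ a^n := by positivity
  have hgn : gG k a*a^n ≤ 3*2^n := by nlinarith [hg.1, hg.2]
  rw [hL] at ha
  push_cast at ha
  have hb : (1:ℝ) ≤ b := by exact_mod_cast hb1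
  have h10 : (0:ℝ) < 10^d := by positivity
  have h5 : (10:ℝ)^d ≤ 5*2^n := by
    have := (abs_le.1 ha).2
    have h2n : (1:ℝ) ≤ 2^n := one_le_pow₀ (by norm_num)
    nlinarith
  by_contra hcon
  have h6 : (10:ℝ)^(n+1) ≤ 10^d := pow_le_pow_right₀ (by norm_num) (by omega)
  have h7 : (2:ℝ)^n ≤ 10^n := pow_le_pow_left₀ (by norm_num) (by norm_num) n
  have h8 : (0:ℝ) < 10^n := by positivity
  rw [pow_succ] at h6
  linarith

set_option maxHeartbeats 1000000 in
theorem partIII (k n d b : ℕ) (hk : 450 < k) (hn : 5 < n) (hb1 : 1 ≤ b) (hb : b ≤ 9) (hd2 : 2 ≤ d)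
    (hL : lucasL k n = (b:ℤ) * 10^d) (hc : 2^k ≤ 4*(k+n/(k+1))^3) : False := by
  have hdn := d_le_n k n d b hk hn hb1 hL
  have h3n : 3*n < 10*d+13 := size_lo k n d (b:ℤ) (by omega) (by omega) (by exact_mod_cast hb) hL
  obtain ⟨m, hmd⟩ : ∃ m, m = Nat.log 2 n := ⟨_, rfl⟩
  have hm1 : 2^m ≤ n := by rw [hmd]; exact Nat.pow_log_le_self 2 (by omega)
  have hnlt : n < 2^(m+1) := by rw [hmd]; exact Nat.lt_pow_succ_log_self (by norm_num) n
  have hk3 : k+19 ≤ 3*m := by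
    have h1 := n_cube k n hk hc
    have h2 : n^3 < (2^(m+1))^3 := Nat.pow_lt_pow_left hnlt (by norm_num)
    rw [← pow_mul] at h2
    have h3 := (Nat.pow_lt_pow_iff_right (a := 2) (by norm_num)).1 (h1.trans_lt h2)
    omega
  have hm : 157 ≤ m := by omega
  obtain ⟨s, hsd⟩ : ∃ s, s = Nat.sqrt n := ⟨_, rfl⟩
  have hns : s*s ≤ n := by rw [hsd]; exact Nat.sqrt_le n
  have hsn : n < (s+1)*(s+1) := by rw [hsd]; exact Nat.lt_succ_sqrt n
  have hs : 90000*m^8 ≤ s := by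
    by_contra hcon
    have h1 : s+1 ≤ 90000*m^8 := by omega
    have h2 := Nat.mul_le_mul h1 h1
    have h3 := pow16 m hm
    rw [pow_two] at h3
    omega
  have hm8 : 1 ≤ m^8 := Nat.one_le_pow _ _ (by omega)
  have hm4 : 1 ≤ m^4 := Nat.one_le_pow _ _ (by omega)
  have hm84 : m^4 ≤ m^8 := Nat.pow_le_pow_right (by omega) (by norm_num)
  have hs1 : 1 ≤ s := by omega
  obtain ⟨q, r, hq1, hqs, hrs, hqr⟩ := dirichlet n d s (by omega) hdn hs1 hsn
  obtain ⟨a, h1, h2, h3⟩ := exists_alpha k (by omega)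
  obtain ⟨X, hX⟩ : ∃ X, X = 512*m^4*s := ⟨_, rfl⟩
  obtain ⟨P2, hP2⟩ : ∃ P2, P2 = m^2*X := ⟨_, rfl⟩
  obtain ⟨P3, hP3⟩ : ∃ P3, P3 = m*P2 := ⟨_, rfl⟩
  obtain ⟨P4, hP4⟩ : ∃ P4, P4 = m*P3 := ⟨_, rfl⟩
  obtain ⟨Q, hQ⟩ : ∃ Q, Q = k*P3 := ⟨_, rfl⟩
  have hX0 : 0 < X := by rw [hX]; positivity
  have hP20 : 0 < P2 := by rw [hP2]; positivity
  have hP30 : 0 < P3 := by rw [hP3]; positivity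
  have hP40 : 0 < P4 := by rw [hP4]; positivity
  have hXn : 4*X ≤ n := by
    calc 4*X = (2048*m^4)*s := by rw [hX]; ring
      _ ≤ s*s := Nat.mul_le_mul_right _ (by omega)
      _ ≤ n := hns
  obtain ⟨hLE, hnum⟩ := numlem m k n d s X P2 P3 P4 Q hm hk hk3 hnlt hs hX hP2 hP3 hP4 hQ hXn h3n hns
  have hP4X : P4 = m^4*X := by rw [hP4, hP3, hP2]; ring
  have hP42 : P4 = m^2*P2 := by rw [hP4, hP3]; ring
  have hmm : 157*157 ≤ m^2 := by rw [pow_two]; exact Nat.mul_le_mul hm hm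
  clear hc hmd hsd hm1 hnlt hns hsn h3n
  refine core k n d b hk (by omega) a h1 h2 h3 hb1 hb hd2 hL (20*m^2) (4*P2) (36*P4) (32*P3) (64*Q)
    X s q r (by positivity) (by positivity) hq1 hqs hrs hqr ?_ (by omega) ?_ ?_ ?_ hLE hnum
  · rw [hX]
    apply Nat.mul_le_mul_right
    have : m^2 ≤ m^4 := Nat.pow_le_pow_right (by omega) (by norm_num)
    omega
  · have h5 : 4*s*X+1 ≤ 5*s*X := by
      have h0 : 0 < s*X := by positivity
      rw [mul_assoc, mul_assoc]
      omega
    calc (4*s*X+1)*(20*m^2*(4*P2)) ≤ (5*s*X)*(20*m^2*(4*P2)) := Nat.mul_le_mul_right _ h5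
      _ = 400*(m^4*s)*X^2 := by rw [hP2]; ring
      _ < 512*(m^4*s)*X^2 := by
        have h0 : 0 < m^4*s := by positivity
        exact Nat.mul_lt_mul_of_pos_right (by omega) (by positivity)
      _ = X*X^2 := by rw [← mul_assoc, ← hX]
      _ = X^3 := by ring
  · have h6 : 4*P2*(20*m^2) = 80*P4 := by rw [hP42]; ring
    have h7 : 157*157*P2 ≤ P4 := by rw [hP42]; exact Nat.mul_le_mul_right _ hmm
    have hQ0 : 0 < Q := by rw [hQ]; positivity
    calc 64*Q*(36*P4+4*P2) < 64*Q*(40*P4) := Nat.mul_lt_mul_of_pos_left (by omega) (by omega)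
      _ = 32*P3*(80*P4*k) := by rw [hQ]; ring
      _ = _ := by rw [h6]
  · calc 96*(20*m^2)*(12*X) = 23040*P2 := by rw [hP2]; ring
      _ ≤ 157*157*P2 := Nat.mul_le_mul_right _ (by norm_num)
      _ ≤ m^2*P2 := Nat.mul_le_mul_right _ hmm
      _ = P4 := hP42.symm
      _ ≤ 36*P4 := by omega

theorem main_thm (k n : ℕ) (hk : 450 < k) (hn : 5 < n) :
    ¬ ∃ (b : ℤ) (d : ℕ), 1 ≤ b ∧ b ≤ 9 ∧ 2 ≤ d ∧ lucasL k n = b * 10 ^ d := by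
  rintro ⟨b, d, hb1, hb, hd, hL⟩
  lift b to ℕ using (by omega)
  by_cases hc : 4*(k+n/(k+1))^3 < 2^k
  · exact partII k n d b hk hn (by omega) (by omega) hd hL hc
  · exact partIII k n d b hk hn (by omega) (by omega) hd hL (not_lt.1 hc)

/-- For `k > 450` and `n > 5`, the number `L_n^{(k)}` is never of the form `b·10^d`
with `1 ≤ b ≤ 9` and `d ≥ 2`. -/
theorem no_b_pow_ten_k_gt_450 (k n : ℕ) (hk : 450 < k) (hn : 5 < n) :
    ¬ ∃ (b : ℤ) (d : ℕ), 1 ≤ b ∧ b ≤ 9 ∧ 2 ≤ d ∧ lucasL k n = b * 10 ^ d := by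
  exact main_thm k n hk hn
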